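/- arXiv:math/9910160 — 2 statements merged into one kernel-verified Lean document; each statement's English description precedes it below -/
import Mathlib

section
/- For every integer m ≥ 2 there is a constant C = C(m) ≥ 1 such that for every n ≥ 1: (i) every continuous f : B_{ℓ₁ⁿ} → ℝ with ω_m(f;B_{ℓ₁ⁿ}) ≤ 1 admits a polynomial φ of total degree at most m−1 with sup_{x∈B_{ℓ₁ⁿ}} |f(x) − φ(x)| ≤ C log(n+1); and (ii) there exists a continuous f : B_{ℓ₁ⁿ} → ℝ with ω_m(f;B_{ℓ₁ⁿ}) ≤ 1 such that every polynomial φ of total degree at most m−1 satisfies sup_{x∈B_{ℓ₁ⁿ}} |f(x) − φ(x)| ≥ C^{−1} log(n+1). (Corollary 5.7: C^{−1} log(n+1) ≤ w_m(ℓ₁ⁿ) ≤ C log(n+1).) -/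
open Finset

/-- `diffBound m K f c` says that the `m`-th modulus of smoothness of `f` on `K` is at most `c`,
i.e. `|Δ_h^m f(x)| ≤ c` whenever `x, x+h, …, x+mh ∈ K`. -/
def diffBound {E : Type*} [AddCommGroup E] [Module ℝ E] (m : ℕ) (K : Set E) (f : E → ℝ)
    (c : ℝ) : Prop :=
  ∀ x h : E, (∀ j : ℕ, j ≤ m → x + (j : ℝ) • h ∈ K) →
    |∑ j ∈ Finset.range (m + 1), (-1 : ℝ) ^ (m - j) * (m.choose j : ℝ) * f (x + (j : ℝ) • h)| ≤ c

/-- The closed unit ball of `ℓ₁ⁿ`. -/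
def l1Ball (n : ℕ) : Set (Fin n → ℝ) := {x | ∑ i, |x i| ≤ 1}

/-!
*Upper bound.* Fix a small `τ` depending on `m` only. Subtracting the Newton interpolation
polynomial of `f` on the lattice points `τ a`, `a ∈ ℕⁿ`, `∑ aᵢ ≤ m 2 ^ m`, makes `f` bounded there,
because Djoković's identity writes mixed differences as combinations of ordinary ones. A point `x`
of a small ball is the mean of `2 ^ J` vectors, with `J` of order `log n`, all of them `0` or
`±2 ^ m τ eᵢ` except for at most `n` remainders. Let `a j` be the average of `f` over the means of
random `2 ^ j`-subsets of these vectors. On `m + 1` consecutive indices, `a j` is within `O(1)` of a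
polynomial of degree `< m` in `2 ^ (-j)`, so the `q`-difference `∏ t < m, (T - 2 ^ (-t))` of `a` is
`O(1)`. The factors with `t ≥ 1` are contractive and are inverted at a constant cost, while the
factor `T - 1` makes `f x = a J` grow by `O(1)` at each step; hence `f x = O(J)`. The remainders
contribute only `O(J n / 2 ^ J)` times `sup |f|`, which is absorbed on the left once extrapolation
along rays has passed from the small ball to the unit ball.

*Lower bound.* The entropy `-∑ xᵢ log |xᵢ|` has bounded `m`-th differences and takes the value
`log k` at the uniform distribution on any `k` coordinates. The average of a polynomial of degree
`< m` over these distributions is a polynomial of degree `< m` in `1 / k`. Along `k = N ^ l`,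
`l ≤ m`, the `q`-difference with `q = 1 / N` annihilates the latter but sends `l log N` to a fixed
multiple of `log N`, where `N` can be taken of order `n ^ (1 / m)`.
-/

open scoped fwdDiff BigOperators

section Differences

variable {E : Type*} [AddCommGroup E] [Module ℝ E] {m : ℕ} {K : Set E} {f : E → ℝ} {ω : ℝ}

lemma fwdDiff_iter_eq_sum (m : ℕ) (f : E → ℝ) (h x : E) :
    Δ_[h] ^[m] f x =
      ∑ j ∈ range (m + 1), (-1 : ℝ) ^ (m - j) * (m.choose j : ℝ) * f (x + (j : ℝ) • h) := by
  simp [fwdDiff_iter_eq_sum_shift, Nat.cast_smul_eq_nsmul]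

lemma abs_sum_neg_one_pow_mul_choose_le {s : Finset ℕ} (hs : s ⊆ range (m + 1)) {a : ℕ → ℝ}
    {B : ℝ} (hB : 0 ≤ B) (ha : ∀ j ∈ s, |a j| ≤ B) :
    |∑ j ∈ s, (-1 : ℝ) ^ (m - j) * (m.choose j : ℝ) * a j| ≤ 2 ^ m * B :=
  calc |∑ j ∈ s, (-1 : ℝ) ^ (m - j) * (m.choose j : ℝ) * a j|
    _ ≤ ∑ j ∈ s, |(-1 : ℝ) ^ (m - j) * (m.choose j : ℝ) * a j| := abs_sum_le_sum_abs _ _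
    _ ≤ ∑ j ∈ s, (m.choose j : ℝ) * B := sum_le_sum fun j hj => by
        rw [abs_mul, abs_mul, abs_pow, abs_neg, abs_one, one_pow, one_mul, Nat.abs_cast]
        exact mul_le_mul_of_nonneg_left (ha j hj) (Nat.cast_nonneg _)
    _ ≤ ∑ j ∈ range (m + 1), (m.choose j : ℝ) * B :=
        sum_le_sum_of_subset_of_nonneg hs fun _ _ _ => by positivity
    _ = 2 ^ m * B := by
        rw [← sum_mul, ← Nat.cast_sum, Nat.sum_range_choose, Nat.cast_pow, Nat.cast_ofNat]

lemma fwdDiff_iter_eval_eq_zero {σ : Type*} {P : MvPolynomial σ ℝ} (hP : P.totalDegree < m)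
    (h x : σ → ℝ) : Δ_[h] ^[m] (fun y => MvPolynomial.eval y P) x = 0 := by
  let line : σ → Polynomial ℝ := fun i => .X * .C (h i) + .C (x i)
  have hline : ∀ t : ℝ, (MvPolynomial.aeval line P).eval t = MvPolynomial.eval (x + t • h) P := by
    intro t
    rw [← Polynomial.coe_evalRingHom, MvPolynomial.aeval_def, MvPolynomial.hom_eval₂,
      MvPolynomial.eval, MvPolynomial.coe_eval₂Hom]
    congr 1
    · ext; simp
    · ext i; simp [line]; ring
  have hdeg : (MvPolynomial.aeval line P).natDegree < m := by
    refine lt_of_le_of_lt ?_ hP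
    simpa using MvPolynomial.aeval_natDegree_le P le_rfl line (n := 1)
      fun i => by simp only [line]; compute_degree
  have hzero := congrFun (Polynomial.fwdDiff_iter_eq_zero_of_degree_lt hdeg) 0
  rw [fwdDiff_iter_eq_sum] at hzero ⊢
  simpa [hline] using hzero

namespace diffBound

lemma nonneg (hf : diffBound m K f ω) {x : E} (hx : x ∈ K) : 0 ≤ ω :=
  (abs_nonneg _).trans (hf x 0 fun j _ => by simpa using hx)

lemma sub_eval {σ : Type*} {K : Set (σ → ℝ)} {f : (σ → ℝ) → ℝ} (hf : diffBound m K f ω)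
    {P : MvPolynomial σ ℝ} (hP : P.totalDegree < m) :
    diffBound m K (fun x => f x - MvPolynomial.eval x P) ω := by
  intro x h hx
  have hzero := fwdDiff_iter_eval_eq_zero hP h x
  rw [fwdDiff_iter_eq_sum] at hzero
  simpa only [mul_sub, sum_sub_distrib, hzero, sub_zero] using hf x h hx

/-- Isolating the term `j = 0` in the difference with step `h`. -/
lemma abs_le_add (hf : diffBound m K f ω) {x h : E} (hx : ∀ j ≤ m, x + (j : ℝ) • h ∈ K) {B : ℝ}
    (hB : 0 ≤ B) (hfB : ∀ j ∈ Icc 1 m, |f (x + (j : ℝ) • h)| ≤ B) : |f x| ≤ ω + 2 ^ m * B := by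
  have hsub : (range (m + 1)).erase 0 ⊆ range (m + 1) := erase_subset _ _
  have htail := abs_sum_neg_one_pow_mul_choose_le hsub hB (a := fun j => f (x + (j : ℝ) • h))
    fun j hj => hfB j (by simp only [mem_erase, mem_range, mem_Icc] at hj ⊢; omega)
  have htotal := hf x h hx
  rw [← add_sum_erase _ _ (mem_range.2 m.succ_pos)] at htotal
  have hhead : |(-1 : ℝ) ^ (m - 0) * (m.choose 0 : ℝ) * f (x + ((0 : ℕ) : ℝ) • h)| = |f x| := by
    simp [abs_mul]
  rw [← hhead]
  simpa only [add_sub_cancel_right] using (abs_sub _ _).trans (add_le_add htotal htail)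

end diffBound

end Differences

section Djokovic

lemma sum_neg_one_pow_card_mul_eq_zero {ι : Type*} [Fintype ι] [DecidableEq ι] (i : ι)
    {g : Finset ι → ℝ} (hg : ∀ S, i ∉ S → g (insert i S) = g S) :
    ∑ S : Finset ι, (-1 : ℝ) ^ #S * g S = 0 := by
  rw [← powerset_univ, ← insert_erase (mem_univ i), sum_powerset_insert (notMem_erase _ _),
    ← sum_add_distrib]
  refine sum_eq_zero fun S hS => ?_
  have hi : i ∉ S := fun h => notMem_erase i univ (mem_powerset.1 hS h)
  rw [hg S hi, card_insert_of_notMem hi, pow_succ]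
  ring

variable {E : Type*} [AddCommGroup E] [Module ℝ E] {m : ℕ} {K : Set E} {f : E → ℝ} {ω : ℝ}

/-- Djoković's identity: in the alternating sum over `S` of the `m`-th differences of `f` at
`x + ∑ i ∈ S, h i` with step `-∑ i ∈ S, (i + 1)⁻¹ • h i`, the `j`-th terms with `j ≥ 1` do not
depend on whether `j - 1 ∈ S` and cancel in pairs. -/
lemma sum_neg_one_pow_card_mul_sum_choose (f : E → ℝ) (x : E) (h : Fin m → E) :
    ∑ S : Finset (Fin m), (-1 : ℝ) ^ #S * ∑ j ∈ range (m + 1), (-1 : ℝ) ^ (m - j) *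
        (m.choose j : ℝ) * f (x + ∑ i ∈ S, (1 - (j : ℝ) / ((i : ℕ) + 1)) • h i) =
      (-1) ^ m * ∑ S : Finset (Fin m), (-1 : ℝ) ^ #S * f (x + ∑ i ∈ S, h i) := by
  simp_rw [mul_sum]
  rw [sum_comm, sum_range_succ', sum_eq_zero, zero_add]
  · refine sum_congr rfl fun S _ => ?_
    simp only [tsub_zero, Nat.choose_zero_right, Nat.cast_one, mul_one, Nat.cast_zero, zero_div,
      one_smul]
    ring
  · intro j hj
    let i₀ : Fin m := ⟨j, mem_range.1 hj⟩
    have hi₀ : (1 - ((j + 1 : ℕ) : ℝ) / ((i₀ : ℕ) + 1)) = 0 := by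
      simp only [i₀]
      push_cast
      rw [div_self (by positivity), sub_self]
    refine sum_neg_one_pow_card_mul_eq_zero i₀ fun S hS => ?_
    rw [sum_insert hS, hi₀, zero_smul, zero_add]

lemma diffBound.abs_sum_powerset_le (hf : diffBound m K f ω) (x : E) (h : Fin m → E)
    (hx : ∀ c : Fin m → ℝ, (∀ i, |c i| ≤ m) → x + ∑ i, c i • h i ∈ K) :
    |∑ S : Finset (Fin m), (-1 : ℝ) ^ #S * f (x + ∑ i ∈ S, h i)| ≤ 2 ^ m * ω := by
  have hdiff : ∀ S : Finset (Fin m), |∑ j ∈ range (m + 1), (-1 : ℝ) ^ (m - j) *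
      (m.choose j : ℝ) * f (x + ∑ i ∈ S, (1 - (j : ℝ) / ((i : ℕ) + 1)) • h i)| ≤ ω := by
    intro S
    have hpt : ∀ j : ℕ, x + ∑ i ∈ S, h i + (j : ℝ) • (-∑ i ∈ S, ((i : ℕ) + 1 : ℝ)⁻¹ • h i) =
        x + ∑ i ∈ S, (1 - (j : ℝ) / ((i : ℕ) + 1)) • h i := by
      intro j
      simp only [sub_smul, one_smul, sum_sub_distrib, smul_neg, smul_sum, smul_smul,
        div_eq_mul_inv]
      abel
    have hS := hf (x + ∑ i ∈ S, h i) (-∑ i ∈ S, ((i : ℕ) + 1 : ℝ)⁻¹ • h i)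
    simp_rw [hpt] at hS
    refine hS fun j hj => ?_
    have hmem := hx (fun i => if i ∈ S then 1 - (j : ℝ) / ((i : ℕ) + 1) else 0) fun i => ?_
    · simpa only [ite_smul, zero_smul, sum_ite_mem, univ_inter] using hmem
    · have hm : (1 : ℝ) ≤ m := by exact_mod_cast i.pos
      have hjm : (j : ℝ) ≤ m := by exact_mod_cast hj
      have hnonneg : 0 ≤ (j : ℝ) / ((i : ℕ) + 1) := by positivity
      have hle : (j : ℝ) / ((i : ℕ) + 1) ≤ j := div_le_self (by positivity) (by simp)
      split_ifs <;> rw [abs_le] <;> constructor <;> linarith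
  have habs := congrArg abs (sum_neg_one_pow_card_mul_sum_choose f x h)
  rw [abs_mul, abs_pow, abs_neg, abs_one, one_pow, one_mul] at habs
  rw [← habs]
  calc _ ≤ ∑ _S : Finset (Fin m), ω := (abs_sum_le_sum_abs _ _).trans <|
        sum_le_sum fun S _ => by simpa [abs_mul] using hdiff S
    _ = 2 ^ m * ω := by simp

end Djokovic

section Newton

lemma sum_range_choose_mul_pow {R : Type*} [CommSemiring R] {a L : ℕ} (ha : a ≤ L) (x : R) :
    ∑ k ∈ range (L + 1), (a.choose k : R) * x ^ k = (x + 1) ^ a := by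
  rw [add_pow, ← sum_subset (range_mono (Nat.succ_le_succ ha))]
  · exact sum_congr rfl fun k _ => by rw [one_pow, mul_one, mul_comm]
  · intro k _ hk
    rw [Nat.choose_eq_zero_of_lt (by simpa using hk), Nat.cast_zero, zero_mul]

/-- The binomial coefficient `X.choose k` as a real polynomial in `X`. -/
noncomputable def choosePoly (k : ℕ) : Polynomial ℝ :=
  .C (k.factorial : ℝ)⁻¹ * descPochhammer ℝ k

lemma natDegree_choosePoly_le (k : ℕ) : (choosePoly k).natDegree ≤ k :=
  (Polynomial.natDegree_C_mul_le _ _).trans (descPochhammer_natDegree ℝ k).le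

lemma eval_choosePoly (k a : ℕ) : (choosePoly k).eval (a : ℝ) = a.choose k := by
  rw [choosePoly, Polynomial.eval_C_mul, Nat.cast_choose_eq_descPochhammer_div, inv_mul_eq_div]

lemma totalDegree_toMvPolynomial_le {σ R : Type*} [CommSemiring R] (i : σ) (q : Polynomial R) :
    (q.toMvPolynomial i).totalDegree ≤ q.natDegree := by
  rw [Polynomial.toMvPolynomial, Polynomial.aeval_eq_sum_range]
  refine MvPolynomial.totalDegree_finsetSum_le fun k hk => ?_
  refine (MvPolynomial.totalDegree_smul_le _ _).trans ?_
  exact (MvPolynomial.isHomogeneous_X_pow i k).totalDegree_le.trans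
    (Nat.lt_succ_iff.1 (mem_range.1 hk))

open MvPolynomial in
lemma monomial_one_eq_sum_choose {ι : Type*} [Fintype ι] [DecidableEq ι] {a : ι →₀ ℕ} {L : ℕ}
    (ha : ∀ g, a g ≤ L) : (monomial a 1 : MvPolynomial ι ℝ) =
      ∑ α ∈ Fintype.piFinset fun _ : ι => range (L + 1),
        (∏ g, ((a g).choose (α g) : ℝ)) • ∏ g, (X g - 1) ^ α g := by
  have hX : ∀ g, (X g ^ a g : MvPolynomial ι ℝ) =
      ∑ k ∈ range (L + 1), ((a g).choose k : MvPolynomial ι ℝ) * (X g - 1) ^ k := fun g => by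
    rw [sum_range_choose_mul_pow (ha g), sub_add_cancel]
  rw [monomial_eq, C_1, one_mul, Finsupp.prod_fintype _ _ fun _ => pow_zero _,
    prod_congr rfl fun g _ => hX g, prod_univ_sum]
  refine sum_congr rfl fun α _ => ?_
  rw [smul_eq_C_mul, map_prod, ← prod_mul_distrib]
  simp_rw [map_natCast]

variable {E : Type*} [AddCommGroup E] {ι : Type*} {m : ℕ}

/-- The linear functional `X ^ a ↦ f (∑ g, a g • y g)`. It turns products of factors `X g - 1`
into mixed differences of `f` with steps `y g`. -/
noncomputable def latticeFunctional (f : E → ℝ) (y : ι → E) : MvPolynomial ι ℝ →ₗ[ℝ] ℝ :=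
  (MvPolynomial.basisMonomials ι ℝ).constr ℝ fun a => f (Finsupp.linearCombination ℕ y a)

lemma latticeFunctional_monomial (f : E → ℝ) (y : ι → E) (a : ι →₀ ℕ) :
    latticeFunctional f y (MvPolynomial.monomial a 1) = f (Finsupp.linearCombination ℕ y a) := by
  simpa [latticeFunctional] using
    (MvPolynomial.basisMonomials ι ℝ).constr_basis ℝ
      (fun a => f (Finsupp.linearCombination ℕ y a)) a

open MvPolynomial in
lemma latticeFunctional_monomial_mul_prod (f : E → ℝ) (y : ι → E) (b : ι →₀ ℕ)
    (κ : Fin m → ι) :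
    latticeFunctional f y (monomial b 1 * ∏ i, (1 - X (κ i))) =
      ∑ S : Finset (Fin m), (-1 : ℝ) ^ #S *
        f (Finsupp.linearCombination ℕ y b + ∑ i ∈ S, y (κ i)) := by
  rw [prod_sub, powerset_univ, mul_sum, map_sum]
  refine sum_congr rfl fun S _ => ?_
  have hterm : (monomial b 1 * ((-1) ^ #S * (∏ _i ∈ univ \ S, 1) * ∏ i ∈ S, X (κ i)) :
      MvPolynomial ι ℝ) = (-1 : ℝ) ^ #S • monomial (b + ∑ i ∈ S, .single (κ i) 1) 1 := by
    simp only [X]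
    rw [← monomial_sum_one, prod_const_one, mul_one, mul_left_comm, monomial_mul, one_mul,
      smul_eq_C_mul, C_pow, C_neg, C_1]
  rw [hterm, map_smul, latticeFunctional_monomial, smul_eq_mul, map_add, map_sum]
  simp_rw [Finsupp.linearCombination_single, one_smul]

open MvPolynomial in
lemma eval_prod_toMvPolynomial_choosePoly [Fintype ι] (a : ι →₀ ℕ) (α : ι → ℕ) :
    eval (fun g => (a g : ℝ)) (∏ g, (choosePoly (α g)).toMvPolynomial g) =
      ∏ g, ((a g).choose (α g) : ℝ) := by
  simp_rw [map_prod, eval_toMvPolynomial, eval_choosePoly]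

lemma sum_prod_choose_mul_two_pow_le [Fintype ι] [DecidableEq ι] {a : ι →₀ ℕ} {L : ℕ}
    (ha : a.degree ≤ L) :
    ∑ α ∈ Fintype.piFinset fun _ : ι => range (L + 1),
      (∏ g, ((a g).choose (α g) : ℝ)) * 2 ^ ∑ g, α g ≤ 3 ^ L := by
  simp_rw [← prod_pow_eq_pow_sum, ← prod_mul_distrib]
  rw [← prod_univ_sum (fun _ => range (L + 1)) fun g k => ((a g).choose k : ℝ) * 2 ^ k]
  simp_rw [fun g => sum_range_choose_mul_pow ((Finsupp.le_degree g a).trans ha) (2 : ℝ)]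
  rw [prod_pow_eq_pow_sum, ← Finsupp.degree_eq_sum]
  rw [show (2 : ℝ) + 1 = 3 by norm_num]
  exact pow_le_pow_right₀ (by norm_num) ha

/-- The Newton interpolation polynomial of degree `< m` of the lattice function
`a ↦ f (∑ g, a g • y g)`: the coefficient of `∏ g, (a g).choose (α g)` is the mixed difference of
`f` at `0` with `α g` steps `y g`, and the multi-indices `α` have entries at most `L`. -/
noncomputable def newtonPoly [Fintype ι] [DecidableEq ι] (f : E → ℝ) (y : ι → E) (m L : ℕ) :
    MvPolynomial ι ℝ :=
  ∑ α ∈ Fintype.piFinset fun _ : ι => range (L + 1) with ∑ g, α g < m,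
    .C (latticeFunctional f y (∏ g, (.X g - 1) ^ α g)) *
      ∏ g, (choosePoly (α g)).toMvPolynomial g

lemma totalDegree_newtonPoly_lt [Fintype ι] [DecidableEq ι] (f : E → ℝ) (y : ι → E) (hm : 0 < m)
    (L : ℕ) : (newtonPoly f y m L).totalDegree < m := by
  rw [← Nat.le_sub_one_iff_lt hm]
  refine MvPolynomial.totalDegree_finsetSum_le fun α hα => ?_
  rw [← MvPolynomial.smul_eq_C_mul]
  refine (MvPolynomial.totalDegree_smul_le _ _).trans <|
    (MvPolynomial.totalDegree_finsetProd _ _).trans ?_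
  calc ∑ g, ((choosePoly (α g)).toMvPolynomial g).totalDegree
    _ ≤ ∑ g, α g := sum_le_sum fun g _ =>
        (totalDegree_toMvPolynomial_le g _).trans (natDegree_choosePoly_le _)
    _ ≤ m - 1 := Nat.le_sub_one_of_lt (mem_filter.1 hα).2

open MvPolynomial in
lemma sub_eval_newtonPoly [Fintype ι] [DecidableEq ι] (f : E → ℝ) (y : ι → E) (m : ℕ) {L : ℕ}
    {a : ι →₀ ℕ} (ha : a.degree ≤ L) :
    f (Finsupp.linearCombination ℕ y a) - eval (fun g => (a g : ℝ)) (newtonPoly f y m L) =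
      ∑ α ∈ Fintype.piFinset fun _ : ι => range (L + 1) with ¬∑ g, α g < m,
        (∏ g, ((a g).choose (α g) : ℝ)) * latticeFunctional f y (∏ g, (X g - 1) ^ α g) := by
  rw [← latticeFunctional_monomial f y a,
    monomial_one_eq_sum_choose fun g => (Finsupp.le_degree g a).trans ha, map_sum,
    ← sum_filter_add_sum_filter_not _ fun α : ι → ℕ => ∑ g, α g < m, newtonPoly, map_sum]
  simp_rw [map_mul, eval_C, eval_prod_toMvPolynomial_choosePoly, map_smul, smul_eq_mul,
    mul_comm (latticeFunctional f y _)]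
  exact add_sub_cancel_left _ _

variable [Module ℝ E] {p : Seminorm ℝ E} {f : E → ℝ} {y : ι → E} {ω τ : ℝ}

lemma seminorm_sum_smul_le (p : Seminorm ℝ E) {κ : Type*} (s : Finset κ) (c : κ → ℝ) (v : κ → E) :
    p (∑ i ∈ s, c i • v i) ≤ ∑ i ∈ s, |c i| * p (v i) := by
  refine (le_sum_of_subadditive p (map_zero p).le (map_add_le_add p) s _).trans_eq ?_
  simp_rw [map_smul_eq_mul, Real.norm_eq_abs]

lemma seminorm_mean_le {κ : Type*} {s : Finset κ} (hs : s.Nonempty) {v : κ → E} {c : ℝ}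
    (hv : ∀ i ∈ s, p (v i) ≤ c) : p ((#s : ℝ)⁻¹ • ∑ i ∈ s, v i) ≤ c := by
  have hcard : (0 : ℝ) < #s := Nat.cast_pos.2 (card_pos.2 hs)
  rw [map_smul_eq_mul, norm_inv, Real.norm_natCast, inv_mul_le_iff₀ hcard, ← nsmul_eq_mul]
  exact (le_sum_of_subadditive p (map_zero p).le (map_add_le_add p) _ _).trans
    (sum_le_card_nsmul s _ c hv)

lemma seminorm_linearCombination_le (hy : ∀ g, p (y g) ≤ τ) (a : ι →₀ ℕ) :
    p (Finsupp.linearCombination ℕ y a) ≤ a.degree * τ := by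
  simp_rw [Finsupp.linearCombination_apply, Finsupp.sum, ← Nat.cast_smul_eq_nsmul ℝ]
  refine (seminorm_sum_smul_le p _ _ _).trans ?_
  rw [Finsupp.degree_apply, Nat.cast_sum, sum_mul]
  exact sum_le_sum fun g _ => by
    rw [Nat.abs_cast]; exact mul_le_mul_of_nonneg_left (hy g) (Nat.cast_nonneg _)

open MvPolynomial in
lemma diffBound.abs_latticeFunctional_prod_le (hf : diffBound m (p.closedBall 0 1) f ω)
    (hy : ∀ g, p (y g) ≤ τ) (b : ι →₀ ℕ) (κ : Fin m → ι)
    (hb : (b.degree + m ^ 2) * τ ≤ 1) :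
    |latticeFunctional f y (monomial b 1 * ∏ i, (X (κ i) - 1))| ≤ 2 ^ m * ω := by
  have hneg : (∏ i, (X (κ i) - 1) : MvPolynomial ι ℝ) = (-1 : ℝ) ^ m • ∏ i, (1 - X (κ i)) := by
    simp_rw [← neg_sub (1 : MvPolynomial ι ℝ), prod_neg, card_univ, Fintype.card_fin,
      smul_eq_C_mul, map_pow, map_neg, map_one]
  rw [hneg, mul_smul_comm, map_smul, smul_eq_mul, abs_mul, abs_pow, abs_neg, abs_one, one_pow,
    one_mul, latticeFunctional_monomial_mul_prod]
  refine hf.abs_sum_powerset_le _ _ fun c hc => ?_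
  rw [Seminorm.mem_closedBall_zero]
  calc p (Finsupp.linearCombination ℕ y b + ∑ i, c i • y (κ i))
    _ ≤ b.degree * τ + ∑ i : Fin m, |c i| * p (y (κ i)) := (map_add_le_add p _ _).trans <|
        add_le_add (seminorm_linearCombination_le hy b) (seminorm_sum_smul_le p _ _ _)
    _ ≤ b.degree * τ + ∑ _i : Fin m, m * τ := by
        gcongr with i
        · exact hc i
        · exact hy (κ i)
    _ = (b.degree + m ^ 2) * τ := by simp; ring
    _ ≤ 1 := hb

open MvPolynomial in
lemma diffBound.abs_latticeFunctional_list_prod_le (hf : diffBound m (p.closedBall 0 1) f ω)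
    (hτ : 0 ≤ τ) (hy : ∀ g, p (y g) ≤ τ) (l : List ι) (hl : m ≤ l.length) (b : ι →₀ ℕ)
    (hb : (b.degree + l.length + m ^ 2) * τ ≤ 1) :
    |latticeFunctional f y (monomial b 1 * (l.map fun g => X g - 1).prod)| ≤
      2 ^ l.length * ω := by
  rcases hl.eq_or_lt with rfl | hlt
  · rw [← Fin.prod_univ_fun_getElem]
    refine hf.abs_latticeFunctional_prod_le hy b _ (le_trans ?_ hb)
    gcongr
    simp
  · obtain _ | ⟨g, l⟩ := l
    · simp at hlt
    have hsplit : (monomial b 1 * ((g :: l).map fun g => X g - 1).prod : MvPolynomial ι ℝ) =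
        monomial (b + .single g 1) 1 * (l.map fun g => X g - 1).prod -
          monomial b 1 * (l.map fun g => X g - 1).prod := by
      rw [← mul_one (1 : ℝ), ← monomial_mul, mul_one, ← X, List.map_cons, List.prod_cons]
      ring
    have hl' : m ≤ l.length := Nat.lt_succ_iff.1 hlt
    have hfst := hf.abs_latticeFunctional_list_prod_le hτ hy l hl' (b + .single g 1) <| by
      rw [map_add, Finsupp.degree_single]
      refine le_of_eq_of_le ?_ hb
      push_cast [List.length_cons]
      ring
    have hsnd := hf.abs_latticeFunctional_list_prod_le hτ hy l hl' b <| by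
      refine le_trans ?_ hb
      gcongr
      simp
    rw [hsplit, map_sub, List.length_cons, pow_succ]
    refine (abs_sub _ _).trans ?_
    linarith

open MvPolynomial in
lemma diffBound.abs_latticeFunctional_prod_pow_le [Fintype ι]
    (hf : diffBound m (p.closedBall 0 1) f ω) (hτ : 0 ≤ τ) (hy : ∀ g, p (y g) ≤ τ)
    (α : ι → ℕ) (hα : m ≤ ∑ g, α g) (hb : ((∑ g, α g : ℕ) + m ^ 2) * τ ≤ 1) :
    |latticeFunctional f y (∏ g, (X g - 1) ^ α g)| ≤ 2 ^ (∑ g, α g) * ω := by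
  let l : List ι := (∑ g, Multiset.replicate (α g) g).toList
  have hlen : l.length = ∑ g, α g := by simp [l]
  have hprod : (l.map fun g => (X g - 1 : MvPolynomial ι ℝ)).prod = ∏ g, (X g - 1) ^ α g := by
    rw [Multiset.prod_map_toList, ← Multiset.coe_mapAddMonoidHom, map_sum, Multiset.prod_sum]
    simp
  rw [← hlen] at hα hb ⊢
  simpa [hprod] using hf.abs_latticeFunctional_list_prod_le hτ hy l hα 0 (by simpa using hb)

lemma diffBound.abs_sub_eval_newtonPoly_le [Fintype ι] [DecidableEq ι]
    (hf : diffBound m (p.closedBall 0 1) f ω) (hτ : 0 ≤ τ) (hy : ∀ g, p (y g) ≤ τ) {L : ℕ}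
    (hL : (L + m ^ 2) * τ ≤ 1) {a : ι →₀ ℕ} (ha : a.degree ≤ L) :
    |f (Finsupp.linearCombination ℕ y a) -
      MvPolynomial.eval (fun g => (a g : ℝ)) (newtonPoly f y m L)| ≤ 3 ^ L * ω := by
  have hω : 0 ≤ ω := hf.nonneg (x := 0) (by simp)
  rw [sub_eval_newtonPoly f y m ha]
  calc _ ≤ ∑ α ∈ Fintype.piFinset fun _ : ι => range (L + 1) with ¬∑ g, α g < m,
        (∏ g, ((a g).choose (α g) : ℝ)) * (2 ^ (∑ g, α g) * ω) := ?_
    _ ≤ ∑ α ∈ Fintype.piFinset fun _ : ι => range (L + 1),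
        (∏ g, ((a g).choose (α g) : ℝ)) * (2 ^ (∑ g, α g) * ω) :=
      sum_le_sum_of_subset_of_nonneg (filter_subset _ _) fun _ _ _ => by positivity
    _ ≤ 3 ^ L * ω := by
      simp_rw [← mul_assoc, ← sum_mul]
      exact mul_le_mul_of_nonneg_right (sum_prod_choose_mul_two_pow_le ha) hω
  refine (abs_sum_le_sum_abs _ _).trans (sum_le_sum fun α hα => ?_)
  rw [abs_mul, abs_of_nonneg (prod_nonneg fun g _ => Nat.cast_nonneg _)]
  by_cases hle : ∀ g, α g ≤ a g
  · gcongr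
    refine hf.abs_latticeFunctional_prod_pow_le hτ hy α (not_lt.1 (mem_filter.1 hα).2)
      (le_trans ?_ hL)
    gcongr
    exact (sum_le_sum fun g _ => hle g).trans ((Finsupp.degree_eq_sum a).ge.trans ha)
  · push Not at hle
    obtain ⟨g, hg⟩ := hle
    have hzero : ∏ g, ((a g).choose (α g) : ℝ) = 0 :=
      prod_eq_zero (mem_univ g) (by rw [Nat.choose_eq_zero_of_lt hg, Nat.cast_zero])
    rw [hzero, zero_mul, zero_mul]

end Newton

section SubsetAverages

lemma abs_expect_sub_expect_le {ι : Type*} {s : Finset ι} (hs : s.Nonempty) {φ ψ : ι → ℝ} {M : ℝ}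
    (h : ∀ i ∈ s, |φ i - ψ i| ≤ M) : |𝔼 i ∈ s, φ i - 𝔼 i ∈ s, ψ i| ≤ M := by
  rw [← expect_sub_distrib]
  exact (abs_expect_le _ _).trans (expect_le hs h)

lemma exists_polynomial_inv_pow_mul_choose {s D : ℕ} (hs : s ≤ D) :
    ∃ R : Polynomial ℝ, R.natDegree ≤ D ∧
      ∀ k : ℕ, k ≠ 0 → (k : ℝ)⁻¹ ^ D * k.choose s = R.eval (k : ℝ)⁻¹ := by
  have hdeg : (choosePoly s).natDegree ≤ D := (natDegree_choosePoly_le s).trans hs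
  refine ⟨(choosePoly s).reflect D, Polynomial.natDegree_reflect_le.trans (max_le le_rfl hdeg),
    fun k hk => ?_⟩
  have hk : (k : ℝ) ≠ 0 := Nat.cast_ne_zero.2 hk
  let _ : Invertible (k : ℝ) := invertibleOfNonzero hk
  have hreflect : ((choosePoly s).reflect D).eval (k : ℝ)⁻¹ * (k : ℝ) ^ D = k.choose s := by
    rw [← eval_choosePoly, ← invOf_eq_inv]
    exact Polynomial.eval₂_reflect_mul_pow (RingHom.id ℝ) (k : ℝ) D _ hdeg
  rw [← hreflect, mul_left_comm, ← mul_pow, inv_mul_cancel₀ hk, one_pow, mul_one]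

lemma prod_ite_mem_pow {ι : Type*} [DecidableEq ι] (a : ι →₀ ℕ) (K : Finset ι) (t : ℝ) :
    (a.prod fun i e => (if i ∈ K then t else 0) ^ e) =
      if a.support ⊆ K then t ^ a.degree else 0 := by
  split_ifs with h
  · rw [Finsupp.prod, Finsupp.degree_apply, ← prod_pow_eq_pow_sum]
    exact prod_congr rfl fun i hi => by rw [if_pos (h hi)]
  · obtain ⟨i, hi, hiK⟩ := not_subset.1 h
    exact prod_eq_zero hi (by dsimp only; rw [if_neg hiK, zero_pow (Finsupp.mem_support_iff.1 hi)])

variable {ι : Type*} [Fintype ι] [DecidableEq ι]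

lemma card_filter_subset_powersetCard_mul (S : Finset ι) (k : ℕ) :
    #{K ∈ powersetCard k univ | S ⊆ K} * (Fintype.card ι).choose #S =
      (Fintype.card ι).choose k * k.choose #S := by
  by_cases hSk : #S ≤ k
  · rw [card_filter_powersetCard_subset S univ k (subset_univ _) hSk, card_univ,
      Nat.choose_mul hSk, mul_comm]
  · rw [Nat.choose_eq_zero_of_lt (not_le.1 hSk), filter_false_of_mem, card_empty, zero_mul,
      mul_zero]
    exact fun K hK hSK => hSk ((card_le_card hSK).trans (mem_powersetCard.1 hK).2.le)

lemma expect_powersetCard_ite_subset (S : Finset ι) {k : ℕ} (hk : k ≤ Fintype.card ι) (t : ℝ) :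
    𝔼 K ∈ powersetCard k univ, (if S ⊆ K then t else 0) =
      t * (k.choose #S / (Fintype.card ι).choose #S) := by
  have hS : ((Fintype.card ι).choose #S : ℝ) ≠ 0 :=
    Nat.cast_ne_zero.2 (Nat.choose_pos (card_le_univ S)).ne'
  have hk : ((Fintype.card ι).choose k : ℝ) ≠ 0 := Nat.cast_ne_zero.2 (Nat.choose_pos hk).ne'
  have hcard : (#{K ∈ powersetCard k univ | S ⊆ K} : ℝ) * (Fintype.card ι).choose #S =
      (Fintype.card ι).choose k * k.choose #S := mod_cast card_filter_subset_powersetCard_mul S k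
  rw [expect_eq_sum_div_card, ← sum_filter, sum_const, card_powersetCard, card_univ, nsmul_eq_mul]
  field_simp
  linear_combination t * hcard

lemma exists_polynomial_expect_eval (P : MvPolynomial ι ℝ) (c : ℝ) :
    ∃ R : Polynomial ℝ, R.natDegree ≤ P.totalDegree ∧ ∀ k : ℕ, k ≠ 0 → k ≤ Fintype.card ι →
      𝔼 K ∈ powersetCard k univ, MvPolynomial.eval (fun i => if i ∈ K then c * (k : ℝ)⁻¹ else 0) P =
        R.eval (k : ℝ)⁻¹ := by
  have hsupp : ∀ a : ι →₀ ℕ, #a.support ≤ a.degree := fun a => by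
    rw [Finsupp.degree_apply, card_eq_sum_ones]
    exact sum_le_sum fun i hi => Nat.one_le_iff_ne_zero.2 (Finsupp.mem_support_iff.1 hi)
  choose R hRdeg hR using fun a : ι →₀ ℕ => exists_polynomial_inv_pow_mul_choose (hsupp a)
  refine ⟨∑ a ∈ P.support,
    .C (P.coeff a * c ^ a.degree / (Fintype.card ι).choose #a.support) * R a, ?_, ?_⟩
  · exact Polynomial.natDegree_sum_le_of_forall_le _ _ fun a ha =>
      (Polynomial.natDegree_C_mul_le _ _).trans ((hRdeg a).trans (MvPolynomial.le_totalDegree ha))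
  · intro k hk hkι
    rw [Polynomial.eval_finsetSum]
    simp_rw [MvPolynomial.eval_eq, expect_sum_comm, ← mul_expect]
    refine sum_congr rfl fun a _ => ?_
    have hmon := fun K : Finset ι => prod_ite_mem_pow a K (c * (k : ℝ)⁻¹)
    simp_rw [Finsupp.prod] at hmon
    simp_rw [hmon]
    rw [expect_powersetCard_ite_subset _ hkι, Polynomial.eval_C_mul, ← hR a k hk, mul_pow]
    ring

end SubsetAverages

section Blocks

variable {E : Type*} [AddCommGroup E] [Module ℝ E] {p : Seminorm ℝ E} {f : E → ℝ} {m : ℕ}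
  {ω τ : ℝ}

lemma linearCombination_indicator_smul {ι : Type*} [Finite ι] [DecidableEq ι] (y : ι → E)
    (K : Finset ι) {d k : ℕ} (hd : d ≠ 0) :
    Finsupp.linearCombination ℕ (fun i => ((k * d : ℕ) : ℝ)⁻¹ • y i)
      (Finsupp.equivFunOnFinite.symm fun i => if i ∈ K then d else 0) =
      (k : ℝ)⁻¹ • ∑ i ∈ K, y i := by
  have := Fintype.ofFinite ι
  have hd : (d : ℝ) ≠ 0 := Nat.cast_ne_zero.2 hd
  rw [Finsupp.linearCombination_apply, Finsupp.sum_fintype _ _ (by simp)]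
  simp_rw [Finsupp.equivFunOnFinite_symm_apply_apply, ite_smul, zero_smul, sum_ite_mem, univ_inter,
    smul_sum, ← Nat.cast_smul_eq_nsmul ℝ d, smul_smul]
  refine sum_congr rfl fun i _ => ?_
  congr 1
  push_cast
  field_simp

lemma diffBound.exists_polynomial_expect_powersetCard {ι : Type*} [Fintype ι] [Nonempty ι]
    (hm : 0 < m) (hf : diffBound m (p.closedBall 0 1) f ω) (hτ : 0 ≤ τ)
    (hτι : (Fintype.card ι + m ^ 2) * τ ≤ 1) {y : ι → E} (hy : ∀ i, p (y i) ≤ Fintype.card ι * τ) :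
    ∃ R : Polynomial ℝ, R.natDegree < m ∧ ∀ k, k ∣ Fintype.card ι →
      |𝔼 K ∈ powersetCard k univ, f ((k : ℝ)⁻¹ • ∑ i ∈ K, y i) - R.eval (k : ℝ)⁻¹| ≤
        3 ^ Fintype.card ι * ω := by
  classical
  set r := Fintype.card ι
  have hr0 : r ≠ 0 := Fintype.card_ne_zero
  let u : ι → E := fun i => (r : ℝ)⁻¹ • y i
  have hu : ∀ i, p (u i) ≤ τ := fun i => by
    rw [map_smul_eq_mul, norm_inv, Real.norm_natCast,
      inv_mul_le_iff₀ (by exact_mod_cast Nat.pos_of_ne_zero hr0)]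
    exact hy i
  obtain ⟨R, hRdeg, hR⟩ := exists_polynomial_expect_eval (newtonPoly f u m r) r
  refine ⟨R, hRdeg.trans_lt (totalDegree_newtonPoly_lt f u hm r), fun k hk => ?_⟩
  have hk0 : k ≠ 0 := fun h => hr0 (by simpa [h] using hk)
  have hkr : k ≤ r := Nat.le_of_dvd (Nat.pos_of_ne_zero hr0) hk
  obtain ⟨d, hd⟩ := hk
  have hd0 : d ≠ 0 := by rintro rfl; exact hr0 (by simpa using hd)
  rw [← hR k hk0 hkr]
  refine abs_expect_sub_expect_le (powersetCard_nonempty.2 hkr) fun K hK => ?_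
  let a : ι →₀ ℕ := Finsupp.equivFunOnFinite.symm fun i => if i ∈ K then d else 0
  have hdeg : a.degree ≤ r := by
    simp [a, Finsupp.degree_eq_sum, (mem_powersetCard.1 hK).2, hd]
  have hlattice : Finsupp.linearCombination ℕ u a = (k : ℝ)⁻¹ • ∑ i ∈ K, y i := by
    rw [← linearCombination_indicator_smul y K hd0, ← hd]
  have hcoord : (fun i => (a i : ℝ)) = fun i => if i ∈ K then (r : ℝ) * (k : ℝ)⁻¹ else 0 := by
    have hk0 : (k : ℝ) ≠ 0 := Nat.cast_ne_zero.2 hk0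
    funext i
    simp only [a, Finsupp.equivFunOnFinite_symm_apply_apply, hd]
    split_ifs
    · push_cast; field_simp
    · exact Nat.cast_zero
  rw [← hlattice, ← hcoord]
  exact hf.abs_sub_eval_newtonPoly_le hτ hu hτι hdeg

/-- The average of `f` over all means of `#A` of the vectors `v l`, organised as an average over
permutations so that it depends only on the cardinality of `A`. -/
noncomputable def permAverage {α : Type*} [Fintype α] [DecidableEq α] (f : E → ℝ) (v : α → E)
    (A : Finset α) : ℝ :=
  𝔼 σ : Equiv.Perm α, f ((#A : ℝ)⁻¹ • ∑ l ∈ A, v (σ l))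

variable {α : Type*} [Fintype α] [DecidableEq α]

lemma permAverage_congr_card (f : E → ℝ) (v : α → E) {A B : Finset α} (h : #A = #B) :
    permAverage f v A = permAverage f v B := by
  let π : Equiv.Perm α := (equivOfCardEq h).extendSubtype
  have hB : B = A.map π.toEmbedding := by
    refine (eq_of_subset_of_card_le (fun x hx => ?_) (by simp [h])).symm
    obtain ⟨a, ha, rfl⟩ := mem_map.1 hx
    exact Equiv.extendSubtype_mem _ a ha
  refine (Fintype.expect_equiv (Equiv.mulRight π) _ _ fun σ => ?_).symm
  rw [h, hB, sum_map]
  rfl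

lemma permAverage_univ (f : E → ℝ) (v : α → E) :
    permAverage f v univ = f ((Fintype.card α : ℝ)⁻¹ • ∑ l, v l) := by
  simp_rw [permAverage, Equiv.sum_comp _ v, card_univ]
  exact expect_const univ_nonempty _

lemma permAverage_eq_expect_blocks {β γ : Type*} [Fintype β] [Fintype γ]
    (f : E → ℝ) (v : α → E) (e : β × γ ↪ α) {k : ℕ} (hk : k ≤ Fintype.card β) {A : Finset α}
    (hA : #A = k * Fintype.card γ) :
    permAverage f v A = 𝔼 σ : Equiv.Perm α, 𝔼 K ∈ powersetCard k univ,
      f ((k : ℝ)⁻¹ • ∑ b ∈ K, (Fintype.card γ : ℝ)⁻¹ • ∑ c, v (σ (e (b, c)))) := by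
  classical
  have hcard : ∀ K ∈ powersetCard k (univ : Finset β), #((K ×ˢ (univ : Finset γ)).map e) = #A :=
    fun K hK => by rw [card_map, card_product, (mem_powersetCard.1 hK).2, card_univ, hA]
  rw [expect_comm]
  calc permAverage f v A
    _ = 𝔼 _K ∈ powersetCard k (univ : Finset β), permAverage f v A :=
      (expect_const (powersetCard_nonempty.2 hk) _).symm
    _ = _ := expect_congr rfl fun K hK => ?_
  rw [← permAverage_congr_card f v (hcard K hK), permAverage]
  refine expect_congr rfl fun σ _ => ?_
  rw [hcard K hK, hA, sum_map, sum_product, ← smul_sum, smul_smul]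
  push_cast
  rw [mul_inv]

lemma diffBound.exists_polynomial_permAverage (hm : 0 < m)
    (hf : diffBound m (p.closedBall 0 1) f ω) (hτ : 0 ≤ τ) {r s : ℕ} (hr : r ≠ 0) (hs : s ≠ 0)
    (hτr : (r + m ^ 2) * τ ≤ 1) (hrs : r * s ≤ Fintype.card α) {v : α → E}
    (hv : ∀ l, p (v l) ≤ r * τ) :
    ∃ R : Polynomial ℝ, R.natDegree < m ∧ ∀ k, k ∣ r → ∀ A : Finset α, #A = k * s →
      |permAverage f v A - R.eval (k : ℝ)⁻¹| ≤ 3 ^ r * ω := by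
  have : Nonempty (Fin r) := Fin.pos_iff_nonempty.1 (Nat.pos_of_ne_zero hr)
  obtain ⟨e⟩ : Nonempty (Fin r × Fin s ↪ α) :=
    Function.Embedding.nonempty_of_card_le (by simpa using hrs)
  let y : Equiv.Perm α → Fin r → E := fun σ b => (s : ℝ)⁻¹ • ∑ c, v (σ (e (b, c)))
  have : Nonempty (Fin s) := Fin.pos_iff_nonempty.1 (Nat.pos_of_ne_zero hs)
  have hy : ∀ σ b, p (y σ b) ≤ Fintype.card (Fin r) * τ := fun σ b => by
    simpa only [card_univ, Fintype.card_fin] using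
      seminorm_mean_le univ_nonempty fun c _ => hv (σ (e (b, c)))
  choose R hRdeg hR using fun σ =>
    hf.exists_polynomial_expect_powersetCard hm hτ (by rwa [Fintype.card_fin]) (hy σ)
  simp only [Fintype.card_fin] at hR
  refine ⟨.C (Fintype.card (Equiv.Perm α) : ℝ)⁻¹ * ∑ σ, R σ, ?_, fun k hk A hA => ?_⟩
  · refine lt_of_le_of_lt (Polynomial.natDegree_C_mul_le _ _) ?_
    rw [← Nat.le_sub_one_iff_lt hm]
    exact Polynomial.natDegree_sum_le_of_forall_le _ _ fun σ _ => Nat.le_sub_one_of_lt (hRdeg σ)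
  · have heval : (Polynomial.C (Fintype.card (Equiv.Perm α) : ℝ)⁻¹ * ∑ σ, R σ).eval (k : ℝ)⁻¹ =
        𝔼 σ, (R σ).eval (k : ℝ)⁻¹ := by
      rw [Polynomial.eval_C_mul, Polynomial.eval_finsetSum, Fintype.expect_eq_sum_div_card,
        inv_mul_eq_div]
    rw [heval, permAverage_eq_expect_blocks f v e
      (by simpa using Nat.le_of_dvd (Nat.pos_of_ne_zero hr) hk) (by simpa using hA)]
    refine abs_expect_sub_expect_le univ_nonempty fun σ _ => ?_
    simpa only [Fintype.card_fin] using hR σ k hk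

end Blocks

section QDifference

/-- The `q`-difference operator `∏ t < k, (T - ρ ^ t)` on sequences, where `T` is the left shift.
It detects polynomials in `ρ ^ l` of degree `< k`, which it annihilates. -/
noncomputable def qDiff (ρ : ℝ) : ℕ → (ℕ → ℝ) →ₗ[ℝ] (ℕ → ℝ)
  | 0 => LinearMap.id
  | k + 1 => (LinearMap.funLeft ℝ ℝ Nat.succ - ρ ^ k • LinearMap.id) ∘ₗ qDiff ρ k

variable {ρ : ℝ}

lemma qDiff_zero_apply (a : ℕ → ℝ) (j : ℕ) : qDiff ρ 0 a j = a j := rfl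

lemma qDiff_succ_apply (k : ℕ) (a : ℕ → ℝ) (j : ℕ) :
    qDiff ρ (k + 1) a j = qDiff ρ k a (j + 1) - ρ ^ k * qDiff ρ k a j := rfl

lemma qDiff_shift (k i j : ℕ) (a : ℕ → ℝ) :
    qDiff ρ k (fun l => a (i + l)) j = qDiff ρ k a (i + j) := by
  induction k generalizing j with
  | zero => rfl
  | succ k ih => simp only [qDiff_succ_apply, ih, add_assoc]

lemma qDiff_pow (k i j : ℕ) :
    qDiff ρ k (fun l => (ρ ^ l) ^ i) j = (∏ t ∈ range k, (ρ ^ i - ρ ^ t)) * (ρ ^ j) ^ i := by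
  induction k generalizing j with
  | zero => rw [qDiff_zero_apply, prod_range_zero, one_mul]
  | succ k ih =>
    rw [qDiff_succ_apply, ih, ih, prod_range_succ]
    ring

lemma qDiff_eval_eq_zero {k : ℕ} {R : Polynomial ℝ} (hR : R.natDegree < k) (j : ℕ) :
    qDiff ρ k (fun l => R.eval (ρ ^ l)) j = 0 := by
  have hsum : (fun l => R.eval (ρ ^ l)) =
      ∑ i ∈ range (R.natDegree + 1), R.coeff i • fun l => (ρ ^ l) ^ i := by
    funext l
    simp [Polynomial.eval_eq_sum_range, Finset.sum_apply]
  rw [hsum, map_sum, Finset.sum_apply]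
  refine sum_eq_zero fun i hi => ?_
  rw [map_smul, Pi.smul_apply, qDiff_pow, prod_eq_zero (mem_range.2 ?_) (sub_self _), zero_mul,
    smul_zero]
  exact (mem_range_succ_iff.1 hi).trans_lt hR

lemma qDiff_cast (k j : ℕ) :
    qDiff ρ (k + 1) (fun l => (l : ℝ)) j = ∏ t ∈ range k, (1 - ρ ^ (t + 1)) := by
  induction k generalizing j with
  | zero => simp [qDiff_succ_apply, qDiff_zero_apply]
  | succ k ih =>
    rw [qDiff_succ_apply, ih, ih, prod_range_succ]
    ring

lemma abs_qDiff_le (h0 : 0 ≤ ρ) (h1 : ρ ≤ 1) {k j : ℕ} {a : ℕ → ℝ} {M : ℝ}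
    (ha : ∀ l, j ≤ l → l ≤ j + k → |a l| ≤ M) : |qDiff ρ k a j| ≤ 2 ^ k * M := by
  induction k generalizing j with
  | zero => simpa [qDiff_zero_apply] using ha j le_rfl le_rfl
  | succ k ih =>
    calc |qDiff ρ k a (j + 1) - ρ ^ k * qDiff ρ k a j|
      _ ≤ |qDiff ρ k a (j + 1)| + |ρ ^ k * qDiff ρ k a j| := abs_sub _ _
      _ = |qDiff ρ k a (j + 1)| + ρ ^ k * |qDiff ρ k a j| := by
        rw [abs_mul, abs_of_nonneg (pow_nonneg h0 k)]
      _ ≤ 2 ^ k * M + 1 * (2 ^ k * M) := by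
        gcongr
        · exact ih fun l h h' => ha l (by lia) (by lia)
        · exact pow_le_one₀ h0 h1
        · exact ih fun l h h' => ha l (by lia) (by lia)
      _ = 2 ^ (k + 1) * M := by ring

lemma abs_qDiff_le_of_abs_sub_eval_le (h0 : 0 ≤ ρ) (h1 : ρ ≤ 1) {k j : ℕ} {a : ℕ → ℝ} {M : ℝ}
    {R : Polynomial ℝ} (hR : R.natDegree < k)
    (ha : ∀ l ≤ k, |a (j + l) - R.eval (ρ ^ l)| ≤ M) : |qDiff ρ k a j| ≤ 2 ^ k * M := by
  have hdiff : qDiff ρ k a j = qDiff ρ k ((fun l => a (j + l)) - fun l => R.eval (ρ ^ l)) 0 := by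
    rw [map_sub, Pi.sub_apply, qDiff_shift, qDiff_eval_eq_zero hR, sub_zero, add_zero]
  rw [hdiff]
  exact abs_qDiff_le h0 h1 fun l _ hl => ha l (by lia)

lemma abs_le_of_abs_succ_sub_mul_le {b : ℕ → ℝ} {c M B : ℝ} {J : ℕ} (hc : 0 ≤ c)
    (h0 : |b 0| ≤ B) (hB : M + c * B ≤ B) (hb : ∀ i < J, |b (i + 1) - c * b i| ≤ M) :
    ∀ i ≤ J, |b i| ≤ B := by
  intro i
  induction i with
  | zero => exact fun _ => h0
  | succ i ih =>
    intro hi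
    calc |b (i + 1)|
      _ = |(b (i + 1) - c * b i) + c * b i| := by rw [sub_add_cancel]
      _ ≤ |b (i + 1) - c * b i| + |c * b i| := abs_add_le _ _
      _ ≤ M + c * B := by
        rw [abs_mul, abs_of_nonneg hc]
        gcongr
        · exact hb i (by lia)
        · exact ih (by lia)
      _ ≤ B := hB

lemma abs_le_mul_of_abs_sub_le {a : ℕ → ℝ} {M : ℝ} {J : ℕ} (h0 : |a 0| ≤ M)
    (ha : ∀ i < J, |a (i + 1) - a i| ≤ M) : ∀ j ≤ J, |a j| ≤ M * (j + 1) := by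
  intro j
  induction j with
  | zero => intro _; simpa using h0
  | succ j ih =>
    intro hj
    have hstep := (abs_sub_abs_le_abs_sub _ _).trans (ha j (by lia))
    have := ih (by lia)
    push_cast
    linarith

lemma abs_qDiff_le_of_abs_qDiff_succ_le (h0 : 0 ≤ ρ) (h1 : ρ < 1) {k J : ℕ} {a : ℕ → ℝ} {M : ℝ}
    (hM : 0 ≤ M) (hinit : ∀ l ≤ k + 1, |a l| ≤ M)
    (hJ : ∀ i, i + (k + 2) ≤ J → |qDiff ρ (k + 2) a i| ≤ M) {i : ℕ} (hi : i + (k + 1) ≤ J) :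
    |qDiff ρ (k + 1) a i| ≤ 2 ^ (k + 1) / (1 - ρ) * M := by
  have hρ : 0 < 1 - ρ := sub_pos.2 h1
  have hpow : (1 : ℝ) ≤ 2 ^ (k + 1) := one_le_pow₀ one_le_two
  have hρk : ρ ^ (k + 1) ≤ ρ := pow_le_of_le_one h0 h1.le k.succ_ne_zero
  refine abs_le_of_abs_succ_sub_mul_le (J := J - (k + 1)) (pow_nonneg h0 (k + 1)) ?_ ?_
    (fun l hl => hJ l (by lia)) i (by lia)
  · refine (abs_qDiff_le h0 h1.le fun l _ hl => hinit l (by lia)).trans ?_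
    gcongr
    exact le_div_self (by positivity) hρ (by linarith)
  · calc M + ρ ^ (k + 1) * (2 ^ (k + 1) / (1 - ρ) * M)
      _ ≤ 2 ^ (k + 1) * M + ρ * (2 ^ (k + 1) / (1 - ρ) * M) := by
        gcongr
        exact le_mul_of_one_le_left hM hpow
      _ = 2 ^ (k + 1) / (1 - ρ) * M := by
        field_simp
        ring

/-- The factor by which `abs_qDiff_one_le` loses when it inverts `qDiff ρ (k + 1)` down to
`qDiff ρ 1`. -/
noncomputable def qDiffInvConst (ρ : ℝ) (k : ℕ) : ℝ := ∏ t ∈ range k, 2 ^ (t + 1) / (1 - ρ)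

lemma one_le_two_pow_div_one_sub (h0 : 0 ≤ ρ) (h1 : ρ < 1) (k : ℕ) : 1 ≤ 2 ^ k / (1 - ρ) := by
  rw [one_le_div (sub_pos.2 h1)]
  linarith [one_le_pow₀ (one_le_two (α := ℝ)) (n := k)]

lemma one_le_qDiffInvConst (h0 : 0 ≤ ρ) (h1 : ρ < 1) (k : ℕ) : 1 ≤ qDiffInvConst ρ k :=
  prod_induction _ (1 ≤ ·) (fun _ _ => one_le_mul_of_one_le_of_one_le) le_rfl
    fun t _ => one_le_two_pow_div_one_sub h0 h1 (t + 1)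

lemma abs_qDiff_one_le (h0 : 0 ≤ ρ) (h1 : ρ < 1) {k J : ℕ} {a : ℕ → ℝ} {M : ℝ} (hM : 0 ≤ M)
    (hinit : ∀ l ≤ k, |a l| ≤ M) (hJ : ∀ i, i + (k + 1) ≤ J → |qDiff ρ (k + 1) a i| ≤ M) {i : ℕ}
    (hi : i + 1 ≤ J) : |qDiff ρ 1 a i| ≤ qDiffInvConst ρ k * M := by
  induction k generalizing M with
  | zero => simpa [qDiffInvConst] using hJ i hi
  | succ k ih =>
    have hD := one_le_two_pow_div_one_sub h0 h1 (k + 1)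
    rw [qDiffInvConst, prod_range_succ, mul_assoc]
    exact ih (by positivity)
      (fun l hl => (hinit l (by lia)).trans (le_mul_of_one_le_left hM hD))
      fun i => abs_qDiff_le_of_abs_qDiff_succ_le h0 h1 hM hinit hJ

lemma abs_le_mul_of_abs_qDiff_le (h0 : 0 ≤ ρ) (h1 : ρ < 1) {k J : ℕ} {a : ℕ → ℝ} {M : ℝ}
    (hM : 0 ≤ M) (hinit : ∀ l ≤ k, |a l| ≤ M)
    (hJ : ∀ i, i + (k + 1) ≤ J → |qDiff ρ (k + 1) a i| ≤ M) {j : ℕ} (hj : j ≤ J) :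
    |a j| ≤ qDiffInvConst ρ k * M * (j + 1) := by
  refine abs_le_mul_of_abs_sub_le ?_ (fun i hi => ?_) j hj
  · exact (hinit 0 k.zero_le).trans (le_mul_of_one_le_left hM (one_le_qDiffInvConst h0 h1 k))
  · simpa [qDiff_succ_apply, qDiff_zero_apply] using abs_qDiff_one_le h0 h1 hM hinit hJ hi

end QDifference

section DyadicMeans

variable {α : Type*} [Fintype α] [DecidableEq α]

lemma expect_perm_apply (φ : α → ℝ) (l : α) : 𝔼 σ : Equiv.Perm α, φ (σ l) = 𝔼 i, φ i := by
  have hconst (l' : α) : 𝔼 σ : Equiv.Perm α, φ (σ l') = 𝔼 σ : Equiv.Perm α, φ (σ l) :=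
    Fintype.expect_equiv (Equiv.mulRight (Equiv.swap l l')) _ _ fun σ => by simp
  calc 𝔼 σ : Equiv.Perm α, φ (σ l)
    _ = 𝔼 _l' : α, 𝔼 σ : Equiv.Perm α, φ (σ l) := (expect_const ⟨l, mem_univ l⟩ _).symm
    _ = 𝔼 l', 𝔼 σ : Equiv.Perm α, φ (σ l') := expect_congr rfl fun l' _ => (hconst l').symm
    _ = 𝔼 σ : Equiv.Perm α, 𝔼 l', φ (σ l') := expect_comm _ _ _
    _ = 𝔼 _σ : Equiv.Perm α, 𝔼 i, φ i :=
      expect_congr rfl fun σ _ => Fintype.expect_equiv σ _ _ fun _ => rfl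
    _ = 𝔼 i, φ i := expect_const univ_nonempty _

variable {E : Type*} [AddCommGroup E] [Module ℝ E] {p : Seminorm ℝ E} {f : E → ℝ} {m : ℕ}
  {ω τ : ℝ} {v : α → E}

lemma abs_permAverage_le {A bad : Finset α} {C M : ℝ} (hM : 0 ≤ M) (hC : 0 ≤ C)
    (hgood : ∀ B : Finset α, #B = #A → Disjoint B bad → |f ((#B : ℝ)⁻¹ • ∑ l ∈ B, v l)| ≤ C)
    (hall : ∀ B : Finset α, #B = #A → |f ((#B : ℝ)⁻¹ • ∑ l ∈ B, v l)| ≤ M) :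
    |permAverage f v A| ≤ C + #A * (M * #bad / Fintype.card α) := by
  have hpointwise (σ : Equiv.Perm α) : |f ((#A : ℝ)⁻¹ • ∑ l ∈ A, v (σ l))| ≤
      C + ∑ l ∈ A, if σ l ∈ bad then M else 0 := by
    have hmap : (#A : ℝ)⁻¹ • ∑ l ∈ A, v (σ l) =
        (#(A.map σ.toEmbedding) : ℝ)⁻¹ • ∑ l ∈ A.map σ.toEmbedding, v l := by
      rw [card_map, sum_map]; rfl
    have hnonneg : ∀ l ∈ A, 0 ≤ if σ l ∈ bad then M else 0 := fun l _ => by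
      split_ifs <;> simp [hM]
    rw [hmap]
    by_cases hdisj : Disjoint (A.map σ.toEmbedding) bad
    · exact (hgood _ (card_map _) hdisj).trans (le_add_of_nonneg_right (sum_nonneg hnonneg))
    · obtain ⟨_, hl, hbad⟩ := not_disjoint_iff.1 hdisj
      obtain ⟨l, hlA, rfl⟩ := mem_map.1 hl
      refine (hall _ (card_map _)).trans (le_trans ?_ (le_add_of_nonneg_left hC))
      simpa only [if_pos (show σ l ∈ bad from hbad)] using single_le_sum hnonneg hlA
  calc |permAverage f v A|
    _ ≤ 𝔼 σ : Equiv.Perm α, |f ((#A : ℝ)⁻¹ • ∑ l ∈ A, v (σ l))| := abs_expect_le _ _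
    _ ≤ 𝔼 σ : Equiv.Perm α, (C + ∑ l ∈ A, if σ l ∈ bad then M else 0) :=
      expect_le_expect fun σ _ => hpointwise σ
    _ = C + ∑ l ∈ A, 𝔼 i, if i ∈ bad then M else 0 := by
      rw [expect_add_distrib, expect_const univ_nonempty, expect_sum_comm]
      simp_rw [expect_perm_apply fun i => if i ∈ bad then M else 0]
    _ = C + #A * (M * #bad / Fintype.card α) := by
      rw [sum_const, nsmul_eq_mul, Fintype.expect_eq_sum_div_card, sum_ite_mem, univ_inter,
        sum_const, nsmul_eq_mul, mul_comm M]

lemma diffBound.abs_apply_mean_le (hm : 0 < m) (hf : diffBound m (p.closedBall 0 1) f ω)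
    (hτ : 0 ≤ τ) (hτm : (2 ^ m + m ^ 2) * τ ≤ 1) {J : ℕ} (hmJ : m ≤ J)
    (hα : Fintype.card α = 2 ^ J) (hv : ∀ l, p (v l) ≤ 2 ^ m * τ) {M : ℝ} (hM : 0 ≤ M)
    (hinit : ∀ j < m, ∀ A : Finset α, #A = 2 ^ j → |permAverage f v A| ≤ M) :
    |f ((Fintype.card α : ℝ)⁻¹ • ∑ l, v l)| ≤
      qDiffInvConst (1 / 2) (m - 1) * (M + 2 ^ m * (3 ^ 2 ^ m * ω)) * (J + 1) := by
  obtain ⟨k, rfl⟩ := Nat.exists_eq_add_one.2 hm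
  have hω : 0 ≤ ω := hf.nonneg (x := 0) (by simp)
  have hexists (j : ℕ) : ∃ S : Finset α, j ≤ J → #S = 2 ^ j := by
    by_cases hj : j ≤ J
    · obtain ⟨S, -, hS⟩ := exists_subset_card_eq (s := (univ : Finset α))
        (n := 2 ^ j) (by rw [card_univ, hα]; gcongr; norm_num)
      exact ⟨S, fun _ => hS⟩
    · exact ⟨∅, fun h => absurd h hj⟩
  choose S hS using hexists
  have hrec (i : ℕ) (hi : i + (k + 1) ≤ J) :
      |qDiff (1 / 2) (k + 1) (fun j => permAverage f v (S j)) i| ≤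
        2 ^ (k + 1) * (3 ^ 2 ^ (k + 1) * ω) := by
    obtain ⟨R, hRdeg, hR⟩ := hf.exists_polynomial_permAverage (r := 2 ^ (k + 1)) (s := 2 ^ i) hm hτ
      (by positivity) (by positivity) (by exact_mod_cast hτm)
      (by rw [hα, ← pow_add]; gcongr <;> lia) (v := v) (by exact_mod_cast hv)
    refine abs_qDiff_le_of_abs_sub_eval_le (by norm_num) (by norm_num) hRdeg fun l hl => ?_
    have hSl : #(S (i + l)) = 2 ^ l * 2 ^ i := by rw [hS _ (by lia), pow_add, mul_comm]
    have hinv : (1 / 2 : ℝ) ^ l = ((2 ^ l : ℕ) : ℝ)⁻¹ := by simp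
    rw [hinv]
    exact hR (2 ^ l) (pow_dvd_pow 2 hl) _ hSl
  have hSJ : S J = univ := by rw [← card_eq_iff_eq_univ, hS J le_rfl, hα]
  rw [← permAverage_univ f v, ← hSJ, Nat.add_sub_cancel]
  refine abs_le_mul_of_abs_qDiff_le (by norm_num) (by norm_num) (by positivity)
    (a := fun j => permAverage f v (S j)) (fun l hl => ?_)
    (fun i hi => (hrec i hi).trans (le_add_of_nonneg_left hM)) le_rfl
  exact (hinit l (by lia) _ (hS l (by lia))).trans (le_add_of_nonneg_right (by positivity))

end DyadicMeans

section Extrapolation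

variable {E : Type*} [AddCommGroup E] [Module ℝ E] {p : Seminorm ℝ E} {f : E → ℝ} {m : ℕ} {ω B : ℝ}

lemma diffBound.abs_le_add_of_seminorm_le (hm : 0 < m) (hf : diffBound m (p.closedBall 0 1) f ω)
    (hB : 0 ≤ B) {s : ℝ} (hs : s ≤ 1) (h : ∀ x, p x ≤ s * (1 - 1 / m) → |f x| ≤ B) {x : E}
    (hx : p x ≤ s) : |f x| ≤ ω + 2 ^ m * B := by
  have hm0 : (0 : ℝ) < m := Nat.cast_pos.2 hm
  have hray (j : ℕ) : x + (j : ℝ) • (-(1 / (m : ℝ)) • x) = (1 - j / m : ℝ) • x := by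
    module
  have hp (j : ℕ) (hj : j ≤ m) : p ((1 - j / m : ℝ) • x) = p x * (1 - j / m) := by
    have : (j : ℝ) / m ≤ 1 := div_le_one_of_le₀ (by exact_mod_cast hj) hm0.le
    rw [map_smul_eq_mul, Real.norm_of_nonneg (sub_nonneg.2 this), mul_comm]
  have hpx := apply_nonneg p x
  refine hf.abs_le_add (h := -(1 / (m : ℝ)) • x) (fun j hj => ?_) hB fun j hj => ?_
  · rw [hray, Seminorm.mem_closedBall_zero, hp j hj]
    exact (mul_le_of_le_one_right hpx (sub_le_self _ (by positivity))).trans (hx.trans hs)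
  · obtain ⟨hj1, hjm⟩ := mem_Icc.1 hj
    rw [hray]
    refine h _ ?_
    rw [hp j hjm]
    have hj1 : (1 : ℝ) / m ≤ j / m := by gcongr; exact_mod_cast hj1
    have hjm : (j : ℝ) / m ≤ 1 := div_le_one_of_le₀ (by exact_mod_cast hjm) hm0.le
    have := sub_nonneg.2 hjm
    have := hpx.trans hx
    gcongr

lemma diffBound.abs_le_of_seminorm_le_pow (hm : 0 < m) (hf : diffBound m (p.closedBall 0 1) f ω)
    (hB : 0 ≤ B) (q : ℕ) (h : ∀ x, p x ≤ (1 - 1 / m) ^ q → |f x| ≤ B) {x : E} (hx : p x ≤ 1) :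
    |f x| ≤ (1 + 2 ^ m) ^ q * (ω + B) := by
  have hω : 0 ≤ ω := hf.nonneg (x := 0) (by simp)
  have hm1 : (1 : ℝ) / m ≤ 1 := div_le_one_of_le₀ (by exact_mod_cast hm) (Nat.cast_nonneg m)
  induction q generalizing B with
  | zero => simpa using (h x (by simpa using hx)).trans (le_add_of_nonneg_left hω)
  | succ q ih =>
    calc |f x|
      _ ≤ (1 + 2 ^ m) ^ q * (ω + (ω + 2 ^ m * B)) :=
        ih (by positivity) fun z => hf.abs_le_add_of_seminorm_le hm hB
          (pow_le_one₀ (sub_nonneg.2 hm1) (sub_le_self _ (by positivity))) fun y hy => h y hy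
      _ ≤ (1 + 2 ^ m) ^ q * ((1 + 2 ^ m) * (ω + B)) := by
        gcongr
        have : (1 : ℝ) ≤ 2 ^ m := one_le_pow₀ one_le_two
        nlinarith
      _ = (1 + 2 ^ m) ^ (q + 1) * (ω + B) := by ring

end Extrapolation

section SparseCombinations

variable {E : Type*} [AddCommGroup E] [Module ℝ E] {p : Seminorm ℝ E} {f : E → ℝ} {m : ℕ}
  {ω τ B : ℝ} {ι : Type*} {y : ι → E}

lemma diffBound.abs_apply_sub_le (hm : 0 < m) (hf : diffBound m (p.closedBall 0 1) f ω)
    (hτ : 0 ≤ τ) (hy : ∀ i, p (y i) ≤ τ) {r : ℕ} (hr : m * r * τ ≤ 1) (hB : 0 ≤ B)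
    (h : ∀ a : ι →₀ ℕ, a.degree ≤ m * r → |f (Finsupp.linearCombination ℕ y a)| ≤ B)
    {a b : ι →₀ ℕ} (hab : a.degree + b.degree ≤ r) :
    |f (Finsupp.linearCombination ℕ y a - Finsupp.linearCombination ℕ y b)| ≤ ω + 2 ^ m * B := by
  set Λ := Finsupp.linearCombination ℕ y
  have hp {c : ι →₀ ℕ} {d : ℕ} (hc : c.degree ≤ d) : p (Λ c) ≤ d * τ :=
    (seminorm_linearCombination_le hy c).trans (by gcongr)
  have hrm : r ≤ m * r := Nat.le_mul_of_pos_left r hm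
  have hline (j : ℕ) : Λ a - Λ b + ((j + 1 : ℕ) : ℝ) • Λ b = Λ (a + j • b) := by
    rw [map_add, map_nsmul, Nat.cast_smul_eq_nsmul, succ_nsmul]
    abel
  have hdeg (j : ℕ) (hj : j < m) : (a + j • b).degree ≤ m * r := by
    rw [map_add, map_nsmul, smul_eq_mul]
    nlinarith
  refine hf.abs_le_add (h := Λ b) (fun j hj => ?_) hB fun j hj => ?_
  · rw [Seminorm.mem_closedBall_zero]
    refine le_trans ?_ hr
    obtain _ | j := j
    · rw [Nat.cast_zero, zero_smul, add_zero]
      calc p (Λ a - Λ b)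
        _ ≤ a.degree * τ + b.degree * τ :=
          (map_sub_le_add p _ _).trans (add_le_add (hp le_rfl) (hp le_rfl))
        _ = (a.degree + b.degree : ℕ) * τ := by push_cast; ring
        _ ≤ (m * r : ℕ) * τ := by gcongr; exact hab.trans hrm
        _ = m * r * τ := by push_cast; rfl
    · rw [hline]
      exact_mod_cast hp (hdeg j hj)
  · obtain ⟨j, rfl⟩ := Nat.exists_eq_add_one.2 (mem_Icc.1 hj).1
    rw [hline]
    exact h _ (hdeg j (mem_Icc.1 hj).2)

variable {α : Type*} {v : α → E}

lemma exists_mean_eq_linearCombination_sub {A : Finset α} {r d : ℕ} (hA : A.Nonempty)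
    (hr : r = d * #A)
    (hv : ∀ l ∈ A, ∃ a b : ι →₀ ℕ, a.degree + b.degree ≤ 1 ∧
      v l = r • (Finsupp.linearCombination ℕ y a - Finsupp.linearCombination ℕ y b)) :
    ∃ a b : ι →₀ ℕ, a.degree + b.degree ≤ r ∧ (#A : ℝ)⁻¹ • ∑ l ∈ A, v l =
      Finsupp.linearCombination ℕ y a - Finsupp.linearCombination ℕ y b := by
  choose! a b hdeg hv using hv
  refine ⟨d • ∑ l ∈ A, a l, d • ∑ l ∈ A, b l, ?_, ?_⟩
  · calc (d • ∑ l ∈ A, a l).degree + (d • ∑ l ∈ A, b l).degree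
      _ = d * ∑ l ∈ A, ((a l).degree + (b l).degree) := by
        simp only [map_nsmul, map_sum, smul_eq_mul, sum_add_distrib, mul_add]
      _ ≤ d * ∑ _l ∈ A, 1 := by gcongr with l hl; exact hdeg l hl
      _ = r := by rw [hr, card_eq_sum_ones]
  · have hA : (#A : ℝ) ≠ 0 := Nat.cast_ne_zero.2 (card_ne_zero.2 hA)
    have hscale : (#A : ℝ)⁻¹ * r = d := by rw [hr]; push_cast; field_simp
    rw [sum_congr rfl hv, ← smul_sum, ← Nat.cast_smul_eq_nsmul ℝ, smul_smul, hscale,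
      sum_sub_distrib, map_nsmul, map_nsmul, map_sum, map_sum, Nat.cast_smul_eq_nsmul, smul_sub]

lemma diffBound.abs_apply_mean_le_of_atoms [Fintype α] (hm : 0 < m)
    (hf : diffBound m (p.closedBall 0 1) f ω) (hτ : 0 ≤ τ) (hτm : (m * 2 ^ m + m ^ 2) * τ ≤ 1)
    (hy : ∀ i, p (y i) ≤ τ) (hB : 0 ≤ B)
    (hlattice : ∀ a : ι →₀ ℕ, a.degree ≤ m * 2 ^ m → |f (Finsupp.linearCombination ℕ y a)| ≤ B)
    {M : ℝ} (hfM : ∀ x, p x ≤ 1 → |f x| ≤ M) {J : ℕ} (hmJ : m ≤ J)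
    (hα : Fintype.card α = 2 ^ J) (hv : ∀ l, p (v l) ≤ 2 ^ m * τ) {bad : Finset α}
    (hatom : ∀ l ∉ bad, ∃ a b : ι →₀ ℕ, a.degree + b.degree ≤ 1 ∧
      v l = (2 ^ m : ℕ) • (Finsupp.linearCombination ℕ y a - Finsupp.linearCombination ℕ y b)) :
    |f ((Fintype.card α : ℝ)⁻¹ • ∑ l, v l)| ≤ qDiffInvConst (1 / 2) (m - 1) *
      (ω + 2 ^ m * B + 2 ^ m * (M * #bad / 2 ^ J) + 2 ^ m * (3 ^ 2 ^ m * ω)) * (J + 1) := by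
  classical
  have hω : 0 ≤ ω := hf.nonneg (x := 0) (by simp)
  have hM : 0 ≤ M := (abs_nonneg _).trans (hfM 0 (by simp))
  have hm1 : (1 : ℝ) ≤ m := by exact_mod_cast hm
  have hτm' : (2 ^ m + m ^ 2) * τ ≤ 1 := hτm.trans' <| by
    gcongr
    exact le_mul_of_one_le_left (by positivity) hm1
  have hmean (A : Finset α) (hA : A.Nonempty) : p ((#A : ℝ)⁻¹ • ∑ l ∈ A, v l) ≤ 1 :=
    (seminorm_mean_le hA fun l _ => hv l).trans <| hτm'.trans' <| by
      gcongr
      exact le_add_of_nonneg_right (by positivity)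
  refine hf.abs_apply_mean_le hm hτ hτm' hmJ hα hv (by positivity) fun j hj A hA => ?_
  refine (abs_permAverage_le (bad := bad) (C := ω + 2 ^ m * B) hM (by positivity)
    (fun S hS hdisj => ?_) fun S hS => ?_).trans ?_
  · rw [hA] at hS
    obtain ⟨a, b, hab, hmean⟩ := exists_mean_eq_linearCombination_sub (A := S) (r := 2 ^ m)
      (d := 2 ^ (m - j)) (card_pos.1 (by rw [hS]; positivity))
      (by rw [hS, ← pow_add, Nat.sub_add_cancel hj.le])
      fun l hl => hatom l (disjoint_left.1 hdisj hl)
    rw [hmean]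
    refine hf.abs_apply_sub_le hm hτ hy (hτm.trans' ?_) hB hlattice hab
    push_cast
    gcongr
    exact le_add_of_nonneg_right (by positivity)
  · exact hfM _ (hmean S (card_pos.1 (by rw [hS, hA]; positivity)))
  · rw [hA, hα]
    push_cast
    gcongr
    exact one_le_two

end SparseCombinations

section L1Ball

/-- The `ℓ₁` norm on `ι → ℝ`, whose topology and norm in Mathlib are those of the sup norm. -/
noncomputable def l1Seminorm (ι : Type*) [Fintype ι] : Seminorm ℝ (ι → ℝ) :=
  Seminorm.of (fun x => ∑ i, |x i|)
    (fun x y => by rw [← sum_add_distrib]; exact sum_le_sum fun i _ => abs_add_le (x i) (y i))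
    fun c x => by simp only [Pi.smul_apply, smul_eq_mul, abs_mul, mul_sum, Real.norm_eq_abs]

variable {ι : Type*} [Fintype ι]

lemma l1Seminorm_apply (x : ι → ℝ) : l1Seminorm ι x = ∑ i, |x i| := rfl

lemma l1Ball_eq_closedBall (n : ℕ) : l1Ball n = (l1Seminorm (Fin n)).closedBall 0 1 := by
  ext x
  rw [Seminorm.mem_closedBall_zero, l1Seminorm_apply]
  rfl

lemma continuous_l1Seminorm : Continuous (l1Seminorm ι) := by
  rw [funext l1Seminorm_apply]
  fun_prop

lemma norm_le_l1Seminorm (x : ι → ℝ) : ‖x‖ ≤ l1Seminorm ι x := by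
  rw [pi_norm_le_iff_of_nonneg (apply_nonneg _ x), l1Seminorm_apply]
  exact fun i => single_le_sum (f := fun i => |x i|) (fun i _ => abs_nonneg _) (mem_univ i)

lemma isCompact_closedBall_l1Seminorm (r : ℝ) : IsCompact ((l1Seminorm ι).closedBall 0 r) := by
  refine Metric.isCompact_of_isClosed_isBounded ?_ <|
    (Metric.isBounded_closedBall (x := (0 : ι → ℝ)) (r := r)).subset fun x hx => ?_
  · rw [Seminorm.closedBall_zero_eq]
    exact isClosed_le continuous_l1Seminorm continuous_const
  · rw [mem_closedBall_zero_iff]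
    exact (norm_le_l1Seminorm x).trans ((l1Seminorm ι).mem_closedBall_zero.1 hx)

lemma single_eq_linearCombination_sub {κ : Type*} [DecidableEq κ] {s τ : ℝ}
    (hs : s = τ ∨ s = -τ) (i : κ) :
    ∃ a b : κ →₀ ℕ, a.degree + b.degree ≤ 1 ∧ (Pi.single i s : κ → ℝ) =
      Finsupp.linearCombination ℕ (fun i => (Pi.single i τ : κ → ℝ)) a -
        Finsupp.linearCombination ℕ (fun i => (Pi.single i τ : κ → ℝ)) b := by
  rcases hs with rfl | rfl
  · exact ⟨Finsupp.single i 1, 0, by simp, by simp⟩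
  · exact ⟨0, Finsupp.single i 1, by simp, by simp [Pi.single_neg]⟩

lemma sum_add_one_le_of_mul_le_abs {τ N : ℝ} (hτ : 0 < τ) (hN : 2 * Fintype.card ι ≤ N)
    {x : ι → ℝ} (hx : l1Seminorm ι x ≤ τ / 2) {k : ι → ℕ} (hk : ∀ i, k i * τ ≤ |N * x i|) :
    ∑ i, (k i + 1 : ℝ) ≤ N := by
  have hN0 : 0 ≤ N := hN.trans' (by positivity)
  have hsum : (∑ i, (k i : ℝ)) * τ ≤ N / 2 * τ := by
    calc (∑ i, (k i : ℝ)) * τ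
      _ ≤ ∑ i, |N * x i| := by rw [sum_mul]; exact sum_le_sum fun i _ => hk i
      _ = N * l1Seminorm ι x := by
        simp only [abs_mul, abs_of_nonneg hN0, l1Seminorm_apply, mul_sum]
      _ ≤ N * (τ / 2) := by gcongr
      _ = N / 2 * τ := by ring
  have := le_of_mul_le_mul_right hsum hτ
  rw [sum_add_distrib, sum_const, card_univ, nsmul_eq_mul, mul_one]
  linarith

variable [DecidableEq ι]

lemma l1Seminorm_single (i : ι) (t : ℝ) : l1Seminorm ι (Pi.single i t) = |t| := by
  rw [l1Seminorm_apply, sum_eq_single i (fun j _ hj => by rw [Pi.single_eq_of_ne hj, abs_zero])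
    fun h => absurd (mem_univ i) h, Pi.single_eq_same]

lemma linearCombination_single {κ : Type*} [DecidableEq κ] (τ : ℝ) (a : κ →₀ ℕ) :
    Finsupp.linearCombination ℕ (fun i => (Pi.single i τ : κ → ℝ)) a = fun i => τ * a i := by
  funext j
  rw [Finsupp.linearCombination_apply, Finsupp.sum_apply', Finsupp.sum]
  simp +contextual [Pi.single_apply, mul_comm]

lemma exists_floor_decomposition {τ : ℝ} (hτ : 0 < τ) (t : ℝ) : ∃ (k : ℕ) (s r : ℝ),
    k * τ ≤ |t| ∧ (s = τ ∨ s = -τ) ∧ |r| ≤ τ ∧ k * s + r = t := by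
  wlog ht : 0 ≤ t generalizing t
  · obtain ⟨k, s, r, hk, hs, hr, h⟩ := this (-t) (by linarith)
    refine ⟨k, -s, -r, by rwa [abs_neg] at hk, ?_, by rwa [abs_neg], by linarith⟩
    rcases hs with rfl | rfl <;> simp
  · have hfloor := Nat.floor_le (div_nonneg ht hτ.le)
    have hlt := Nat.lt_floor_add_one (t / τ)
    rw [le_div_iff₀ hτ] at hfloor
    rw [div_lt_iff₀ hτ] at hlt
    refine ⟨⌊t / τ⌋₊, τ, t - ⌊t / τ⌋₊ * τ, ?_, Or.inl rfl, ?_, by ring⟩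
    · rwa [abs_of_nonneg ht]
    · rw [abs_of_nonneg] <;> linarith

/-- Rounding `card α • x` coordinatewise leaves one remainder per coordinate, which are the only
`bad` vectors. -/
lemma exists_mean_eq_of_l1Seminorm_le {α : Type*} [Fintype α] [Nonempty α] {τ : ℝ}
    (hτ : 0 < τ) (hα : 2 * Fintype.card ι ≤ Fintype.card α) {x : ι → ℝ}
    (hx : l1Seminorm ι x ≤ τ / 2) :
    ∃ (v : α → ι → ℝ) (bad : Finset α), #bad ≤ Fintype.card ι ∧ (∀ l, l1Seminorm ι (v l) ≤ τ) ∧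
      (∀ l ∉ bad, ∃ a b : ι →₀ ℕ, a.degree + b.degree ≤ 1 ∧
        v l = Finsupp.linearCombination ℕ (fun i => (Pi.single i τ : ι → ℝ)) a -
          Finsupp.linearCombination ℕ (fun i => (Pi.single i τ : ι → ℝ)) b) ∧
      (Fintype.card α : ℝ)⁻¹ • ∑ l, v l = x := by
  classical
  choose k s r hk hs hr hsum using
    fun i => exists_floor_decomposition hτ (Fintype.card α * x i)
  have hcard : Fintype.card (Σ i, Option (Fin (k i))) ≤ Fintype.card α := by
    have := sum_add_one_le_of_mul_le_abs hτ (by exact_mod_cast hα) hx hk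
    simpa only [Fintype.card_sigma, Fintype.card_option, Fintype.card_fin] using
      (by exact_mod_cast this : ∑ i, (k i + 1) ≤ Fintype.card α)
  obtain ⟨e⟩ := Function.Embedding.nonempty_of_card_le hcard
  let w : (Σ i, Option (Fin (k i))) → ι → ℝ :=
    fun q => Pi.single q.1 (q.2.elim (r q.1) fun _ => s q.1)
  have hzero {l : α} (hl : ¬∃ q, e q = l) : Function.extend e w 0 l = 0 :=
    Function.extend_apply' _ _ _ hl
  have hw (i : ι) : ∑ q, w ⟨i, q⟩ = Pi.single i (Fintype.card α * x i) := by
    calc ∑ q, w ⟨i, q⟩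
      _ = Pi.single i (r i) + ∑ _ : Fin (k i), Pi.single i (s i) := Fintype.sum_option _
      _ = Pi.single i (Fintype.card α * x i) := by
        rw [sum_const, card_univ, Fintype.card_fin, ← Pi.single_smul, ← Pi.single_add,
          nsmul_eq_mul, add_comm, hsum]
  refine ⟨Function.extend e w 0, univ.image fun i => e ⟨i, none⟩, card_image_le, fun l => ?_,
    fun l hl => ?_, ?_⟩
  · by_cases hl : ∃ q, e q = l
    · obtain ⟨⟨i, _ | _⟩, rfl⟩ := hl <;> rw [e.injective.extend_apply, l1Seminorm_single]
      · exact hr i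
      · rcases hs i with h | h <;> simp [h, abs_of_pos hτ]
    · rw [hzero hl, map_zero]
      exact hτ.le
  · by_cases hl' : ∃ q, e q = l
    · obtain ⟨⟨i, _ | _⟩, rfl⟩ := hl'
      · exact absurd (mem_image_of_mem _ (mem_univ i)) hl
      · rw [e.injective.extend_apply]
        exact single_eq_linearCombination_sub (hs i) i
    · exact ⟨0, 0, by simp, by rw [hzero hl', map_zero, sub_zero]⟩
  · rw [← Fintype.sum_of_injective e e.injective w _ (fun l hl => hzero hl)
      fun q => (e.injective.extend_apply w 0 q).symm, Fintype.sum_sigma,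
      sum_congr rfl fun i _ => hw i, univ_sum_single fun i => Fintype.card α * x i]
    exact inv_smul_smul₀ (Nat.cast_ne_zero.2 Fintype.card_ne_zero) x

end L1Ball

section UpperBound

lemma exists_polynomial_eval_eq_eval_mul {ι R : Type*} [CommSemiring R]
    (Q : MvPolynomial ι R) (c : R) : ∃ P : MvPolynomial ι R, P.totalDegree ≤ Q.totalDegree ∧
      ∀ x, MvPolynomial.eval x P = MvPolynomial.eval (fun i => c * x i) Q := by
  refine ⟨∑ d ∈ Q.support, MvPolynomial.monomial d (Q.coeff d * c ^ d.degree),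
    MvPolynomial.totalDegree_finsetSum_le fun d hd =>
      (MvPolynomial.totalDegree_monomial_le _ _).trans (MvPolynomial.le_totalDegree hd),
    fun x => ?_⟩
  rw [map_sum, MvPolynomial.eval_eq]
  refine sum_congr rfl fun d _ => ?_
  simp_rw [MvPolynomial.eval_monomial, mul_pow, prod_mul_distrib, prod_pow_eq_pow_sum, mul_assoc]
  rfl

lemma abs_le_two_mul_of_forall_abs_le_add_half {X : Type*} {S : Set X} {g : X → ℝ} {B : ℝ}
    (hg : ∃ M, ∀ x ∈ S, |g x| ≤ M)
    (h : ∀ M, (∀ x ∈ S, |g x| ≤ M) → ∀ x ∈ S, |g x| ≤ B + M / 2) {x : X} (hx : x ∈ S) :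
    |g x| ≤ 2 * B := by
  obtain ⟨M, hM⟩ := hg
  have hbdd : BddAbove ((fun x => |g x|) '' S) := ⟨M, Set.forall_mem_image.2 hM⟩
  have hle (y : X) (hy : y ∈ S) : |g y| ≤ sSup ((fun x => |g x|) '' S) :=
    le_csSup hbdd (Set.mem_image_of_mem _ hy)
  have hsup : sSup ((fun x => |g x|) '' S) ≤ B + sSup ((fun x => |g x|) '' S) / 2 :=
    csSup_le (Set.Nonempty.image _ ⟨x, hx⟩) (Set.forall_mem_image.2 (h _ hle))
  linarith [hle x hx]

lemma exists_ge_mul_le_two_pow {D : ℝ} (hD : 0 ≤ D) (N : ℕ) : ∃ a ≥ N, D * a ≤ 2 ^ a := by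
  have hlim := tendsto_pow_const_div_const_pow_of_one_lt 1 (one_lt_two (α := ℝ))
  obtain ⟨a, ha, hN⟩ := ((hlim.eventually_le_const (show 0 < 1 / (D + 1) by positivity)).and
    (Filter.eventually_ge_atTop N)).exists
  refine ⟨a, hN, ?_⟩
  rw [pow_one, div_le_div_iff₀ (by positivity) (by positivity)] at ha
  linarith [(Nat.cast_nonneg a : (0 : ℝ) ≤ a)]

lemma exists_le_two_pow_le_two_mul {n : ℕ} (hn : 1 ≤ n) :
    ∃ p : ℕ, 1 ≤ p ∧ n ≤ 2 ^ p ∧ 2 ^ p ≤ 2 * n := by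
  refine ⟨Nat.log 2 n + 1, by lia, (Nat.lt_pow_succ_log_self one_lt_two n).le, ?_⟩
  rw [pow_succ']
  exact Nat.mul_le_mul_left 2 (Nat.pow_log_le_self 2 (by lia))

lemma exists_exponent_le_log (m : ℕ) {D : ℝ} (hD : 0 ≤ D) : ∃ c : ℝ, ∀ n : ℕ, 1 ≤ n →
    ∃ J : ℕ, m ≤ J ∧ D * n * (J + 1) ≤ 2 ^ J ∧ (J + 1 : ℝ) ≤ c * Real.log (n + 1) := by
  obtain ⟨a, hma, haD⟩ :=
    exists_ge_mul_le_two_pow (show 0 ≤ 8 * D by positivity) (m + 2)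
  have : 0 < Real.log 2 := Real.log_pos one_lt_two
  refine ⟨4 * a / Real.log 2, fun n hn => ?_⟩
  obtain ⟨p, hp1, hnp, hpn⟩ := exists_le_two_pow_le_two_mul hn
  have hnp : (n : ℝ) ≤ 2 ^ p := by exact_mod_cast hnp
  have hpn : (2 : ℝ) ^ p ≤ 2 * n := by exact_mod_cast hpn
  have hJ : ((a * p : ℕ) + 1 : ℝ) ≤ 2 * a * p := by
    exact_mod_cast (by nlinarith : a * p + 1 ≤ 2 * a * p)
  refine ⟨a * p, by nlinarith, ?_, hJ.trans ?_⟩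
  · obtain ⟨b, rfl⟩ := Nat.exists_eq_add_of_le' (le_of_add_le_right hma)
    have hb : D * (2 * (b + 2 : ℕ)) ≤ 2 ^ b := by rw [pow_add] at haD; linarith
    calc D * n * ((((b + 2) * p : ℕ) : ℝ) + 1)
      _ ≤ D * 2 ^ p * (2 * (b + 2 : ℕ) * 2 ^ p) := by
        gcongr
        refine hJ.trans ?_
        gcongr
        exact_mod_cast Nat.lt_two_pow_self.le
      _ = D * (2 * (b + 2 : ℕ)) * 2 ^ (2 * p) := by ring
      _ ≤ 2 ^ (b * p) * 2 ^ (2 * p) := by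
        gcongr
        exact hb.trans (pow_le_pow_right₀ one_le_two (Nat.le_mul_of_pos_right b hp1))
      _ = 2 ^ ((b + 2) * p) := by rw [← pow_add, ← add_mul]
  · have hlog : p * Real.log 2 ≤ 2 * Real.log (n + 1) := by
      rw [← Real.log_pow, ← Nat.cast_two, ← Real.log_pow]
      refine Real.log_le_log (by positivity) ?_
      push_cast
      nlinarith [sq_nonneg (n : ℝ)]
    calc (2 * a * p : ℝ)
      _ = 2 * a / Real.log 2 * (p * Real.log 2) := by field_simp
      _ ≤ 2 * a / Real.log 2 * (2 * Real.log (n + 1)) := by gcongr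
      _ = 4 * a / Real.log 2 * Real.log (n + 1) := by ring

variable {ι : Type*} [Fintype ι] {f : (ι → ℝ) → ℝ} {m : ℕ} {ω τ B M : ℝ}

lemma diffBound.abs_le_of_l1Seminorm_le (hm : 0 < m)
    (hf : diffBound m ((l1Seminorm ι).closedBall 0 1) f ω) (hτ : 0 < τ)
    (hτm : (m * 2 ^ m + m ^ 2) * τ ≤ 1) (hB : 0 ≤ B)
    (hlattice : ∀ a : ι →₀ ℕ, a.degree ≤ m * 2 ^ m → |f fun i => τ * a i| ≤ B)
    (hfM : ∀ x, l1Seminorm ι x ≤ 1 → |f x| ≤ M) {J : ℕ} (hmJ : m ≤ J)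
    (hJ : 2 * Fintype.card ι ≤ 2 ^ J) {x : ι → ℝ} (hx : l1Seminorm ι x ≤ 2 ^ m * τ / 2) :
    |f x| ≤ qDiffInvConst (1 / 2) (m - 1) * (ω + 2 ^ m * B +
      2 ^ m * (M * Fintype.card ι / 2 ^ J) + 2 ^ m * (3 ^ 2 ^ m * ω)) * (J + 1) := by
  classical
  have hM : 0 ≤ M := (abs_nonneg _).trans (hfM 0 (by simp))
  have h2m (z : ι → ℝ) : l1Seminorm ι ((2 ^ m : ℕ) • z) = 2 ^ m * l1Seminorm ι z := by
    rw [← Nat.cast_smul_eq_nsmul ℝ, map_smul_eq_mul]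
    simp
  have hx' : l1Seminorm ι (((2 : ℝ) ^ m)⁻¹ • x) ≤ τ / 2 := by
    rw [map_smul_eq_mul, norm_inv, norm_pow, Real.norm_two, inv_mul_le_iff₀ (by positivity)]
    linarith
  obtain ⟨v, bad, hbad, hv, hatom, hmean⟩ := exists_mean_eq_of_l1Seminorm_le
    (α := Fin (2 ^ J)) hτ (by rwa [Fintype.card_fin]) hx'
  have hmean' : (Fintype.card (Fin (2 ^ J)) : ℝ)⁻¹ • ∑ l, (2 ^ m : ℕ) • v l = x := by
    rw [← smul_sum, smul_comm, hmean, ← Nat.cast_smul_eq_nsmul ℝ, Nat.cast_pow, Nat.cast_ofNat]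
    exact smul_inv_smul₀ (by positivity) x
  have hqc : 0 ≤ qDiffInvConst (1 / 2) (m - 1) :=
    zero_le_one.trans (one_le_qDiffInvConst (by norm_num) (by norm_num) _)
  rw [← hmean']
  refine (hf.abs_apply_mean_le_of_atoms (M := M) (bad := bad) (τ := τ)
    (y := fun i => Pi.single i τ) hm hτ.le hτm (fun i => ?_) hB (fun a ha => ?_) hfM hmJ
    (Fintype.card_fin _) (fun l => ?_) fun l hl => ?_).trans ?_
  · rw [l1Seminorm_single, abs_of_pos hτ]
  · rw [linearCombination_single]
    exact hlattice a ha
  · rw [h2m]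
    gcongr
    exact hv l
  · obtain ⟨a, b, hab, h⟩ := hatom l hl
    exact ⟨a, b, hab, by rw [h]⟩
  · gcongr

lemma diffBound.exists_polynomial_lattice (hm : 0 < m)
    (hf : diffBound m ((l1Seminorm ι).closedBall 0 1) f ω) (hτ : 0 < τ) {L : ℕ}
    (hτL : (L + m ^ 2) * τ ≤ 1) : ∃ P : MvPolynomial ι ℝ, P.totalDegree < m ∧
      ∀ a : ι →₀ ℕ, a.degree ≤ L →
        |f (fun i => τ * a i) - MvPolynomial.eval (fun i => τ * a i) P| ≤ 3 ^ L * ω := by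
  classical
  obtain ⟨P, hP, hPe⟩ := exists_polynomial_eval_eq_eval_mul
    (newtonPoly f (fun i => Pi.single i τ) m L) τ⁻¹
  refine ⟨P, hP.trans_lt (totalDegree_newtonPoly_lt f _ hm L), fun a ha => ?_⟩
  have h := hf.abs_sub_eval_newtonPoly_le hτ.le
    (y := fun i => Pi.single i τ) (fun i => by rw [l1Seminorm_single, abs_of_pos hτ]) hτL ha
  rw [linearCombination_single] at h
  simpa only [hPe, inv_mul_cancel_left₀ hτ.ne'] using h

lemma diffBound.exists_abs_le_of_lattice {m : ℕ} (hm : 0 < m) {τ : ℝ} (hτ : 0 < τ)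
    (hτm : (m * 2 ^ m + m ^ 2) * τ ≤ 1) : ∃ C D : ℝ, 0 ≤ C ∧ 0 ≤ D ∧
    ∀ {n J : ℕ} {f : (Fin n → ℝ) → ℝ} {ω : ℝ}, m ≤ J → D * n * (J + 1) ≤ 2 ^ J →
      diffBound m ((l1Seminorm (Fin n)).closedBall 0 1) f ω →
      (∃ M, ∀ x ∈ (l1Seminorm (Fin n)).closedBall 0 1, |f x| ≤ M) →
      (∀ a : Fin n →₀ ℕ, a.degree ≤ m * 2 ^ m → |f fun i => τ * a i| ≤ 3 ^ (m * 2 ^ m) * ω) →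
      ∀ x ∈ (l1Seminorm (Fin n)).closedBall 0 1, |f x| ≤ C * (J + 1) * ω := by
  obtain ⟨q, hq⟩ := exists_pow_lt_of_lt_one (show 0 < 2 ^ m * τ / 2 by positivity)
    (sub_lt_self 1 (show (0 : ℝ) < 1 / m by positivity))
  set A := qDiffInvConst (1 / 2) (m - 1)
  have hA : 0 ≤ A := zero_le_one.trans (one_le_qDiffInvConst (by norm_num) (by norm_num) _)
  set E : ℝ := (1 + 2 ^ m) ^ q
  set W : ℝ := 1 + 2 ^ m * 3 ^ (m * 2 ^ m) + 2 ^ m * 3 ^ 2 ^ m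
  refine ⟨2 * (E * (1 + A * W)), 2 + 2 * (E * A * 2 ^ m), by positivity, by positivity, ?_⟩
  intro n J f ω hmJ hJ hf hbdd hlattice x hx
  have hω : 0 ≤ ω := hf.nonneg (x := 0) (by simp)
  have hnJ : (0 : ℝ) ≤ n * J := by positivity
  have hEA : 0 ≤ E * A * 2 ^ m * n * (J + 1) := by positivity
  have hJ2 : 2 * n ≤ 2 ^ J := by exact_mod_cast (by linarith : (2 * n : ℝ) ≤ 2 ^ J)
  have hhalf : E * A * 2 ^ m * n * (J + 1) / 2 ^ J ≤ 1 / 2 := by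
    rw [div_le_iff₀ (by positivity)]
    linarith [(n.cast_nonneg : (0 : ℝ) ≤ n)]
  rw [show 2 * (E * (1 + A * W)) * (J + 1) * ω = 2 * (E * (1 + A * W) * (J + 1) * ω) by ring]
  refine abs_le_two_mul_of_forall_abs_le_add_half hbdd (fun M hM x hx => ?_) hx
  have hM0 : 0 ≤ M := (abs_nonneg _).trans (hM x hx)
  simp only [Seminorm.mem_closedBall_zero] at hM hx
  calc |f x|
    _ ≤ E * (ω + A * (ω + 2 ^ m * (3 ^ (m * 2 ^ m) * ω) + 2 ^ m * (M * n / 2 ^ J) +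
          2 ^ m * (3 ^ 2 ^ m * ω)) * (J + 1)) := by
      refine hf.abs_le_of_seminorm_le_pow hm (by positivity) q (fun y hy => ?_) hx
      simpa only [Fintype.card_fin] using hf.abs_le_of_l1Seminorm_le hm hτ hτm (by positivity)
        hlattice hM hmJ (by rwa [Fintype.card_fin]) (hy.trans hq.le)
    _ = E * ω + E * A * W * (J + 1) * ω + E * A * 2 ^ m * n * (J + 1) / 2 ^ J * M := by ring
    _ ≤ E * ω * (J + 1) + E * A * W * (J + 1) * ω + 1 / 2 * M :=
      add_le_add (add_le_add_left (le_mul_of_one_le_right (by positivity) (by simp)) _)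
        (mul_le_mul_of_nonneg_right hhalf hM0)
    _ = E * (1 + A * W) * (J + 1) * ω + M / 2 := by ring

lemma exists_abs_sub_polynomial_le_log {m : ℕ} (hm : 0 < m) : ∃ C : ℝ, ∀ n : ℕ, 1 ≤ n →
    ∀ f : (Fin n → ℝ) → ℝ, Bornology.IsBounded (f '' l1Ball n) → diffBound m (l1Ball n) f 1 →
      ∃ P : MvPolynomial (Fin n) ℝ, P.totalDegree < m ∧
        ∀ x ∈ l1Ball n, |f x - MvPolynomial.eval x P| ≤ C * Real.log (n + 1) := by
  obtain ⟨τ, hτ, hτm⟩ := exists_pos_mul_lt one_pos (m * 2 ^ m + m ^ 2 : ℝ)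
  obtain ⟨C, D, hC, hD, hbound⟩ := diffBound.exists_abs_le_of_lattice hm hτ hτm.le
  obtain ⟨c, hexp⟩ := exists_exponent_le_log m hD
  refine ⟨C * c, fun n hn f hbdd hf => ?_⟩
  obtain ⟨J, hmJ, hJ, hJlog⟩ := hexp n hn
  simp only [l1Ball_eq_closedBall] at hf hbdd ⊢
  obtain ⟨P, hP, hlattice⟩ := hf.exists_polynomial_lattice hm hτ (L := m * 2 ^ m)
    (by exact_mod_cast hτm.le)
  obtain ⟨M, hM⟩ := (hbdd.sub ((isCompact_closedBall_l1Seminorm 1).image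
    (MvPolynomial.continuous_eval P)).isBounded).exists_norm_le
  refine ⟨P, hP, fun x hx => ?_⟩
  calc |f x - MvPolynomial.eval x P|
    _ ≤ C * (J + 1) * 1 := hbound hmJ hJ (hf.sub_eval hP)
      ⟨M, fun y hy => hM _ (Set.sub_mem_sub (Set.mem_image_of_mem f hy)
        (Set.mem_image_of_mem (fun y => MvPolynomial.eval y P) hy))⟩ hlattice x hx
    _ ≤ C * c * Real.log (n + 1) := by
      rw [mul_one, mul_assoc]
      gcongr

end UpperBound

section Entropy

lemma abs_negMulLog_le_one {t : ℝ} (ht : |t| ≤ 1) : |Real.negMulLog t| ≤ 1 := by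
  rcases eq_or_ne t 0 with rfl | h0
  · simp
  · have := (Real.abs_log_mul_self_lt |t| (abs_pos.2 h0) ht).le
    rwa [Real.log_abs, abs_mul, abs_abs, ← abs_mul, mul_comm, ← abs_neg, ← neg_mul] at this

lemma sum_neg_one_pow_mul_choose_mul_add_mul {m : ℕ} (hm : 2 ≤ m) (x h : ℝ) :
    ∑ j ∈ range (m + 1), (-1 : ℝ) ^ (m - j) * (m.choose j : ℝ) * (x + j * h) = 0 := by
  have hdeg : (.C x + .X * .C h : Polynomial ℝ).natDegree < m :=
    lt_of_le_of_lt (b := 1) (by compute_degree) hm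
  have hzero := congrFun (Polynomial.fwdDiff_iter_eq_zero_of_degree_lt hdeg) 0
  rw [fwdDiff_iter_eq_sum] at hzero
  simpa [mul_comm h] using hzero

/-- Since `m ≥ 2`, the linear correction in
`negMulLog (s * t) = t * negMulLog s + s * negMulLog t` has vanishing `m`-th differences, which
makes the bound linear in `s`. -/
lemma diffBound_negMulLog {m : ℕ} (hm : 2 ≤ m) {s : ℝ} (hs : 0 ≤ s) :
    diffBound m (Metric.closedBall 0 s) Real.negMulLog (2 ^ m * s) := by
  intro x h hx
  simp only [smul_eq_mul, mem_closedBall_zero_iff, Real.norm_eq_abs] at hx ⊢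
  have hscale : ∀ j ∈ range (m + 1), Real.negMulLog (x + j * h) =
      (x + j * h) * (s⁻¹ * Real.negMulLog s) + s * Real.negMulLog ((x + j * h) / s) := by
    intro j hj
    have hle := hx j (mem_range_succ_iff.1 hj)
    have hmul : x + j * h = s * ((x + j * h) / s) :=
      (mul_div_cancel_of_imp' fun h0 => abs_nonpos_iff.1 (h0 ▸ hle)).symm
    nth_rewrite 1 [hmul]
    rw [Real.negMulLog_mul]
    ring
  have hsum : ∑ j ∈ range (m + 1),
      (-1 : ℝ) ^ (m - j) * (m.choose j : ℝ) * Real.negMulLog (x + j * h) =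
      ∑ j ∈ range (m + 1), (-1 : ℝ) ^ (m - j) * (m.choose j : ℝ) *
        (s * Real.negMulLog ((x + j * h) / s)) := by
    rw [sum_congr rfl fun j hj => by rw [hscale j hj, mul_add, ← mul_assoc], sum_add_distrib,
      ← sum_mul, sum_neg_one_pow_mul_choose_mul_add_mul hm, zero_mul, zero_add]
  rw [hsum]
  refine abs_sum_neg_one_pow_mul_choose_le subset_rfl hs fun j hj => ?_
  rw [abs_mul, abs_of_nonneg hs]
  refine mul_le_of_le_one_right hs (abs_negMulLog_le_one ?_)
  rw [abs_div, abs_of_nonneg hs]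
  exact div_le_one_of_le₀ (hx j (mem_range_succ_iff.1 hj)) hs

variable {ι : Type*} [Fintype ι]

/-- Shannon entropy `∑ i, -x i * log (x i)`. It is also used at vectors with negative entries,
where `Real.log (x i) = Real.log |x i|` makes it odd. -/
noncomputable def entropy (x : ι → ℝ) : ℝ := ∑ i, Real.negMulLog (x i)

lemma continuous_entropy : Continuous (entropy (ι := ι)) :=
  continuous_finsetSum _ fun i _ => Real.continuous_negMulLog.comp (continuous_apply i)

lemma diffBound_entropy {m : ℕ} (hm : 2 ≤ m) :
    diffBound m ((l1Seminorm ι).closedBall 0 1) entropy (2 ^ m * (m + 1)) := by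
  intro x h hx
  simp only [entropy, mul_sum]
  rw [sum_comm]
  let s : ι → ℝ := fun i => ∑ j ∈ range (m + 1), |x i + j * h i|
  have hs : ∑ i, s i ≤ m + 1 := by
    calc ∑ i, s i
      _ = ∑ j ∈ range (m + 1), l1Seminorm ι (x + (j : ℝ) • h) := sum_comm
      _ ≤ ∑ _j ∈ range (m + 1), (1 : ℝ) := sum_le_sum fun j hj =>
        (Seminorm.mem_closedBall_zero _).1 (hx j (mem_range_succ_iff.1 hj))
      _ = m + 1 := by simp
  have hcoord : ∀ i, |∑ j ∈ range (m + 1), (-1 : ℝ) ^ (m - j) * (m.choose j : ℝ) *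
      Real.negMulLog ((x + (j : ℝ) • h) i)| ≤ 2 ^ m * s i := fun i =>
    diffBound_negMulLog hm (sum_nonneg fun _ _ => abs_nonneg _) (x i) (h i) fun j hj => by
      rw [mem_closedBall_zero_iff, Real.norm_eq_abs]
      exact single_le_sum (f := fun j : ℕ => |x i + j * h i|) (fun _ _ => abs_nonneg _)
        (mem_range_succ_iff.2 hj)
  calc _ ≤ ∑ i, 2 ^ m * s i := (abs_sum_le_sum_abs _ _).trans (sum_le_sum fun i _ => hcoord i)
    _ ≤ 2 ^ m * (m + 1) := by rw [← mul_sum]; gcongr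

lemma entropy_uniform [DecidableEq ι] (K : Finset ι) :
    entropy (fun i => if i ∈ K then (#K : ℝ)⁻¹ else 0) = Real.log #K := by
  rcases K.eq_empty_or_nonempty with rfl | hK
  · simp [entropy]
  · have hK : (#K : ℝ) ≠ 0 := Nat.cast_ne_zero.2 hK.card_ne_zero
    simp only [entropy, apply_ite Real.negMulLog, Real.negMulLog_zero, sum_ite_mem, univ_inter,
      sum_const, nsmul_eq_mul]
    rw [Real.negMulLog, Real.log_inv]
    field_simp

lemma l1Seminorm_uniform_le [DecidableEq ι] (K : Finset ι) :
    l1Seminorm ι (fun i => if i ∈ K then (#K : ℝ)⁻¹ else 0) ≤ 1 := by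
  simp only [l1Seminorm_apply, apply_ite abs, abs_zero, sum_ite_mem, univ_inter, sum_const,
    nsmul_eq_mul, abs_inv, Nat.abs_cast]
  exact mul_inv_le_one

lemma exists_polynomial_abs_log_sub_le {P : MvPolynomial ι ℝ} {ε : ℝ}
    (hP : ∀ x ∈ (l1Seminorm ι).closedBall 0 1, |entropy x - MvPolynomial.eval x P| ≤ ε) :
    ∃ R : Polynomial ℝ, R.natDegree ≤ P.totalDegree ∧ ∀ k : ℕ, k ≠ 0 → k ≤ Fintype.card ι →
      |Real.log k - R.eval (k : ℝ)⁻¹| ≤ ε := by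
  classical
  obtain ⟨R, hRdeg, hR⟩ := exists_polynomial_expect_eval P 1
  refine ⟨R, hRdeg, fun k hk hkι => ?_⟩
  have hne : (powersetCard k (univ : Finset ι)).Nonempty := powersetCard_nonempty.2 hkι
  rw [← hR k hk hkι, ← expect_const hne (Real.log k)]
  refine abs_expect_sub_expect_le hne fun K hK => ?_
  rw [one_mul, ← (mem_powersetCard.1 hK).2, ← entropy_uniform]
  exact hP _ ((Seminorm.mem_closedBall_zero _).2 (l1Seminorm_uniform_le K))

lemma half_pow_le_prod_one_sub_pow {ρ : ℝ} (h0 : 0 ≤ ρ) (h1 : ρ ≤ 1 / 2) (k : ℕ) :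
    (1 / 2) ^ k ≤ ∏ t ∈ range k, (1 - ρ ^ (t + 1)) := by
  rw [← card_range k, ← prod_const, card_range]
  refine prod_le_prod (fun _ _ => by positivity) fun t _ => ?_
  have : ρ ^ (t + 1) ≤ ρ := pow_le_of_le_one h0 (h1.trans (by norm_num)) t.succ_ne_zero
  linarith

lemma half_pow_mul_log_le {P : MvPolynomial ι ℝ} {k N : ℕ} (hPdeg : P.totalDegree < k + 1)
    (hN : 2 ≤ N) (hNι : N ^ (k + 1) ≤ Fintype.card ι) {ε : ℝ}
    (hP : ∀ x ∈ (l1Seminorm ι).closedBall 0 1, |entropy x - MvPolynomial.eval x P| ≤ ε) :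
    (1 / 2) ^ k * Real.log N ≤ 2 ^ (k + 1) * ε := by
  obtain ⟨R, hRdeg, hR⟩ := exists_polynomial_abs_log_sub_le hP
  have : (2 : ℝ) ≤ N := by exact_mod_cast hN
  have : 0 ≤ Real.log N := Real.log_natCast_nonneg N
  have hρ0 : 0 ≤ (N : ℝ)⁻¹ := by positivity
  have hρ : (N : ℝ)⁻¹ ≤ 1 / 2 := by rw [inv_le_comm₀] <;> norm_num <;> linarith
  have happrox : ∀ l ≤ k + 1,
      |(Real.log (N : ℝ) • fun l : ℕ => (l : ℝ)) (0 + l) - R.eval ((N : ℝ)⁻¹ ^ l)| ≤ ε := by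
    intro l hl
    rw [Pi.smul_apply, smul_eq_mul, zero_add]
    have := hR (N ^ l) (by positivity) ((Nat.pow_le_pow_right (by lia) hl).trans hNι)
    rwa [Nat.cast_pow, Real.log_pow, mul_comm, ← inv_pow] at this
  calc (1 / 2) ^ k * Real.log N
    _ ≤ (∏ t ∈ range k, (1 - (N : ℝ)⁻¹ ^ (t + 1))) * Real.log N := by
      gcongr
      exact half_pow_le_prod_one_sub_pow hρ0 hρ k
    _ = qDiff (N : ℝ)⁻¹ (k + 1) (Real.log (N : ℝ) • fun l : ℕ => (l : ℝ)) 0 := by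
      rw [map_smul, Pi.smul_apply, qDiff_cast, smul_eq_mul, mul_comm]
    _ ≤ 2 ^ (k + 1) * ε := (le_abs_self _).trans <|
      abs_qDiff_le_of_abs_sub_eval_le hρ0 (hρ.trans (by norm_num)) (hRdeg.trans_lt hPdeg) happrox

end Entropy

section WhitneyConstant

/-- `LeWhitneyConst m K δ` says that the Whitney constant `w_m(K)`, the supremum of the distances
to the polynomials of degree `< m` over all continuous `f` with `ω_m(f; K) ≤ 1`, is at least `δ`
and that a single `f` witnesses this. -/
def LeWhitneyConst {σ : Type*} (m : ℕ) (K : Set (σ → ℝ)) (δ : ℝ) : Prop :=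
  ∃ f : (σ → ℝ) → ℝ, ContinuousOn f K ∧ diffBound m K f 1 ∧
    ∀ P : MvPolynomial σ ℝ, P.totalDegree < m → ∃ x ∈ K, δ ≤ |f x - MvPolynomial.eval x P|

variable {σ : Type*} {m : ℕ} {K : Set (σ → ℝ)} {f : (σ → ℝ) → ℝ} {δ ω : ℝ}

lemma LeWhitneyConst.mono {δ' : ℝ} (h : LeWhitneyConst m K δ) (hδ : δ' ≤ δ) :
    LeWhitneyConst m K δ' := by
  obtain ⟨f, hcont, hf, hδf⟩ := h
  refine ⟨f, hcont, hf, fun P hP => ?_⟩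
  obtain ⟨x, hx, hle⟩ := hδf P hP
  exact ⟨x, hx, hδ.trans hle⟩

lemma diffBound.leWhitneyConst (hω : 0 < ω) (hcont : ContinuousOn f K) (hf : diffBound m K f ω)
    (hδ : ∀ P : MvPolynomial σ ℝ, P.totalDegree < m →
      ∃ x ∈ K, δ ≤ |f x - MvPolynomial.eval x P|) :
    LeWhitneyConst m K (δ / ω) := by
  refine ⟨fun x => ω⁻¹ * f x, continuousOn_const.mul hcont, fun x h hx => ?_, fun P hP => ?_⟩
  · simp_rw [mul_left_comm _ ω⁻¹]
    rw [← mul_sum, abs_mul, abs_of_pos (inv_pos.2 hω), inv_mul_le_one₀ hω]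
    exact hf x h hx
  · obtain ⟨x, hx, hle⟩ := hδ (.C ω * P) <| lt_of_le_of_lt
      ((MvPolynomial.totalDegree_mul _ _).trans (by simp)) hP
    refine ⟨x, hx, (div_le_iff₀ hω).2 (hle.trans_eq ?_)⟩
    rw [MvPolynomial.eval_mul, MvPolynomial.eval_C, mul_comm _ ω, ← abs_of_pos hω, ← abs_mul,
      abs_of_pos hω, mul_sub, mul_inv_cancel_left₀ hω.ne']

lemma exists_abs_fwdDiff_iter_le (m : ℕ) (f : (σ → ℝ) → ℝ) (h x : σ → ℝ) :
    ∃ j ≤ m, |Δ_[h] ^[m] f x| ≤ 2 ^ m * |f (x + (j : ℝ) • h)| := by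
  obtain ⟨j, hj, hmax⟩ := exists_max_image (range (m + 1)) (fun j => |f (x + (j : ℝ) • h)|)
    nonempty_range_add_one
  refine ⟨j, mem_range_succ_iff.1 hj, ?_⟩
  rw [fwdDiff_iter_eq_sum]
  exact abs_sum_neg_one_pow_mul_choose_le subset_rfl (abs_nonneg _) hmax

lemma exists_abs_fwdDiff_iter_div_le {x h : σ → ℝ} (hx : ∀ j ≤ m, x + (j : ℝ) • h ∈ K)
    {P : MvPolynomial σ ℝ} (hP : P.totalDegree < m) :
    ∃ y ∈ K, |Δ_[h] ^[m] f x| / 2 ^ m ≤ |f y - MvPolynomial.eval y P| := by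
  obtain ⟨j, hj, hle⟩ :=
    exists_abs_fwdDiff_iter_le m (fun y => f y - MvPolynomial.eval y P) h x
  refine ⟨_, hx j hj, (div_le_iff₀' (by positivity)).2 (hle.trans' (le_of_eq ?_))⟩
  have hzero := fwdDiff_iter_eval_eq_zero hP h x
  rw [fwdDiff_iter_eq_sum] at hzero
  simp only [fwdDiff_iter_eq_sum, mul_sub, sum_sub_distrib, hzero, sub_zero]

end WhitneyConstant

section LowerBound

variable {ι : Type*} [Fintype ι] {m : ℕ}

lemma fwdDiff_iter_single_coord_pow {κ : Type*} [DecidableEq κ] (m : ℕ) (i : κ) (t : ℝ) :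
    Δ_[Pi.single i t] ^[m] (fun x : κ → ℝ => x i ^ m) 0 = m.factorial * t ^ m := by
  have hfactorial : Δ_[1] ^[m] (fun r : ℝ => r ^ m) 0 = m.factorial :=
    congrFun fwdDiff_iter_eq_factorial 0
  rw [← hfactorial, fwdDiff_iter_eq_sum, fwdDiff_iter_eq_sum, sum_mul]
  refine sum_congr rfl fun j _ => ?_
  rw [mul_assoc _ _ (t ^ m), ← mul_pow]
  simp

lemma leWhitneyConst_l1_of_nonempty [Nonempty ι] (hm : 0 < m) :
    LeWhitneyConst m ((l1Seminorm ι).closedBall 0 1) (m.factorial / (4 * m) ^ m) := by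
  classical
  obtain ⟨i⟩ := ‹Nonempty ι›
  have : (m : ℝ) ≠ 0 := by positivity
  have hle : ∀ x ∈ (l1Seminorm ι).closedBall 0 1, |x i ^ m| ≤ 1 := fun x hx => by
    rw [abs_pow]
    refine pow_le_one₀ (abs_nonneg _) ((norm_le_pi_norm x i).trans ?_)
    exact (norm_le_l1Seminorm x).trans ((Seminorm.mem_closedBall_zero _).1 hx)
  have hf : diffBound m ((l1Seminorm ι).closedBall 0 1) (fun x => x i ^ m) (2 ^ m) :=
    fun x h hx => by
      rw [← mul_one (2 ^ m)]
      exact abs_sum_neg_one_pow_mul_choose_le subset_rfl zero_le_one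
        fun j hj => hle _ (hx j (mem_range_succ_iff.1 hj))
  have hsegment : ∀ j ≤ m, (0 : ι → ℝ) + (j : ℝ) • Pi.single i (m : ℝ)⁻¹ ∈
      (l1Seminorm ι).closedBall 0 1 := fun j hj => by
    rw [Seminorm.mem_closedBall_zero, zero_add, ← Pi.single_smul, l1Seminorm_single, smul_eq_mul,
      abs_of_nonneg (by positivity), ← div_eq_mul_inv]
    exact div_le_one_of_le₀ (by exact_mod_cast hj) (by positivity)
  have := hf.leWhitneyConst (by positivity) (by fun_prop)
    fun P hP => exists_abs_fwdDiff_iter_div_le (f := fun x => x i ^ m) hsegment hP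
  convert this using 1
  rw [fwdDiff_iter_single_coord_pow, abs_of_nonneg (by positivity), div_div, ← mul_pow,
    show (2 * 2 : ℝ) = 4 by norm_num, inv_pow, mul_pow]
  field_simp

lemma leWhitneyConst_l1_of_pow_le_card (hm : 2 ≤ m) {N : ℕ} (hN : 2 ≤ N)
    (hNι : N ^ m ≤ Fintype.card ι) :
    LeWhitneyConst m ((l1Seminorm ι).closedBall 0 1) (Real.log N / (8 ^ m * (m + 1))) := by
  have hlog : 0 < Real.log N := Real.log_pos (by exact_mod_cast hN)
  have hconst : Real.log N / (8 ^ m * (m + 1)) = Real.log N / 4 ^ m / (2 ^ m * (m + 1)) := by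
    rw [div_div, ← mul_assoc, ← mul_pow]
    norm_num
  rw [hconst]
  refine (diffBound_entropy hm).leWhitneyConst (by positivity) continuous_entropy.continuousOn
    fun P hP => ?_
  by_contra! hlt
  obtain ⟨k, rfl⟩ := Nat.exists_eq_add_one.2 (zero_lt_two.trans_le hm)
  have hle := half_pow_mul_log_le hP hN hNι fun x hx => (hlt x hx).le
  have hgap : 2 ^ (k + 1) * (Real.log N / 4 ^ (k + 1)) = (1 / 2) ^ k * Real.log N / 2 := by
    rw [show (4 : ℝ) = 2 * 2 by norm_num, mul_pow, one_div, inv_pow, pow_succ]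
    field_simp
  linarith [show 0 < (1 / 2) ^ k * Real.log N by positivity]

lemma log_add_one_le_of_lt_two_pow {n : ℕ} (hn : n < 2 ^ m) : Real.log (n + 1) ≤ m := by
  calc Real.log (n + 1)
    _ ≤ Real.log (2 ^ m) := Real.log_le_log (by positivity) (by exact_mod_cast hn)
    _ = m * Real.log 2 := Real.log_pow _ _
    _ ≤ m := mul_le_of_le_one_right (by positivity) (Real.log_two_lt_d9.le.trans (by norm_num))

lemma exists_pow_le_log_add_one_le (hm : m ≠ 0) {n : ℕ} (hn : 2 ^ m ≤ n) :
    ∃ N : ℕ, 2 ≤ N ∧ N ^ m ≤ n ∧ Real.log (n + 1) ≤ 2 * m * Real.log N := by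
  have hN : 2 ≤ Nat.nthRoot m n := (Nat.le_nthRoot_iff hm).2 hn
  refine ⟨Nat.nthRoot m n, hN, Nat.pow_nthRoot_le (Or.inl hm), ?_⟩
  set N := Nat.nthRoot m n
  have hle : n + 1 ≤ N ^ (2 * m) := by
    calc n + 1
      _ ≤ (N + 1) ^ m := Nat.lt_pow_nthRoot_add_one hm n
      _ ≤ (N ^ 2) ^ m := Nat.pow_le_pow_left (by nlinarith) m
      _ = N ^ (2 * m) := (pow_mul _ _ _).symm
  calc Real.log (n + 1)
    _ ≤ Real.log (N ^ (2 * m)) := Real.log_le_log (by positivity) (by exact_mod_cast hle)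
    _ = 2 * m * Real.log N := by rw [Real.log_pow]; push_cast; ring

lemma exists_leWhitneyConst_l1_log (hm : 2 ≤ m) :
    ∃ c : ℝ, 0 < c ∧ ∀ (ι : Type*) [Fintype ι] [Nonempty ι],
      LeWhitneyConst m ((l1Seminorm ι).closedBall 0 1) (c * Real.log (Fintype.card ι + 1)) := by
  have hm0 : 0 < m := zero_lt_two.trans_le hm
  let c₁ : ℝ := m.factorial / (4 * m) ^ m / m
  let c₂ : ℝ := 1 / (8 ^ m * (m + 1)) / (2 * m)
  have hc₁ : 0 < c₁ := by positivity
  have hc₂ : 0 < c₂ := by positivity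
  refine ⟨min c₁ c₂, lt_min hc₁ hc₂, fun ι _ _ => ?_⟩
  have hlog : 0 ≤ Real.log (Fintype.card ι + 1) := Real.log_nonneg (by simp)
  rcases lt_or_ge (Fintype.card ι) (2 ^ m) with hsmall | hlarge
  · refine (leWhitneyConst_l1_of_nonempty hm0).mono ?_
    calc min c₁ c₂ * Real.log (Fintype.card ι + 1)
      _ ≤ c₁ * m := by
        gcongr
        exacts [min_le_left _ _, log_add_one_le_of_lt_two_pow hsmall]
      _ = m.factorial / (4 * m) ^ m := div_mul_cancel₀ _ (by positivity)
  · obtain ⟨N, hN, hNι, hlogN⟩ := exists_pow_le_log_add_one_le hm0.ne' hlarge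
    refine (leWhitneyConst_l1_of_pow_le_card hm hN hNι).mono ?_
    calc min c₁ c₂ * Real.log (Fintype.card ι + 1)
      _ ≤ c₂ * (2 * m * Real.log N) := by
        gcongr
        exact min_le_right _ _
      _ = Real.log N / (8 ^ m * (m + 1)) := by
        simp only [c₂]
        field_simp

end LowerBound

theorem whitney_m_l1_two_sided_general (m : ℕ) (hm : 2 ≤ m) :
    ∃ C : ℝ, 1 ≤ C ∧ ∀ n : ℕ, 1 ≤ n →
      ((∀ f : (Fin n → ℝ) → ℝ, Bornology.IsBounded (f '' l1Ball n) → diffBound m (l1Ball n) f 1 →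
          ∃ P : MvPolynomial (Fin n) ℝ, P.totalDegree ≤ m - 1 ∧
            ∀ x ∈ l1Ball n, |f x - MvPolynomial.eval x P| ≤ C * Real.log (n + 1)) ∧
       (∃ f : (Fin n → ℝ) → ℝ, ContinuousOn f (l1Ball n) ∧ diffBound m (l1Ball n) f 1 ∧
          ∀ P : MvPolynomial (Fin n) ℝ, P.totalDegree ≤ m - 1 →
            ∃ x ∈ l1Ball n, C⁻¹ * Real.log (n + 1) ≤ |f x - MvPolynomial.eval x P|)) := by
  have hm0 : 0 < m := zero_lt_two.trans_le hm
  obtain ⟨C, hupper⟩ := exists_abs_sub_polynomial_le_log hm0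
  obtain ⟨c, hc, hlower⟩ := exists_leWhitneyConst_l1_log hm
  simp only [Nat.le_sub_one_iff_lt hm0]
  refine ⟨max 1 (max C c⁻¹), le_max_left _ _, fun n hn => ?_⟩
  have hlog : 0 ≤ Real.log (n + 1) := Real.log_nonneg (by simp)
  refine ⟨fun f hbdd hf => ?_, ?_⟩
  · obtain ⟨P, hP, hfP⟩ := hupper n hn f hbdd hf
    refine ⟨P, hP, fun x hx => (hfP x hx).trans ?_⟩
    gcongr
    exact (le_max_left _ _).trans (le_max_right _ _)
  · have : Nonempty (Fin n) := Fin.pos_iff_nonempty.1 hn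
    rw [l1Ball_eq_closedBall]
    refine LeWhitneyConst.mono (by simpa using hlower (Fin n)) ?_
    gcongr
    exact inv_le_of_inv_le₀ hc ((le_max_right _ _).trans (le_max_right _ _))

/-- Corollary 5.7: `C⁻¹ log(n+1) ≤ w_m(ℓ₁ⁿ) ≤ C log(n+1)`. -/
theorem whitney_m_l1_two_sided (m : ℕ) (hm : 2 ≤ m) :
    ∃ C : ℝ, 1 ≤ C ∧ ∀ n : ℕ, 1 ≤ n →
      ((∀ f : (Fin n → ℝ) → ℝ, ContinuousOn f (l1Ball n) → diffBound m (l1Ball n) f 1 →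
          ∃ P : MvPolynomial (Fin n) ℝ, P.totalDegree ≤ m - 1 ∧
            ∀ x ∈ l1Ball n, |f x - MvPolynomial.eval x P| ≤ C * Real.log (n + 1)) ∧
       (∃ f : (Fin n → ℝ) → ℝ, ContinuousOn f (l1Ball n) ∧ diffBound m (l1Ball n) f 1 ∧
          ∀ P : MvPolynomial (Fin n) ℝ, P.totalDegree ≤ m - 1 →
            ∃ x ∈ l1Ball n, C⁻¹ * Real.log (n + 1) ≤ |f x - MvPolynomial.eval x P|)) := by
  obtain ⟨C, hC, h⟩ := whitney_m_l1_two_sided_general m hm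
  refine ⟨C, hC, fun n hn => ⟨fun f hcont => (h n hn).1 f ?_, (h n hn).2⟩⟩
  rw [l1Ball_eq_closedBall] at hcont ⊢
  exact ((isCompact_closedBall_l1Seminorm 1).image_of_continuousOn hcont).isBounded
end

section
/- For every p with 0 < p < 1 and every integer m ≥ 2 there is a constant C = C(p,m) such that for every n ≥ 1 and every continuous function f : B_pⁿ → ℝ with ω_m(f;B_pⁿ) ≤ 1, where B_pⁿ := {x ∈ ℝⁿ : ∑_{i=1}^n |x_i|^p ≤ 1}, there exists a polynomial φ on ℝⁿ of total degree at most m−1 with sup_{x∈B_pⁿ} |f(x) − φ(x)| ≤ C; in particular the bound is independent of the dimension n. (Theorem 5.9: w_m(ℓ_pⁿ) ≤ C(p,m) for 0 < p < 1.) -/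
open Finset

/-- The (non-convex) closed unit ball of `ℓ_pⁿ` for `0 < p < 1`. -/
noncomputable def lpBall (n : ℕ) (p : ℝ) : Set (Fin n → ℝ) := {x | ∑ i, |x i| ^ p ≤ 1}

/-!
On a ball of fixed dimension, Whitney's inequality follows from the interval case by tensor
interpolation on a cube. To make the constant independent of the dimension, interpolate `f` at a
simplex of lattice points inside the ball and let `x` be a maximum point of the error `|g|`. Sort
the coordinates of `x` greedily into `L` bins such that, apart from one coordinate per bin, each bin
has `∑ |x i| ^ p ≤ 1 / L`. Collapsing this remainder of each bin to a single variable compresses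
`x` to `2 * L` variables, in which `g` is close to a polynomial. Since `p < 1`, the collapsed
variables have total absolute value at most `(1 / L) ^ (1 / p - 1)`; by a Markov inequality whose
constant does not depend on `L`, setting them to `0` changes the polynomial by at most half of its
maximum once `L` is large. After that only single coordinates of `x` remain, and the polynomial is
controlled by its values at lattice points, where `g` vanishes.
-/

namespace WhitneyLp

section Stability

open Polynomial

theorem exists_abs_le_of_injective {ι J V : Type*} [Finite ι] [AddCommGroup V] [Module ℝ V]
    {T : V →ₗ[ℝ] ι → ℝ} (hT : Function.Injective T) {φ : J → V →ₗ[ℝ] ℝ}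
    (hφ : ∀ v, ∃ c, ∀ j, |φ j v| ≤ c) :
    ∃ C : ℝ, 0 ≤ C ∧ ∀ v B, (∀ i, |T v i| ≤ B) → ∀ j, |φ j v| ≤ C * B := by
  classical
  have := Fintype.ofFinite ι
  obtain ⟨S, hS⟩ := T.exists_leftInverse_of_injective (LinearMap.ker_eq_bot.2 hT)
  choose c hc using hφ
  let e (i : ι) : V := S fun j ↦ if i = j then 1 else 0
  refine ⟨∑ i, |c (e i)|, by positivity, fun v B hB j ↦ ?_⟩
  have hv : ∑ i, T v i • e i = v :=
    (S.pi_apply_eq_sum_univ (T v)).symm.trans (LinearMap.congr_fun hS v)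
  calc |φ j v| = |∑ i, T v i * φ j (e i)| := by
        conv_lhs => rw [← hv, map_sum]
        simp only [map_smul, smul_eq_mul]
    _ ≤ ∑ i, |c (e i)| * B := (abs_sum_le_sum_abs _ _).trans <| sum_le_sum fun i _ ↦ by
        rw [abs_mul, mul_comm]
        exact mul_le_mul ((hc _ j).trans (le_abs_self _)) (hB i) (abs_nonneg _) (abs_nonneg _)
    _ = (∑ i, |c (e i)|) * B := by rw [sum_mul]

theorem exists_abs_le_of_abs_eval_nodes_le {J : Type*} (k : ℕ) {δ : ℝ} (hδ : δ ≠ 0)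
    {φ : J → ℝ[X] →ₗ[ℝ] ℝ} (hφ : ∀ q, ∃ c, ∀ j, |φ j q| ≤ c) :
    ∃ C : ℝ, 0 ≤ C ∧ ∀ q : ℝ[X], q.natDegree ≤ k → ∀ B,
      (∀ i ≤ k, |q.eval (δ * i)| ≤ B) → ∀ j, |φ j q| ≤ C * B := by
  let T : degreeLE ℝ k →ₗ[ℝ] Fin (k + 1) → ℝ :=
    LinearMap.pi fun i ↦ leval (δ * ((i : ℕ) : ℝ)) ∘ₗ (degreeLE ℝ k).subtype
  have hT : Function.Injective T := by
    refine LinearMap.ker_eq_bot.1 <| LinearMap.ker_eq_bot'.2 fun q hq ↦ Subtype.ext ?_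
    refine eq_zero_of_degree_lt_of_eval_index_eq_zero (s := univ)
      (v := fun i : Fin (k + 1) ↦ δ * ((i : ℕ) : ℝ)) (fun i _ j _ hij ↦ ?_) ?_
      fun i _ ↦ congrFun hq i
    · exact Fin.ext (by exact_mod_cast mul_left_cancel₀ hδ hij)
    · exact (mem_degreeLE.1 q.2).trans_lt (by rw [Finset.card_fin]; exact_mod_cast k.lt_succ_self)
  obtain ⟨C, hC, h⟩ := exists_abs_le_of_injective hT
    (φ := fun j ↦ φ j ∘ₗ (degreeLE ℝ k).subtype) fun q ↦ hφ q
  exact ⟨C, hC, fun q hq B hB ↦ h ⟨q, mem_degreeLE.2 (degree_le_of_natDegree_le hq)⟩ B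
    fun i ↦ hB i (Nat.le_of_lt_succ i.2)⟩

theorem exists_abs_eval_le (k : ℕ) {δ : ℝ} (hδ : δ ≠ 0) (R : ℝ) :
    ∃ C : ℝ, 0 ≤ C ∧ ∀ q : ℝ[X], q.natDegree ≤ k → ∀ B,
      (∀ i ≤ k, |q.eval (δ * i)| ≤ B) → ∀ t ∈ Metric.closedBall 0 R, |q.eval t| ≤ C * B := by
  obtain ⟨C, hC, h⟩ := exists_abs_le_of_abs_eval_nodes_le k hδ
    (φ := fun t : Metric.closedBall (0 : ℝ) R ↦ leval t.1) fun q ↦ by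
      obtain ⟨c, hc⟩ := (isCompact_closedBall (0 : ℝ) R).exists_bound_of_continuousOn
        q.continuous.continuousOn
      exact ⟨c, fun t ↦ hc t t.2⟩
  exact ⟨C, hC, fun q hq B hB t ht ↦ h q hq B hB ⟨t, ht⟩⟩

theorem exists_abs_eval_sub_eval_le (k : ℕ) {δ : ℝ} (hδ : δ ≠ 0) (R : ℝ) :
    ∃ C : ℝ, 0 ≤ C ∧ ∀ q : ℝ[X], q.natDegree ≤ k → ∀ B, (∀ i ≤ k, |q.eval (δ * i)| ≤ B) →
      ∀ s ∈ Metric.closedBall 0 R, ∀ t ∈ Metric.closedBall 0 R,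
        |q.eval t - q.eval s| ≤ C * B * |t - s| := by
  obtain ⟨C, hC, h⟩ := exists_abs_le_of_abs_eval_nodes_le k hδ
    (φ := fun t : Metric.closedBall (0 : ℝ) R ↦ leval t.1 ∘ₗ derivative) fun q ↦ by
      obtain ⟨c, hc⟩ := (isCompact_closedBall (0 : ℝ) R).exists_bound_of_continuousOn
        (derivative q).continuous.continuousOn
      exact ⟨c, fun t ↦ hc t t.2⟩
  refine ⟨C, hC, fun q hq B hB s hs t ht ↦ ?_⟩
  exact (convex_closedBall 0 R).norm_image_sub_le_of_norm_hasDerivWithin_le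
    (fun x _ ↦ (q.hasDerivAt x).hasDerivWithinAt) (fun x hx ↦ h q hq B hB ⟨x, hx⟩) hs ht

theorem exists_abs_coeff_le (k : ℕ) {δ : ℝ} (hδ : δ ≠ 0) :
    ∃ C : ℝ, 0 ≤ C ∧ ∀ q : ℝ[X], q.natDegree ≤ k → ∀ B,
      (∀ i ≤ k, |q.eval (δ * i)| ≤ B) → ∀ j, |q.coeff j| ≤ C * B := by
  refine exists_abs_le_of_abs_eval_nodes_le k hδ (φ := fun j ↦ lcoeff ℝ j) fun q ↦
    ⟨∑ j ∈ q.support, |q.coeff j|, fun j ↦ ?_⟩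
  by_cases hj : j ∈ q.support
  · exact single_le_sum (f := fun j ↦ |q.coeff j|) (fun _ _ ↦ abs_nonneg _) hj
  · rw [lcoeff_apply, notMem_support_iff.1 hj, abs_zero]
    positivity

end Stability

section FiniteDifferences

open scoped fwdDiff

variable {E F : Type*} [AddCommGroup E] [AddCommGroup F]

theorem fwdDiff_iter_comp {G : F → E} {G' : F → E}
    (hG : ∀ x h, ∀ j : ℕ, G (x + j • h) = G x + j • G' h) (f : E → ℝ) (n : ℕ) (x h : F) :
    (Δ_[h])^[n] (fun y ↦ f (G y)) x = (Δ_[G' h])^[n] f (G x) := by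
  simp only [fwdDiff_iter_eq_sum_shift, hG]

theorem fwdDiff_iter_progression (f : E → ℝ) (n : ℕ) (x h : E) (j : ℕ) :
    (Δ_[1])^[n] (fun i : ℕ ↦ f (x + i • h)) j = (Δ_[h])^[n] f (x + j • h) := by
  simp only [fwdDiff_iter_eq_sum_shift, smul_eq_mul, mul_one, add_smul, add_assoc]

theorem fwdDiff_iter_sub {M : Type*} [AddCommMonoid M] (f g : M → ℝ) (n : ℕ) (x h : M) :
    (Δ_[h])^[n] (fun y ↦ f y - g y) x = (Δ_[h])^[n] f x - (Δ_[h])^[n] g x := by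
  simp only [fwdDiff_iter_eq_sum_shift, smul_sub, sum_sub_distrib]

theorem exists_polynomial_eval_affine (q : Polynomial ℝ) (x h : ℝ) :
    ∃ r : Polynomial ℝ, r.natDegree ≤ q.natDegree ∧ ∀ t, r.eval t = q.eval (x + t * h) := by
  refine ⟨q.comp (.C h * .X + .C x), ?_, fun t ↦ by simp [add_comm x, mul_comm t]⟩
  calc (q.comp (.C h * .X + .C x)).natDegree ≤ q.natDegree * 1 :=
        Polynomial.natDegree_comp_le.trans (Nat.mul_le_mul_left _ Polynomial.natDegree_linear_le)
    _ = q.natDegree := mul_one _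

theorem fwdDiff_iter_eval_eq_zero {q : Polynomial ℝ} {n : ℕ} (hq : q.natDegree < n) (x h : ℝ) :
    (Δ_[h])^[n] (fun t ↦ q.eval t) x = 0 := by
  obtain ⟨r, hr, hr'⟩ := exists_polynomial_eval_affine q x h
  have := congrFun (Polynomial.fwdDiff_iter_eq_zero_of_degree_lt (hr.trans_lt hq)) 0
  simpa [fwdDiff_iter_eq_sum_shift, hr'] using this

theorem exists_polynomial_eval_line {σ : Type*} (P : MvPolynomial σ ℝ) (x h : σ → ℝ) :
    ∃ q : Polynomial ℝ, q.natDegree ≤ P.totalDegree ∧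
      ∀ t : ℝ, q.eval t = MvPolynomial.eval (x + t • h) P := by
  let line (i : σ) : Polynomial ℝ := .C (h i) * .X + .C (x i)
  refine ⟨MvPolynomial.aeval line P, ?_, fun t ↦ ?_⟩
  · simpa using MvPolynomial.aeval_natDegree_le P le_rfl line (n := 1)
      fun i ↦ Polynomial.natDegree_linear_le
  · have : (Polynomial.evalRingHom t).comp (algebraMap ℝ (Polynomial ℝ)) = .id ℝ := by ext; simp
    rw [← Polynomial.coe_evalRingHom, MvPolynomial.aeval_def, MvPolynomial.hom_eval₂, this]
    refine congrArg (fun y ↦ MvPolynomial.eval y P) (funext fun i ↦ ?_)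
    simp [line, add_comm (x i), mul_comm t]

theorem fwdDiff_iter_mvEval_eq_zero {σ : Type*} {P : MvPolynomial σ ℝ} {n : ℕ}
    (hP : P.totalDegree < n) (x h : σ → ℝ) :
    (Δ_[h])^[n] (fun y ↦ MvPolynomial.eval y P) x = 0 := by
  obtain ⟨q, hq, hq'⟩ := exists_polynomial_eval_line P x h
  have hq0 := fwdDiff_iter_eval_eq_zero (hq.trans_lt hP) 0 1
  simpa only [fwdDiff_iter_eq_sum_shift, hq', zero_add, nsmul_one, Nat.cast_smul_eq_nsmul] using hq0

variable [Module ℝ E] [Module ℝ F]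

theorem diffBound_iff_fwdDiff {m : ℕ} {K : Set E} {f : E → ℝ} {c : ℝ} :
    diffBound m K f c ↔
      ∀ x h : E, (∀ j ≤ m, x + j • h ∈ K) → |(Δ_[h])^[m] f x| ≤ c := by
  simp only [diffBound, fwdDiff_iter_eq_sum_shift, Nat.cast_smul_eq_nsmul, zsmul_eq_mul,
    Int.cast_mul, Int.cast_pow, Int.cast_neg, Int.cast_one, Int.cast_natCast]

variable [TopologicalSpace E] [TopologicalSpace F]

/-- `f` is continuous on `K` and its modulus of smoothness of order `k + 1` there is at most `1`,
the hypothesis under which Whitney's inequality compares `f` with a polynomial of degree `≤ k`. -/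
structure AlmostPolynomialOn (k : ℕ) (K : Set E) (f : E → ℝ) : Prop where
  continuousOn : ContinuousOn f K
  modulus_le : diffBound (k + 1) K f 1

namespace AlmostPolynomialOn

variable {k : ℕ} {K : Set E} {f : E → ℝ}

theorem abs_fwdDiff_le (hf : AlmostPolynomialOn k K f) {x h : E}
    (hx : ∀ j ≤ k + 1, x + j • h ∈ K) : |(Δ_[h])^[k + 1] f x| ≤ 1 :=
  diffBound_iff_fwdDiff.1 hf.modulus_le x h hx

theorem comp (hf : AlmostPolynomialOn k K f) {K' : Set F} {G G' : F → E}
    (hG : ∀ x h, ∀ j : ℕ, G (x + j • h) = G x + j • G' h) (hGc : Continuous G)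
    (hK : Set.MapsTo G K' K) : AlmostPolynomialOn k K' fun y ↦ f (G y) where
  continuousOn := hf.continuousOn.comp hGc.continuousOn hK
  modulus_le := diffBound_iff_fwdDiff.2 fun x h hx ↦ by
    rw [fwdDiff_iter_comp hG]
    exact hf.abs_fwdDiff_le fun j hj ↦ hG x h j ▸ hK (hx j hj)

theorem comp_clm (hf : AlmostPolynomialOn k K f) {K' : Set F} (G : F →L[ℝ] E)
    (hK : Set.MapsTo G K' K) : AlmostPolynomialOn k K' fun y ↦ f (G y) :=
  hf.comp (G' := G) (fun x h j ↦ by rw [map_add, map_nsmul]) G.continuous hK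

theorem sub (hf : AlmostPolynomialOn k K f) {g : E → ℝ} (hgc : Continuous g)
    (hg : ∀ x h, (Δ_[h])^[k + 1] g x = 0) : AlmostPolynomialOn k K fun x ↦ f x - g x where
  continuousOn := hf.continuousOn.sub hgc.continuousOn
  modulus_le := diffBound_iff_fwdDiff.2 fun x h hx ↦ by
    rw [fwdDiff_iter_sub, hg, sub_zero]
    exact hf.abs_fwdDiff_le hx

theorem sub_polynomial {K : Set ℝ} {f : ℝ → ℝ} (hf : AlmostPolynomialOn k K f) {q : Polynomial ℝ}
    (hq : q.natDegree ≤ k) : AlmostPolynomialOn k K fun t ↦ f t - q.eval t :=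
  hf.sub q.continuous fun _ _ ↦ fwdDiff_iter_eval_eq_zero (Nat.lt_succ_of_le hq) _ _

theorem sub_mvPolynomial {σ : Type*} {K : Set (σ → ℝ)} {f : (σ → ℝ) → ℝ}
    (hf : AlmostPolynomialOn k K f) {P : MvPolynomial σ ℝ} (hP : P.totalDegree ≤ k) :
    AlmostPolynomialOn k K fun x ↦ f x - MvPolynomial.eval x P :=
  hf.sub P.continuous_eval fun _ _ ↦ fwdDiff_iter_mvEval_eq_zero (Nat.lt_succ_of_le hP) _ _

end AlmostPolynomialOn

end FiniteDifferences

/-- Whitney's inequality with constant `C` for polynomials of degree at most `k` on `K`. -/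
def HasWhitneyBound {σ : Type*} (k : ℕ) (K : Set (σ → ℝ)) (C : ℝ) : Prop :=
  ∀ f : (σ → ℝ) → ℝ, AlmostPolynomialOn k K f → ∃ P : MvPolynomial σ ℝ,
    P.totalDegree ≤ k ∧ ∀ x ∈ K, |f x - MvPolynomial.eval x P| ≤ C

section Interval

open scoped fwdDiff

theorem abs_fwdDiff_iter_le {n : ℕ} {c : ℕ → ℝ} {B : ℝ} (hc : ∀ i ≤ n, |c i| ≤ B) :
    |(Δ_[1])^[n] c 0| ≤ 2 ^ n * B := by
  rw [fwdDiff_iter_eq_sum_shift]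
  calc |∑ i ∈ range (n + 1), ((-1 : ℤ) ^ (n - i) * n.choose i) • c (0 + i • 1)|
      ≤ ∑ i ∈ range (n + 1), (n.choose i : ℝ) * B :=
        (abs_sum_le_sum_abs _ _).trans <| sum_le_sum fun i hi ↦ by
          have := hc i (mem_range_succ_iff.1 hi)
          simpa [abs_mul] using mul_le_mul_of_nonneg_left this (Nat.cast_nonneg (n.choose i))
    _ = 2 ^ n * B := by
        rw [← sum_mul, ← Nat.cast_sum, Nat.sum_range_choose, Nat.cast_pow, Nat.cast_two]

theorem exists_natDegree_le_eval_eq (k : ℕ) {δ : ℝ} (hδ : δ ≠ 0) (a : ℕ → ℝ) :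
    ∃ q : Polynomial ℝ, q.natDegree ≤ k ∧ ∀ i ≤ k, q.eval (δ * i) = a i := by
  have hinj : Set.InjOn (fun i : ℕ ↦ δ * i) (range (k + 1)) :=
    ((mul_right_injective₀ hδ).comp Nat.cast_injective).injOn
  refine ⟨Lagrange.interpolate (range (k + 1)) (fun i ↦ δ * i) a, ?_, fun i hi ↦
    Lagrange.eval_interpolate_at_node a hinj (mem_range_succ_iff.2 hi)⟩
  simpa using Polynomial.natDegree_le_of_degree_le (Lagrange.degree_interpolate_le a hinj)

theorem abs_le_three_pow_of_fwdDiff {k N : ℕ} {b : ℕ → ℝ} (hb0 : ∀ i ≤ k, b i = 0)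
    (hb : ∀ j, j + (k + 1) ≤ N → |(Δ_[1])^[k + 1] b j| ≤ 1) {j : ℕ} (hj : j ≤ N) :
    |b j| ≤ 3 ^ N := by
  have hdiff (i : ℕ) (hi : i ≤ j) : |(Δ_[1])^[i] b 0| ≤ 2 ^ i := by
    rcases le_or_gt i k with hik | hki
    · have h0 := abs_fwdDiff_iter_le (n := i) (c := b) (B := 0) fun l hl ↦ by
        rw [hb0 l (hl.trans hik), abs_zero]
      exact h0.trans (by simp)
    · obtain ⟨l, rfl⟩ := Nat.exists_eq_add_of_le' (Nat.succ_le_of_lt hki)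
      rw [Function.iterate_add_apply]
      have hl := abs_fwdDiff_iter_le (n := l) fun i hi ↦ hb i (by omega)
      exact hl.trans (by rw [mul_one]; gcongr <;> simp)
  have hnewton := shift_eq_sum_fwdDiff_iter 1 b j 0
  rw [zero_add, smul_eq_mul, mul_one] at hnewton
  calc |b j| ≤ ∑ i ∈ range (j + 1), (2 : ℝ) ^ i * 1 ^ (j - i) * j.choose i := by
        rw [hnewton]
        refine (abs_sum_le_sum_abs _ _).trans <| sum_le_sum fun i hi ↦ ?_
        rw [nsmul_eq_mul, abs_mul, Nat.abs_cast, one_pow, mul_one, mul_comm]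
        exact mul_le_mul_of_nonneg_right (hdiff i (mem_range_succ_iff.1 hi)) (Nat.cast_nonneg _)
    _ = 3 ^ j := by rw [← add_pow]; norm_num
    _ ≤ 3 ^ N := by gcongr; norm_num

theorem exists_polynomial_near_seq {k N : ℕ} {a : ℕ → ℝ}
    (ha : ∀ j, j + (k + 1) ≤ N → |(Δ_[1])^[k + 1] a j| ≤ 1) :
    ∃ q : Polynomial ℝ, q.natDegree ≤ k ∧ ∀ j ≤ N, |a j - q.eval (j : ℝ)| ≤ 3 ^ N := by
  obtain ⟨q, hq, hqa⟩ := exists_natDegree_le_eval_eq k one_ne_zero a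
  simp only [one_mul] at hqa
  have hq0 (j : ℕ) : (Δ_[1])^[k + 1] (fun i : ℕ ↦ q.eval (i : ℝ)) j = 0 := by
    simpa using (fwdDiff_iter_progression (fun t ↦ q.eval t) (k + 1) 0 1 j).trans
      (fwdDiff_iter_eval_eq_zero (Nat.lt_succ_of_le hq) _ _)
  refine ⟨q, hq, fun j hj ↦ abs_le_three_pow_of_fwdDiff (k := k) (b := fun j ↦ a j - q.eval (j : ℝ))
    (fun i hi ↦ by rw [hqa i hi, sub_self]) (fun j hj ↦ ?_) hj⟩
  rw [fwdDiff_iter_sub, hq0, sub_zero]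
  exact ha j hj

theorem exists_abs_seq_step_le (k : ℕ) : ∃ N : ℕ, 0 < N ∧ ∃ E : ℝ, 0 ≤ E ∧ ∀ (a : ℕ → ℝ) (A : ℝ),
    (∀ j, j + (k + 1) ≤ N → |(Δ_[1])^[k + 1] a j| ≤ 1) → (∀ j ≤ N, |a j| ≤ A) →
      |a 1 - a 0| ≤ A / 2 + E := by
  obtain ⟨C, hC, hlip⟩ := exists_abs_eval_sub_eval_le k one_ne_zero 1
  obtain ⟨M, hM⟩ := exists_nat_ge (2 * C + 1)
  have hM0 : 0 < M := by exact_mod_cast (by linarith : (0 : ℝ) < M)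
  have hM1 : (1 : ℝ) ≤ M := by exact_mod_cast hM0
  set N := (k + 1) * M
  refine ⟨N, by positivity, 3 * 3 ^ N, by positivity, fun a A ha hA ↦ ?_⟩
  obtain ⟨q, hq, hqa⟩ := exists_polynomial_near_seq ha
  obtain ⟨r, hr, hrq⟩ := exists_polynomial_eval_affine q 0 M
  have hnode (i : ℕ) (hi : i ≤ k) : |r.eval (1 * (i : ℝ))| ≤ A + 3 ^ N := by
    have hiN : i * M ≤ N := Nat.mul_le_mul_right M (by omega)
    have h1 := hqa _ hiN
    have h2 := hA _ hiN
    rw [hrq, one_mul, zero_add, ← Nat.cast_mul]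
    rw [abs_le] at *
    constructor <;> linarith
  have hA0 : 0 ≤ A := (abs_nonneg _).trans (hA 0 (Nat.zero_le _))
  have hstep : |q.eval 1 - q.eval 0| ≤ (A + 3 ^ N) / 2 := by
    have h := hlip r (hr.trans hq) _ hnode 0 (by simp) (M : ℝ)⁻¹
      (by simpa using inv_le_one_of_one_le₀ hM1)
    rw [hrq, hrq, sub_zero, inv_mul_cancel₀ (by positivity), zero_mul, add_zero, zero_add,
      abs_inv, Nat.abs_cast] at h
    refine h.trans ?_
    rw [← div_eq_mul_inv, div_le_div_iff₀ (by positivity) two_pos]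
    nlinarith [pow_pos (three_pos (α := ℝ)) N]
  have h0 := hqa 0 (Nat.zero_le _)
  have h1 := hqa 1 (Nat.mul_pos k.succ_pos hM0)
  rw [Nat.cast_zero] at h0
  rw [Nat.cast_one] at h1
  rw [abs_le] at *
  constructor <;> linarith

theorem exists_grid_point {N : ℕ} (hN : 0 < N) {x : ℝ} (hx : x ∈ Metric.closedBall (0 : ℝ) 1) :
    ∃ j ≤ 2 * N, x + N * (-1 + j * (1 / N) - x) ∈ Metric.closedBall (0 : ℝ) 1 := by
  wlog hx0 : x ≤ 0 generalizing x with hneg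
  · obtain ⟨j, hj, hjx⟩ := hneg (x := -x) (by simpa using hx) (by linarith)
    refine ⟨2 * N - j, Nat.sub_le _ _, ?_⟩
    rw [mem_closedBall_zero_iff] at hjx ⊢
    rw [← norm_neg]
    convert! hjx using 2
    rw [Nat.cast_sub hj]
    push_cast
    field_simp
    ring
  · rw [mem_closedBall_zero_iff, Real.norm_eq_abs, abs_le] at hx
    have hN' : (0 : ℝ) < N := Nat.cast_pos.2 hN
    have hle : (N : ℝ) * (x + 1) ≤ N := mul_le_of_le_one_right hN'.le (by linarith)
    have h1 := Nat.le_ceil ((N : ℝ) * (x + 1))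
    have h2 := Nat.ceil_lt_add_one (a := (N : ℝ) * (x + 1)) (by nlinarith)
    refine ⟨⌈(N : ℝ) * (x + 1)⌉₊, (Nat.ceil_le.2 hle).trans (by omega), ?_⟩
    have : (N : ℝ) * (-1 + ⌈(N : ℝ) * (x + 1)⌉₊ * (1 / N) - x)
        = ⌈(N : ℝ) * (x + 1)⌉₊ - N * (x + 1) := by field_simp; ring
    rw [mem_closedBall_zero_iff, Real.norm_eq_abs, abs_le, this]
    constructor <;> linarith

theorem AlmostPolynomialOn.exists_abs_le_of_grid (k : ℕ) :
    ∃ N : ℕ, 0 < N ∧ ∃ E : ℝ, 0 ≤ E ∧ ∀ (g : ℝ → ℝ) (B : ℝ),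
      AlmostPolynomialOn k (Metric.closedBall 0 1) g →
      (∀ j ≤ 2 * N, |g (-1 + j * (1 / N))| ≤ B) →
        ∀ x ∈ Metric.closedBall 0 1, |g x| ≤ 2 * (B + E) := by
  obtain ⟨N, hN, E, hE, hstep⟩ := exists_abs_seq_step_le k
  refine ⟨N, hN, E, hE, fun g B hg hB x hx ↦ ?_⟩
  obtain ⟨x₀, hx₀, hmax⟩ := (isCompact_closedBall (0 : ℝ) 1).exists_isMaxOn ⟨x, hx⟩
    hg.continuousOn.abs
  refine (hmax hx).trans ?_
  obtain ⟨j, hj, hjx⟩ := exists_grid_point hN hx₀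
  set h := -1 + j * (1 / (N : ℝ)) - x₀ with hh
  have hmem (i : ℕ) (hi : i ≤ N) : x₀ + i • h ∈ Metric.closedBall (0 : ℝ) 1 := by
    have hi' : (i / N : ℝ) ∈ Set.Icc (0 : ℝ) 1 :=
      ⟨by positivity, div_le_one_of_le₀ (by exact_mod_cast hi) (by positivity)⟩
    have := (convex_closedBall (0 : ℝ) 1).add_smul_mem hx₀ hjx hi'
    rwa [smul_eq_mul, ← mul_assoc, div_mul_cancel₀ _ (by positivity), ← nsmul_eq_mul] at this
  have hjump := hstep (fun i ↦ g (x₀ + i • h)) |g x₀| (fun i hi ↦ by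
    rw [fwdDiff_iter_progression]
    refine hg.abs_fwdDiff_le fun l hl ↦ ?_
    rw [add_assoc, ← add_smul]
    exact hmem _ (by omega)) fun i hi ↦ hmax (hmem i hi)
  have hgrid := hB j hj
  rw [one_smul, zero_smul, add_zero, hh, add_sub_cancel] at hjump
  have := abs_sub_abs_le_abs_sub (g x₀) (g (-1 + j * (1 / N)))
  rw [abs_sub_comm] at this
  linarith

theorem AlmostPolynomialOn.exists_near_polynomial (k : ℕ) :
    ∃ W : ℝ, 0 ≤ W ∧ ∀ f : ℝ → ℝ, AlmostPolynomialOn k (Metric.closedBall 0 1) f →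
      ∃ q : Polynomial ℝ, q.natDegree ≤ k ∧
        ∀ t ∈ Metric.closedBall 0 1, |f t - q.eval t| ≤ W := by
  obtain ⟨N, hN, E, hE, hgrid⟩ := exists_abs_le_of_grid k
  have hN' : (0 : ℝ) < N := Nat.cast_pos.2 hN
  refine ⟨2 * (3 ^ (2 * N) + E), by positivity, fun f hf ↦ ?_⟩
  obtain ⟨s, hs, hsf⟩ := exists_polynomial_near_seq (k := k) (N := 2 * N)
    (a := fun j ↦ f (-1 + j • (1 / (N : ℝ)))) fun j hj ↦ by
      rw [fwdDiff_iter_progression]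
      refine hf.abs_fwdDiff_le fun l hl ↦ ?_
      have : ((j + l : ℕ) : ℝ) ≤ 2 * N := by exact_mod_cast (by omega : j + l ≤ 2 * N)
      rw [add_assoc, ← add_smul, nsmul_eq_mul, mul_one_div, mem_closedBall_zero_iff,
        Real.norm_eq_abs, abs_le, neg_le_iff_add_nonneg', add_neg_cancel_left,
        neg_add_le_iff_le_add, div_le_iff₀ hN']
      exact ⟨by positivity, by linarith⟩
  obtain ⟨q, hq, hqs⟩ := exists_polynomial_eval_affine s N N
  refine ⟨q, hq.trans hs, hgrid _ _ (hf.sub_polynomial (hq.trans hs)) fun j hj ↦ ?_⟩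
  have hj : (N : ℝ) + (-1 + j * (1 / N)) * N = j := by field_simp; ring
  rw [hqs, hj, ← nsmul_eq_mul]
  exact hsf j ‹_›

end Interval

section Balanced

theorem AlmostPolynomialOn.ray {E : Type*} [AddCommGroup E] [Module ℝ E] [TopologicalSpace E]
    [ContinuousSMul ℝ E] {k : ℕ} {K : Set E} {f : E → ℝ} (hf : AlmostPolynomialOn k K f)
    (hK : Balanced ℝ K) {x : E} (hx : x ∈ K) :
    AlmostPolynomialOn k (Metric.closedBall 0 1) fun t : ℝ ↦ f (t • x) :=
  hf.comp_clm (.toSpanSingleton ℝ x) fun _ ht ↦ hK.smul_mem (mem_closedBall_zero_iff.1 ht) hx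

theorem mul_natCast_mem_closedBall {k i : ℕ} (hi : i ≤ k) :
    1 / ((k : ℝ) + 1) * i ∈ Metric.closedBall (0 : ℝ) 1 := by
  have hi' : (i : ℝ) ≤ k := Nat.cast_le.2 hi
  rw [mem_closedBall_zero_iff, Real.norm_of_nonneg (by positivity), one_div_mul_eq_div,
    div_le_one (by positivity)]
  linarith

theorem exists_abs_le_of_dilate (k : ℕ) {ρ : ℝ} (hρ : 0 < ρ) (hρ1 : ρ ≤ 1) :
    ∃ C : ℝ, 0 ≤ C ∧ ∀ {σ : Type*} {K : Set (σ → ℝ)}, Balanced ℝ K → ∀ {f : (σ → ℝ) → ℝ},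
      AlmostPolynomialOn k K f → ∀ B, (∀ x ∈ K, |f (ρ • x)| ≤ B) →
        ∀ x ∈ K, |f x| ≤ C * (B + 1) := by
  obtain ⟨W, hW, hray⟩ := AlmostPolynomialOn.exists_near_polynomial k
  obtain ⟨C, hC, hval⟩ := exists_abs_eval_le k (δ := ρ * (1 / (k + 1))) (by positivity) 1
  refine ⟨W + C * (1 + W), by positivity, fun hK f hf B hB x hx ↦ ?_⟩
  obtain ⟨q, hq, hqf⟩ := hray _ (hf.ray hK hx)
  have hB0 : 0 ≤ B := (abs_nonneg _).trans (hB x hx)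
  have hq1 : |q.eval 1| ≤ C * (B + W) := by
    refine hval q hq _ (fun i hi ↦ ?_) 1 (by simp)
    have hi1 := mul_natCast_mem_closedBall hi
    have hnear := hqf (ρ * (1 / (k + 1) * i)) <| mem_closedBall_zero_iff.2 <| by
      rw [norm_mul, Real.norm_of_nonneg hρ.le]
      exact mul_le_one₀ hρ1 (norm_nonneg _) (mem_closedBall_zero_iff.1 hi1)
    have hsmall := hB _ (hK.smul_mem (mem_closedBall_zero_iff.1 hi1) hx)
    rw [smul_smul] at hsmall
    rw [mul_assoc]
    rw [abs_le] at *
    constructor <;> linarith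
  have hnear := hqf 1 (by simp)
  rw [one_smul] at hnear
  have : C * (B + W) ≤ C * ((1 + W) * (B + 1)) := by gcongr; nlinarith
  rw [abs_le] at *
  constructor <;> nlinarith

theorem eval_smul_of_isHomogeneous {σ : Type*} {P : MvPolynomial σ ℝ} {j : ℕ}
    (hP : P.IsHomogeneous j) (t : ℝ) (a : σ → ℝ) :
    MvPolynomial.eval (t • a) P = t ^ j * MvPolynomial.eval a P := by
  rw [MvPolynomial.eval_eq, MvPolynomial.eval_eq, mul_sum]
  refine sum_congr rfl fun e he ↦ ?_
  have hdeg : e.degree = j := by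
    rw [Finsupp.degree_eq_weight_one]
    exact hP (MvPolynomial.mem_support_iff.1 he)
  simp only [Pi.smul_apply, smul_eq_mul, mul_pow, prod_mul_distrib]
  rw [prod_pow_eq_pow_sum, ← hdeg, Finsupp.degree_apply, mul_left_comm]

theorem exists_truncation {σ : Type*} (T : MvPolynomial σ ℝ) (k : ℕ) :
    ∃ P : MvPolynomial σ ℝ, P.totalDegree ≤ k ∧ ∀ a, ∃ r : Polynomial ℝ,
      r.natDegree ≤ T.totalDegree ∧ (∀ t, r.eval t = MvPolynomial.eval (t • a) T) ∧
        MvPolynomial.eval a P = ∑ j ∈ range (k + 1), r.coeff j := by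
  let c (j : ℕ) : MvPolynomial σ ℝ := MvPolynomial.homogeneousComponent j T
  have hc (j : ℕ) : (c j).IsHomogeneous j := MvPolynomial.homogeneousComponent_isHomogeneous j T
  refine ⟨∑ j ∈ range (k + 1), c j, MvPolynomial.totalDegree_finsetSum_le fun j hj ↦
    (hc j).totalDegree_le.trans (mem_range_succ_iff.1 hj), fun a ↦
    ⟨∑ j ∈ range (T.totalDegree + 1), .monomial j (MvPolynomial.eval a (c j)), ?_, fun t ↦ ?_, ?_⟩⟩
  · exact Polynomial.natDegree_sum_le_of_forall_le _ _ fun j hj ↦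
      (Polynomial.natDegree_monomial_le _).trans (mem_range_succ_iff.1 hj)
  · conv_rhs => rw [← MvPolynomial.sum_homogeneousComponent T]
    simp only [Polynomial.eval_finsetSum, Polynomial.eval_monomial, map_sum,
      eval_smul_of_isHomogeneous (hc _), c, mul_comm]
  · rw [map_sum]
    refine sum_congr rfl fun j _ ↦ ?_
    rw [Polynomial.finsetSum_coeff]
    simp only [Polynomial.coeff_monomial, sum_ite_eq', mem_range]
    split_ifs with hj
    · rfl
    · simp only [c, MvPolynomial.homogeneousComponent_eq_zero j T (by omega), map_zero]

theorem abs_eval_one_sub_sum_coeff_le {k D : ℕ} {r : Polynomial ℝ} (hr : r.natDegree ≤ k + D)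
    {B : ℝ} (hB : ∀ j, k < j → |r.coeff j| ≤ B) :
    |r.eval 1 - ∑ j ∈ range (k + 1), r.coeff j| ≤ D * B := by
  rw [Polynomial.eval_eq_sum_range' (n := k + 1 + D) (by omega), sum_range_add]
  simp only [one_pow, mul_one, add_sub_cancel_left]
  calc |∑ j ∈ range D, r.coeff (k + 1 + j)| ≤ ∑ _j ∈ range D, B :=
        (abs_sum_le_sum_abs _ _).trans <| sum_le_sum fun j _ ↦ hB _ (by omega)
    _ = D * B := by rw [sum_const, card_range, nsmul_eq_mul]

theorem exists_near_of_near_higher_degree (k D : ℕ) :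
    ∃ C : ℝ, 0 ≤ C ∧ ∀ {σ : Type*} {K : Set (σ → ℝ)}, Balanced ℝ K → ∀ {f : (σ → ℝ) → ℝ},
      AlmostPolynomialOn k K f → ∀ (T : MvPolynomial σ ℝ) (B : ℝ), T.totalDegree ≤ k + D →
        (∀ x ∈ K, |f x - MvPolynomial.eval x T| ≤ B) →
          ∃ P : MvPolynomial σ ℝ, P.totalDegree ≤ k ∧
            ∀ x ∈ K, |f x - MvPolynomial.eval x P| ≤ C * (B + 1) := by
  obtain ⟨W, hW, hray⟩ := AlmostPolynomialOn.exists_near_polynomial k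
  obtain ⟨C, hC, hcoeff⟩ := exists_abs_coeff_le (k + D) (δ := 1 / ((k + D : ℕ) + 1))
    (by positivity)
  refine ⟨1 + D * (C * (1 + W)), by positivity, fun hK f hf T B hT hB ↦ ?_⟩
  obtain ⟨P, hP, hPr⟩ := exists_truncation T k
  refine ⟨P, hP, fun a ha ↦ ?_⟩
  obtain ⟨r, hr, hrT, hrP⟩ := hPr a
  obtain ⟨q, hq, hqf⟩ := hray _ (hf.ray hK ha)
  have htail (j : ℕ) (hj : k < j) : |r.coeff j| ≤ C * (B + W) := by
    have hrq : (r - q).natDegree ≤ k + D := (Polynomial.natDegree_sub_le _ _).trans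
      (max_le (hr.trans hT) (hq.trans (Nat.le_add_right k D)))
    rw [← sub_zero (r.coeff j), ← Polynomial.coeff_eq_zero_of_natDegree_lt (hq.trans_lt hj),
      ← Polynomial.coeff_sub]
    refine hcoeff _ hrq _ (fun i hi ↦ ?_) j
    have hi1 := mul_natCast_mem_closedBall hi
    have h1 := hqf _ hi1
    have h2 := hB _ (hK.smul_mem (mem_closedBall_zero_iff.1 hi1) ha)
    rw [Polynomial.eval_sub, hrT]
    rw [abs_le] at *
    constructor <;> linarith
  have hsum := abs_eval_one_sub_sum_coeff_le (hr.trans hT) htail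
  rw [hrT, one_smul, ← hrP] at hsum
  have hB0 : 0 ≤ B := (abs_nonneg _).trans (hB a ha)
  calc |f a - MvPolynomial.eval a P| ≤ B + D * (C * (B + W)) :=
        (abs_sub_le _ _ _).trans (add_le_add (hB a ha) hsum)
    _ ≤ (B + 1) + D * (C * ((1 + W) * (B + 1))) := by gcongr <;> nlinarith
    _ = (1 + D * (C * (1 + W))) * (B + 1) := by ring

end Balanced

section Cube

theorem totalDegree_toMvPolynomial_le {σ : Type*} (i : σ) (q : Polynomial ℝ) :
    (q.toMvPolynomial i).totalDegree ≤ q.natDegree := by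
  rw [Polynomial.toMvPolynomial, Polynomial.aeval_eq_sum_range]
  refine MvPolynomial.totalDegree_finsetSum_le fun j hj ↦
    (MvPolynomial.totalDegree_smul_le _ _).trans ?_
  rw [MvPolynomial.totalDegree_X_pow]
  exact Nat.lt_succ_iff.1 (mem_range.1 hj)

theorem exists_tensor_interpolation {d k : ℕ} {δ : ℝ} (hδ : δ ≠ 0)
    {T : ℕ → MvPolynomial (Fin d) ℝ} (hT : ∀ i, (T i).totalDegree ≤ k) :
    ∃ S : MvPolynomial (Fin (d + 1)) ℝ, S.totalDegree ≤ k + k ∧ ∀ y : Fin d → ℝ,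
      ∃ s : Polynomial ℝ, s.natDegree ≤ k ∧
        (∀ t, s.eval t = MvPolynomial.eval (Fin.cons t y : Fin (d + 1) → ℝ) S) ∧
        ∀ i ≤ k, s.eval (δ * i) = MvPolynomial.eval y (T i) := by
  choose b hb hbδ using fun i : ℕ ↦
    exists_natDegree_le_eval_eq k hδ (fun j ↦ if j = i then (1 : ℝ) else 0)
  refine ⟨∑ i ∈ range (k + 1), (b i).toMvPolynomial 0 * (T i).rename Fin.succ,
    MvPolynomial.totalDegree_finsetSum_le fun i _ ↦ (MvPolynomial.totalDegree_mul _ _).trans <|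
      add_le_add ((totalDegree_toMvPolynomial_le _ _).trans (hb i))
        ((MvPolynomial.totalDegree_rename_le _ _).trans (hT i)), fun y ↦ ?_⟩
  refine ⟨∑ i ∈ range (k + 1), .C (MvPolynomial.eval y (T i)) * b i, ?_, fun t ↦ ?_, fun i hi ↦ ?_⟩
  · exact Polynomial.natDegree_sum_le_of_forall_le _ _ fun i _ ↦
      (Polynomial.natDegree_C_mul_le _ _).trans (hb i)
  · rw [Polynomial.eval_finsetSum, map_sum]
    refine sum_congr rfl fun i _ ↦ ?_
    rw [map_mul, MvPolynomial.eval_toMvPolynomial, MvPolynomial.eval_rename, Polynomial.eval_C_mul,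
      mul_comm, Fin.cons_zero]
    rfl
  · rw [Polynomial.eval_finsetSum, sum_eq_single i]
    · rw [Polynomial.eval_C_mul, hbδ i i hi, if_pos rfl, mul_one]
    · intro j _ hji
      rw [Polynomial.eval_C_mul, hbδ j i hi, if_neg hji.symm, mul_zero]
    · exact fun h ↦ absurd (mem_range_succ_iff.2 hi) h

theorem cons_mem_closedBall_iff {d : ℕ} {t : ℝ} {y : Fin d → ℝ} :
    (Fin.cons t y : Fin (d + 1) → ℝ) ∈ Metric.closedBall 0 1 ↔
      t ∈ Metric.closedBall 0 1 ∧ y ∈ Metric.closedBall 0 1 := by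
  simp only [mem_closedBall_zero_iff, pi_norm_le_iff_of_nonneg zero_le_one, Fin.forall_fin_succ,
    Fin.cons_zero, Fin.cons_succ]

namespace AlmostPolynomialOn

variable {k d : ℕ} {f : (Fin (d + 1) → ℝ) → ℝ}

theorem slice_fst (hf : AlmostPolynomialOn k (Metric.closedBall 0 1) f) {y : Fin d → ℝ}
    (hy : y ∈ Metric.closedBall 0 1) :
    AlmostPolynomialOn k (Metric.closedBall 0 1) fun t : ℝ ↦ f (Fin.cons t y) :=
  hf.comp (G' := fun h ↦ Fin.cons h 0) (fun _ _ _ ↦ funext <| Fin.cases (by simp) (by simp))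
    (by fun_prop) fun _ ht ↦ cons_mem_closedBall_iff.2 ⟨ht, hy⟩

theorem slice_snd (hf : AlmostPolynomialOn k (Metric.closedBall 0 1) f) {t : ℝ}
    (ht : t ∈ Metric.closedBall 0 1) :
    AlmostPolynomialOn k (Metric.closedBall 0 1) fun y : Fin d → ℝ ↦ f (Fin.cons t y) :=
  hf.comp (G' := fun h ↦ Fin.cons 0 h) (fun _ _ _ ↦ funext <| Fin.cases (by simp) (by simp))
    (by fun_prop) fun _ hy ↦ cons_mem_closedBall_iff.2 ⟨ht, hy⟩

end AlmostPolynomialOn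

theorem HasWhitneyBound.exists_near_tensor {k d : ℕ} {C : ℝ}
    (hC : HasWhitneyBound k (Metric.closedBall (0 : Fin d → ℝ) 1) C) {δ : ℝ} (hδ : δ ≠ 0)
    (hδ1 : ∀ i : ℕ, i ≤ k → δ * i ∈ Metric.closedBall 0 1) {f : (Fin (d + 1) → ℝ) → ℝ}
    (hf : AlmostPolynomialOn k (Metric.closedBall 0 1) f) :
    ∃ S : MvPolynomial (Fin (d + 1)) ℝ, S.totalDegree ≤ k + k ∧
      ∀ y : Fin d → ℝ, y ∈ Metric.closedBall 0 1 → ∃ s : Polynomial ℝ, s.natDegree ≤ k ∧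
        (∀ t, s.eval t = MvPolynomial.eval (Fin.cons t y : Fin (d + 1) → ℝ) S) ∧
        ∀ i ≤ k, |f (Fin.cons (δ * i) y) - s.eval (δ * i)| ≤ C := by
  have hslice (i : ℕ) : ∃ T : MvPolynomial (Fin d) ℝ, T.totalDegree ≤ k ∧
      (i ≤ k → ∀ y ∈ Metric.closedBall 0 1,
        |f (Fin.cons (δ * i) y) - MvPolynomial.eval y T| ≤ C) := by
    rcases le_or_gt i k with hi | hi
    · obtain ⟨T, hT, hTf⟩ := hC _ (hf.slice_snd (hδ1 i hi))
      exact ⟨T, hT, fun _ ↦ hTf⟩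
    · exact ⟨0, by simp, fun h ↦ absurd h hi.not_ge⟩
  choose T hT hTf using hslice
  obtain ⟨S, hS, hSeval⟩ := exists_tensor_interpolation hδ hT
  refine ⟨S, hS, fun y hy ↦ ?_⟩
  obtain ⟨s, hs, hsS, hsT⟩ := hSeval y
  exact ⟨s, hs, hsS, fun i hi ↦ by simpa only [hsT i hi] using hTf i hi y hy⟩

theorem exists_hasWhitneyBound_cube (k d : ℕ) :
    ∃ C, 0 ≤ C ∧ HasWhitneyBound k (Metric.closedBall (0 : Fin d → ℝ) 1) C := by
  induction d with
  | zero =>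
    refine ⟨0, le_rfl, fun f _ ↦ ⟨.C (f 0), by simp, fun x _ ↦ ?_⟩⟩
    rw [MvPolynomial.eval_C, Subsingleton.elim x 0, sub_self, abs_zero]
  | succ d ih =>
    obtain ⟨C, hC, hcube⟩ := ih
    obtain ⟨W, hW, hline⟩ := AlmostPolynomialOn.exists_near_polynomial k
    have hδ : 1 / ((k : ℝ) + 1) ≠ 0 := by positivity
    obtain ⟨Λ, hΛ, hval⟩ := exists_abs_eval_le k hδ 1
    obtain ⟨D, hD, hreduce⟩ := exists_near_of_near_higher_degree k k
    refine ⟨D * (W + Λ * (W + C) + 1), by positivity, fun f hf ↦ ?_⟩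
    obtain ⟨S, hS, hSf⟩ := hcube.exists_near_tensor hδ (fun _ ↦ mul_natCast_mem_closedBall) hf
    refine hreduce balanced_closedBall_zero hf S _ hS fun z hz ↦ ?_
    obtain ⟨t, y, rfl⟩ : ∃ t y, z = Fin.cons t y := ⟨z 0, Fin.tail z, (Fin.cons_self_tail z).symm⟩
    obtain ⟨ht, hy⟩ := cons_mem_closedBall_iff.1 hz
    obtain ⟨s, hs, hsS, hsf⟩ := hSf y hy
    obtain ⟨q, hq, hqf⟩ := hline _ (hf.slice_fst hy)
    have hqs : |(q - s).eval t| ≤ Λ * (W + C) := by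
      refine hval _ ((Polynomial.natDegree_sub_le _ _).trans (max_le hq hs)) _ (fun i hi ↦ ?_) t ht
      have h1 := hqf _ (mul_natCast_mem_closedBall hi)
      have h2 := hsf i hi
      rw [Polynomial.eval_sub]
      rw [abs_le] at *
      constructor <;> linarith
    rw [Polynomial.eval_sub, hsS] at hqs
    exact (abs_sub_le _ _ _).trans (add_le_add (hqf t ht) hqs)

end Cube

section LpBall

variable {p : ℝ} {n : ℕ} {x y : Fin n → ℝ}

theorem abs_le_one_of_mem_lpBall (hp : 0 < p) (hx : x ∈ lpBall n p) (i : Fin n) : |x i| ≤ 1 := by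
  refine le_of_not_gt fun hi ↦ (Real.one_lt_rpow hi hp).not_ge ?_
  exact (single_le_sum (f := fun j ↦ |x j| ^ p) (fun _ _ ↦ by positivity) (mem_univ i)).trans hx

theorem lpBall_mono (hp : 0 ≤ p) (hx : x ∈ lpBall n p) (hxy : ∀ i, |y i| ≤ |x i|) :
    y ∈ lpBall n p :=
  (sum_le_sum fun i _ ↦ Real.rpow_le_rpow (abs_nonneg _) (hxy i) hp).trans hx

theorem balanced_lpBall (hp : 0 ≤ p) : Balanced ℝ (lpBall n p) :=
  balanced_iff_smul_mem.2 fun _ ha _ hx ↦ lpBall_mono hp hx fun i ↦ by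
    rw [Pi.smul_apply, smul_eq_mul, abs_mul]
    exact mul_le_of_le_one_left (abs_nonneg _) ha

theorem zero_mem_lpBall (hp : 0 < p) : (0 : Fin n → ℝ) ∈ lpBall n p := by
  simp [lpBall, Real.zero_rpow hp.ne']

theorem lpBall_subset_closedBall (hp : 0 < p) : lpBall n p ⊆ Metric.closedBall 0 1 := fun x hx ↦ by
  rw [mem_closedBall_zero_iff, pi_norm_le_iff_of_nonneg zero_le_one]
  exact abs_le_one_of_mem_lpBall hp hx

theorem isCompact_lpBall (hp : 0 < p) : IsCompact (lpBall n p) := by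
  refine (isCompact_closedBall 0 1).of_isClosed_subset ?_ (lpBall_subset_closedBall hp)
  exact isClosed_le (continuous_finsetSum _ fun i _ ↦
    (continuous_apply i).abs.rpow_const fun _ ↦ Or.inr hp.le) continuous_const

theorem exists_smul_mem_lpBall (hp : 0 < p) (d : ℕ) : ∃ ρ : ℝ, 0 < ρ ∧ ρ ≤ 1 ∧
    Set.MapsTo (fun x : Fin d → ℝ ↦ ρ • x) (Metric.closedBall 0 1) (lpBall d p) := by
  refine ⟨(1 / (d + 1 : ℝ)) ^ (1 / p), by positivity, ?_, fun x hx ↦ ?_⟩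
  · exact Real.rpow_le_one (by positivity) (div_le_one_of_le₀ (by simp) (by positivity))
      (by positivity)
  · rw [mem_closedBall_zero_iff, pi_norm_le_iff_of_nonneg zero_le_one] at hx
    calc ∑ i, |(((1 / (d + 1 : ℝ)) ^ (1 / p)) • x) i| ^ p ≤ ∑ _i : Fin d, 1 / (d + 1 : ℝ) := by
          refine sum_le_sum fun i _ ↦ ?_
          rw [Pi.smul_apply, smul_eq_mul, abs_mul, Real.mul_rpow (abs_nonneg _) (abs_nonneg _),
            abs_of_pos (by positivity), ← Real.rpow_mul (by positivity), one_div_mul_cancel hp.ne',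
            Real.rpow_one]
          exact mul_le_of_le_one_right (by positivity)
            (Real.rpow_le_one (abs_nonneg _) (hx i) hp.le)
      _ = d / (d + 1) := by rw [sum_const, card_univ, Fintype.card_fin, nsmul_eq_mul, mul_one_div]
      _ ≤ 1 := div_le_one_of_le₀ (by simp) (by positivity)

theorem exists_mvPolynomial_eval_mul {σ : Type*} (P : MvPolynomial σ ℝ) (c : σ → ℝ) :
    ∃ Q : MvPolynomial σ ℝ, Q.totalDegree ≤ P.totalDegree ∧
      ∀ y, MvPolynomial.eval y Q = MvPolynomial.eval (c * y) P := by
  refine ⟨∑ e ∈ P.support, .monomial e (P.coeff e * ∏ i ∈ e.support, c i ^ e i),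
    MvPolynomial.totalDegree_finsetSum_le fun e he ↦
      (MvPolynomial.totalDegree_monomial_le _ _).trans (MvPolynomial.le_totalDegree he),
    fun y ↦ ?_⟩
  rw [map_sum, MvPolynomial.eval_eq]
  refine sum_congr rfl fun e _ ↦ ?_
  simp only [MvPolynomial.eval_monomial, Finsupp.prod, Pi.mul_apply, mul_pow, prod_mul_distrib,
    mul_assoc]

theorem exists_hasWhitneyBound_lpBall (hp : 0 < p) (k d : ℕ) :
    ∃ C, 0 ≤ C ∧ HasWhitneyBound k (lpBall d p) C := by
  obtain ⟨C, hC, hcube⟩ := exists_hasWhitneyBound_cube k d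
  obtain ⟨ρ, hρ, hρ1, hρcube⟩ := exists_smul_mem_lpBall hp d
  obtain ⟨D, hD, hdilate⟩ := exists_abs_le_of_dilate k hρ hρ1
  refine ⟨D * (C + 1), by positivity, fun f hf ↦ ?_⟩
  obtain ⟨P, hP, hPf⟩ := hcube _ <| hf.comp_clm (ρ • .id ℝ _) hρcube
  obtain ⟨Q, hQ, hQP⟩ := exists_mvPolynomial_eval_mul P fun _ ↦ ρ⁻¹
  refine ⟨Q, hQ.trans hP, hdilate (balanced_lpBall hp.le) (hf.sub_mvPolynomial (hQ.trans hP)) C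
    fun x hx ↦ ?_⟩
  have hQx : MvPolynomial.eval (ρ • x) Q = MvPolynomial.eval x P := by
    rw [hQP]
    exact congrArg (fun y ↦ MvPolynomial.eval y P) (inv_smul_smul₀ hρ.ne' x)
  rw [hQx]
  exact hPf x (lpBall_subset_closedBall hp hx)

end LpBall

section Lattice

/-- The node `δ β` of the simplicial lattice `{δ β : ∑ i, β i ≤ k}`, which is unisolvent for
polynomials of degree at most `k`. -/
def latticePoint {σ : Type*} (δ : ℝ) (β : σ → ℕ) : σ → ℝ := fun i ↦ δ * β i

variable {σ : Type*} [Fintype σ] {k : ℕ} {δ : ℝ}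

theorem eq_zero_of_eval_latticePoint (hδ : δ ≠ 0) {P : MvPolynomial σ ℝ} (hP : P.totalDegree ≤ k)
    (h : ∀ β : σ → ℕ, ∑ i, β i ≤ k → MvPolynomial.eval (latticePoint δ β) P = 0) : P = 0 := by
  classical
  by_contra hne
  obtain ⟨t, ht, hdeg⟩ := exists_mem_eq_sup P.support
    (MvPolynomial.support_nonempty.2 hne) fun e ↦ e.degree
  have hcard (i : σ) : t i < #((range (t i + 1)).image fun j : ℕ ↦ δ * j) := by
    have hinj : Function.Injective fun j : ℕ ↦ δ * j :=
      (mul_right_injective₀ hδ).comp Nat.cast_injective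
    rw [card_image_of_injective _ hinj, card_range]
    exact Nat.lt_succ_self _
  obtain ⟨s, hs, hs0⟩ := MvPolynomial.combinatorial_nullstellensatz_exists_eval_nonzero P t
    (MvPolynomial.mem_support_iff.1 ht) hdeg _ hcard
  simp only [mem_image, mem_range, Nat.lt_succ_iff] at hs
  choose β hβ hβs using hs
  refine hs0 ((funext hβs : latticePoint δ β = s) ▸ h β ?_)
  calc ∑ i, β i ≤ ∑ i, t i := sum_le_sum fun i _ ↦ hβ i
    _ = P.totalDegree := by rw [← Finsupp.degree_eq_sum]; exact hdeg.symm
    _ ≤ k := hP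

/-- Evaluation of polynomials of degree at most `k` at the nodes of the simplicial lattice. -/
noncomputable def evalLattice (σ : Type*) [Fintype σ] (k : ℕ) (δ : ℝ) :
    MvPolynomial.restrictTotalDegree σ ℝ k →ₗ[ℝ] {β : σ → ℕ // ∑ i, β i ≤ k} → ℝ :=
  LinearMap.pi fun β ↦ (MvPolynomial.aeval (latticePoint δ β.1)).toLinearMap ∘ₗ Submodule.subtype _

theorem evalLattice_injective (hδ : δ ≠ 0) : Function.Injective (evalLattice σ k δ) :=
  (injective_iff_map_eq_zero _).2 fun P hP ↦ Subtype.ext <|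
    eq_zero_of_eval_latticePoint hδ ((MvPolynomial.mem_restrictTotalDegree σ k P.1).1 P.2)
      fun β hβ ↦ congrFun hP ⟨β, hβ⟩

/-- The monomial basis of the polynomials of degree at most `k`, indexed in the same way as the
nodes of the simplicial lattice. -/
noncomputable def simplexBasis (σ : Type*) [Fintype σ] (k : ℕ) :
    Module.Basis {β : σ → ℕ // ∑ i, β i ≤ k} ℝ (MvPolynomial.restrictTotalDegree σ ℝ k) :=
  (MvPolynomial.basisRestrictSupport ℝ _).reindex <|
    Finsupp.equivFunOnFinite.subtypeEquiv fun e ↦ by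
      rw [Set.mem_ofPred_eq, Finsupp.sum_fintype _ _ fun _ ↦ rfl]
      rfl

instance finite_simplex : Finite {β : σ → ℕ // ∑ i, β i ≤ k} :=
  Module.Finite.finite_basis (simplexBasis σ k)

theorem evalLattice_surjective (hδ : δ ≠ 0) : Function.Surjective (evalLattice σ k δ) := by
  have := Fintype.ofFinite {β : σ → ℕ // ∑ i, β i ≤ k}
  refine (LinearMap.injective_iff_surjective_of_finrank_eq_finrank ?_).1 (evalLattice_injective hδ)
  rw [Module.finrank_eq_card_basis (simplexBasis σ k), Module.finrank_fintype_fun_eq_card]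

theorem exists_eval_latticePoint_eq (hδ : δ ≠ 0) (k : ℕ) (f : (σ → ℝ) → ℝ) :
    ∃ P : MvPolynomial σ ℝ, P.totalDegree ≤ k ∧ ∀ β : σ → ℕ, ∑ i, β i ≤ k →
      MvPolynomial.eval (latticePoint δ β) P = f (latticePoint δ β) := by
  obtain ⟨P, hP⟩ := evalLattice_surjective (k := k) hδ fun β ↦ f (latticePoint δ β.1)
  exact ⟨P, (MvPolynomial.mem_restrictTotalDegree σ k P.1).1 P.2, fun β hβ ↦ congrFun hP ⟨β, hβ⟩⟩

theorem exists_abs_eval_le_of_latticePoint (hδ : δ ≠ 0) (k : ℕ) {K : Set (σ → ℝ)}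
    (hK : IsCompact K) :
    ∃ C : ℝ, ∀ P : MvPolynomial σ ℝ, P.totalDegree ≤ k → ∀ B,
      (∀ β : σ → ℕ, ∑ i, β i ≤ k → |MvPolynomial.eval (latticePoint δ β) P| ≤ B) →
        ∀ x ∈ K, |MvPolynomial.eval x P| ≤ C * B := by
  obtain ⟨C, -, hstable⟩ := exists_abs_le_of_injective (evalLattice_injective (k := k) hδ)
    (φ := fun x : K ↦ (MvPolynomial.aeval x.1).toLinearMap ∘ₗ Submodule.subtype _) fun P ↦ by
      obtain ⟨c, hc⟩ := hK.exists_bound_of_continuousOn P.1.continuous_eval.continuousOn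
      exact ⟨c, fun x ↦ hc x x.2⟩
  exact ⟨C, fun P hP B hB x hx ↦ hstable
    ⟨P, (MvPolynomial.mem_restrictTotalDegree σ k P).2 hP⟩ B (fun β ↦ hB β.1 β.2) ⟨x, hx⟩⟩

/-- A mesh for which the simplicial lattice of order `k` fits into the ball of `ℓ_p`, `p ≤ 1`, in
every dimension. -/
noncomputable def nodeScale (k : ℕ) (p : ℝ) : ℝ := (1 / (k + 1)) ^ (1 / p)

theorem nodeScale_pos (k : ℕ) (p : ℝ) : 0 < nodeScale k p := by
  unfold nodeScale
  positivity

theorem latticePoint_nodeScale_mem_lpBall {p : ℝ} (hp : 0 < p) (hp1 : p ≤ 1) {n : ℕ}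
    {β : Fin n → ℕ} (hβ : ∑ i, β i ≤ k) : latticePoint (nodeScale k p) β ∈ lpBall n p := by
  have hterm (i : Fin n) : |latticePoint (nodeScale k p) β i| ^ p ≤ 1 / (k + 1) * β i := by
    rw [latticePoint, abs_of_nonneg (mul_nonneg (nodeScale_pos k p).le (Nat.cast_nonneg _)),
      nodeScale, Real.mul_rpow (by positivity) (Nat.cast_nonneg _), ← Real.rpow_mul (by positivity),
      one_div_mul_cancel hp.ne', Real.rpow_one]
    gcongr
    rcases Nat.eq_zero_or_pos (β i) with h | h
    · rw [h, Nat.cast_zero, Real.zero_rpow hp.ne']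
    · simpa using Real.rpow_le_rpow_of_exponent_le (Nat.one_le_cast.2 h) hp1
  calc ∑ i, |latticePoint (nodeScale k p) β i| ^ p ≤ ∑ i, 1 / ((k : ℝ) + 1) * β i :=
        sum_le_sum fun i _ ↦ hterm i
    _ = ((∑ i, β i : ℕ) : ℝ) / (k + 1) := by rw [← mul_sum, Nat.cast_sum, one_div_mul_eq_div]
    _ ≤ 1 := div_le_one_of_le₀ (by exact_mod_cast hβ.trans k.le_succ) (by positivity)

end Lattice

section Markov

theorem exists_abs_eval_smul_le (k : ℕ) (R : ℝ) :
    ∃ C : ℝ, 0 ≤ C ∧ ∀ {σ : Type*} {K : Set (σ → ℝ)}, Balanced ℝ K →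
      ∀ P : MvPolynomial σ ℝ, P.totalDegree ≤ k → ∀ B, (∀ x ∈ K, |MvPolynomial.eval x P| ≤ B) →
        ∀ x ∈ K, ∀ t : ℝ, t ∈ Metric.closedBall 0 R → |MvPolynomial.eval (t • x) P| ≤ C * B := by
  obtain ⟨C, hC, hval⟩ := exists_abs_eval_le k (δ := 1 / (k + 1)) (by positivity) R
  refine ⟨C, hC, fun hK P hP B hB x hx t ht ↦ ?_⟩
  obtain ⟨q, hq, hqP⟩ := exists_polynomial_eval_line P 0 x
  simp only [zero_add] at hqP
  rw [← hqP]
  refine hval q (hq.trans hP) B (fun i hi ↦ ?_) t ht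
  rw [hqP]
  exact hB _ (hK.smul_mem (mem_closedBall_zero_iff.1 (mul_natCast_mem_closedBall hi)) hx)

variable {p : ℝ} {d : ℕ}

theorem exists_smul_eq_of_sum_rpow_le (hp : 0 < p) {M : ℝ} (hM : 0 < M) {y : Fin d → ℝ}
    (hy : ∑ i, |y i| ^ p ≤ M) : ∃ x ∈ lpBall d p, M ^ (1 / p) • x = y := by
  have hR : 0 < M ^ (1 / p) := by positivity
  refine ⟨(M ^ (1 / p))⁻¹ • y, ?_, smul_inv_smul₀ hR.ne' y⟩
  have hterm (i : Fin d) : |((M ^ (1 / p))⁻¹ • y) i| ^ p = M⁻¹ * |y i| ^ p := by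
    rw [Pi.smul_apply, smul_eq_mul, abs_mul, Real.mul_rpow (abs_nonneg _) (abs_nonneg _),
      abs_of_pos (inv_pos.2 hR), Real.inv_rpow hR.le, ← Real.rpow_mul hM.le,
      one_div_mul_cancel hp.ne', Real.rpow_one]
  calc ∑ i, |((M ^ (1 / p))⁻¹ • y) i| ^ p = M⁻¹ * ∑ i, |y i| ^ p := by simp only [hterm, mul_sum]
    _ ≤ 1 := by rwa [inv_mul_le_iff₀ hM, mul_one]

theorem sum_abs_update_rpow_le (hp : 0 ≤ p) {x : Fin d → ℝ} (hx : x ∈ lpBall d p) (l : Fin d)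
    {r : ℝ} (hr : |r| ≤ 1) : ∑ i, |Function.update x l r i| ^ p ≤ 2 := by
  rw [← add_sum_erase univ _ (mem_univ l), Function.update_self]
  have hsum : ∑ i ∈ univ.erase l, |Function.update x l r i| ^ p ≤ ∑ i, |x i| ^ p := by
    refine (sum_congr rfl fun i hi ↦ ?_).trans_le
      (sum_le_sum_of_subset_of_nonneg (erase_subset l univ) fun _ _ _ ↦ by positivity)
    rw [Function.update_of_ne (ne_of_mem_erase hi)]
  linarith [Real.rpow_le_one (abs_nonneg r) hr hp, hsum.trans hx]

theorem exists_abs_eval_update_le (hp : 0 < p) (k : ℕ) :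
    ∃ C : ℝ, 0 ≤ C ∧ ∀ {d : ℕ} (P : MvPolynomial (Fin d) ℝ), P.totalDegree ≤ k → ∀ B,
      (∀ x ∈ lpBall d p, |MvPolynomial.eval x P| ≤ B) → ∀ x ∈ lpBall d p, ∀ l,
        |MvPolynomial.eval x P - MvPolynomial.eval (Function.update x l 0) P| ≤ C * B * |x l| := by
  obtain ⟨C₁, hC₁, hsmul⟩ := exists_abs_eval_smul_le k (2 ^ (1 / p))
  obtain ⟨C₂, hC₂, hlip⟩ := exists_abs_eval_sub_eval_le k (δ := 1 / (k + 1)) (by positivity) 1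
  refine ⟨C₂ * C₁, by positivity, fun P hP B hB x hx l ↦ ?_⟩
  have henlarge (y : Fin _ → ℝ) (hy : ∑ i, |y i| ^ p ≤ 2) :
      |MvPolynomial.eval y P| ≤ C₁ * B := by
    obtain ⟨z, hz, rfl⟩ := exists_smul_eq_of_sum_rpow_le hp two_pos hy
    refine hsmul (balanced_lpBall hp.le) P hP B hB z hz _ (mem_closedBall_zero_iff.2 ?_)
    rw [Real.norm_of_nonneg (by positivity)]
  obtain ⟨q, hq, hqP⟩ := exists_polynomial_eval_line P (Function.update x l 0) (Pi.single l 1)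
  have hupdate (r : ℝ) : Function.update x l 0 + r • Pi.single l 1 = Function.update x l r := by
    ext i
    rcases eq_or_ne i l with rfl | hi <;> simp [*]
  simp only [hupdate] at hqP
  have hnodes (i : ℕ) (hi : i ≤ k) : |q.eval (1 / ((k : ℝ) + 1) * i)| ≤ C₁ * B := by
    rw [hqP]
    exact henlarge _ <| sum_abs_update_rpow_le hp.le hx l <|
      mem_closedBall_zero_iff.1 (mul_natCast_mem_closedBall hi)
  have := hlip q (hq.trans hP) _ hnodes 0 (by simp) (x l)
    (mem_closedBall_zero_iff.2 (abs_le_one_of_mem_lpBall hp hx l))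
  rwa [hqP, hqP, Function.update_eq_self, sub_zero, ← mul_assoc] at this

theorem piecewise_zero_mem_lpBall (hp : 0 ≤ p) {x : Fin d → ℝ} (hx : x ∈ lpBall d p)
    (V : Finset (Fin d)) : V.piecewise 0 x ∈ lpBall d p :=
  lpBall_mono hp hx fun i ↦ by by_cases hi : i ∈ V <;> simp [hi]

-- A Markov-type inequality. The constant is uniform in `d`: each coordinate is varied within an
-- `ℓ_p`-ball of radius `2 ^ (1 / p)`.
theorem exists_abs_eval_piecewise_le (hp : 0 < p) (k : ℕ) :
    ∃ C : ℝ, 0 ≤ C ∧ ∀ {d : ℕ} (P : MvPolynomial (Fin d) ℝ), P.totalDegree ≤ k → ∀ B,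
      (∀ x ∈ lpBall d p, |MvPolynomial.eval x P| ≤ B) → ∀ x ∈ lpBall d p, ∀ V : Finset (Fin d),
        |MvPolynomial.eval x P - MvPolynomial.eval (V.piecewise 0 x) P| ≤
          C * B * ∑ l ∈ V, |x l| := by
  obtain ⟨C, hC, hone⟩ := exists_abs_eval_update_le hp k
  refine ⟨C, hC, fun P hP B hB x hx V ↦ ?_⟩
  induction V using Finset.induction_on with
  | empty => simp
  | insert l V hl ih =>
    have hstep := hone P hP B hB _ (piecewise_zero_mem_lpBall hp.le hx V) l
    rw [piecewise_eq_of_notMem _ _ _ hl] at hstep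
    rw [piecewise_insert, Pi.zero_apply, sum_insert hl, mul_add, add_comm (_ * |x l|)]
    exact (abs_sub_le _ _ _).trans (add_le_add ih hstep)

end Markov

section Blocks

theorem exists_sum_fiber_le {ι : Type*} {L : ℕ} (hL : 0 < L) {s : Finset ι} {w : ι → ℝ}
    (hs : ∑ i ∈ s, w i ≤ 1) (b : ι → Fin L) : ∃ l, ∑ i ∈ s with b i = l, w i ≤ 1 / L := by
  have : Nonempty (Fin L) := ⟨⟨0, hL⟩⟩
  obtain ⟨l, -, hl⟩ := exists_le_of_sum_le (s := univ) (f := fun l ↦ ∑ i ∈ s with b i = l, w i)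
    (g := fun _ ↦ 1 / (L : ℝ)) univ_nonempty <| by
      rw [sum_fiberwise, sum_const, card_univ, Fintype.card_fin, nsmul_eq_mul,
        mul_one_div_cancel (by positivity)]
      exact hs
  exact ⟨l, hl⟩

-- Each new element goes into a bin of total weight at most `1 / L` and becomes the representative
-- of that bin, so the non-representatives of a bin are part of an earlier light bin.
theorem exists_bins {ι : Type*} [DecidableEq ι] {L : ℕ} (hL : 0 < L) (s : Finset ι) {w : ι → ℝ}
    (hw : ∀ i, 0 ≤ w i) (hs : ∑ i ∈ s, w i ≤ 1) : ∃ (b : ι → Fin L) (T : Finset ι),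
      Set.InjOn b T ∧ ∀ l, ∑ i ∈ s \ T with b i = l, w i ≤ 1 / L := by
  induction s using Finset.induction_on with
  | empty => exact ⟨fun _ ↦ ⟨0, hL⟩, ∅, by simp, by simp⟩
  | insert a s ha ih =>
    rw [sum_insert ha] at hs
    have hs' : ∑ i ∈ s, w i ≤ 1 := by linarith [hw a]
    obtain ⟨b, T, hT, hb⟩ := ih hs'
    obtain ⟨l₀, hl₀⟩ := exists_sum_fiber_le hL hs' b
    refine ⟨Function.update b a l₀, insert a {i ∈ T | b i ≠ l₀}, ?_, fun l ↦ ?_⟩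
    · intro i hi j hj hij
      grind [Function.update_apply, Set.InjOn]
    · rcases eq_or_ne l l₀ with rfl | hl
      · refine (sum_le_sum_of_subset_of_nonneg ?_ fun i _ _ ↦ hw i).trans hl₀
        grind [Function.update_apply]
      · refine (sum_le_sum_of_subset_of_nonneg ?_ fun i _ _ ↦ hw i).trans (hb l)
        grind [Function.update_apply]

variable {p : ℝ} {n d : ℕ}

theorem exists_mul_eq_of_sum_rpow (hp : 0 < p) (F : Finset (Fin n)) (x : Fin n → ℝ) :
    ∃ (s : ℝ) (y : Fin n → ℝ), (∀ i ∈ F, s * y i = x i) ∧ ∑ i ∈ F, |y i| ^ p ≤ 1 ∧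
      |s| ^ p ≤ ∑ i ∈ F, |x i| ^ p ∧ (F.card ≤ 1 → ∀ i ∈ F, y i = 1) := by
  rcases le_or_gt F.card 1 with hF | hF
  · rcases F.eq_empty_or_nonempty with rfl | hne
    · exact ⟨0, 0, by simp [Real.zero_rpow hp.ne']⟩
    · obtain ⟨i, rfl⟩ := card_eq_one.1 (hF.antisymm hne.card_pos)
      exact ⟨x i, 1, by simp⟩
  set M : ℝ := ∑ i ∈ F, |x i| ^ p with hM
  have hxM (i : Fin n) (hi : i ∈ F) : |x i| ^ p ≤ M :=
    single_le_sum (f := fun i ↦ |x i| ^ p) (fun _ _ ↦ by positivity) hi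
  have hM0 : 0 ≤ M := sum_nonneg fun _ _ ↦ by positivity
  rcases hM0.eq_or_lt' with hM0 | hM0
  · refine ⟨0, 0, fun i hi ↦ ?_, by simp [Real.zero_rpow hp.ne'], by simp [hM0, hp.ne'],
      fun h ↦ absurd h hF.not_ge⟩
    have hxi : |x i| ^ p = 0 := le_antisymm (hM0 ▸ hxM i hi) (by positivity)
    rw [zero_mul, abs_eq_zero.1 ((Real.rpow_eq_zero (abs_nonneg _) hp.ne').1 hxi)]
  · obtain ⟨y, hy, hyx⟩ := exists_smul_eq_of_sum_rpow_le hp hM0 (y := F.piecewise x 0) <| by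
      simp [hM, piecewise, apply_ite, Real.zero_rpow hp.ne']
    refine ⟨M ^ (1 / p), y, fun i hi ↦ ?_, ?_, ?_, fun h ↦ absurd h hF.not_ge⟩
    · simpa [hi] using congrFun hyx i
    · exact (sum_le_sum_of_subset_of_nonneg (subset_univ F) fun _ _ _ ↦ by positivity).trans hy
    · rw [abs_of_nonneg (by positivity), ← Real.rpow_mul hM0.le, one_div_mul_cancel hp.ne',
        Real.rpow_one]

/-- A compression of a vector `x` to `d` coordinates. The coordinates of `x` are grouped into `d`
blocks, and on the block `c` the vector `x` is `coord c` times a vector `weight` of `ℓ_p`-norm at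
most `1`. The blocks outside `V` are single coordinates carried over unchanged; the `coord` of the
blocks in `V` have total mass at most `ε`. -/
structure BlockDecomposition (p ε : ℝ) (V : Finset (Fin d)) (x : Fin n → ℝ) where
  block : Fin n → Fin d
  weight : Fin n → ℝ
  coord : Fin d → ℝ
  coord_mul_weight : ∀ i, coord (block i) * weight i = x i
  sum_weight_le : ∀ c, ∑ i with block i = c, |weight i| ^ p ≤ 1
  coord_mem : coord ∈ lpBall d p
  sum_abs_coord_le : ∑ c ∈ V, |coord c| ≤ ε
  weight_eq_one : ∀ i, block i ∉ V → weight i = 1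
  injOn_block : Set.InjOn block {i | block i ∉ V}

namespace BlockDecomposition

variable {ε : ℝ} {V : Finset (Fin d)} {x : Fin n → ℝ}

/-- The linear map `ℝᵈ → ℝⁿ` undoing the compression. -/
def expand (D : BlockDecomposition p ε V x) : (Fin d → ℝ) →L[ℝ] Fin n → ℝ :=
  .pi fun i ↦ D.weight i • .proj (D.block i)

theorem expand_apply (D : BlockDecomposition p ε V x) (τ : Fin d → ℝ) (i : Fin n) :
    D.expand τ i = τ (D.block i) * D.weight i :=
  mul_comm _ _

theorem expand_coord (D : BlockDecomposition p ε V x) : D.expand D.coord = x :=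
  funext fun i ↦ (D.expand_apply _ i).trans (D.coord_mul_weight i)

theorem mapsTo_expand (D : BlockDecomposition p ε V x) :
    Set.MapsTo D.expand (lpBall d p) (lpBall n p) := fun τ hτ ↦
  calc ∑ i, |D.expand τ i| ^ p = ∑ c, |τ c| ^ p * ∑ i with D.block i = c, |D.weight i| ^ p := by
        rw [← sum_fiberwise univ D.block]
        refine sum_congr rfl fun c _ ↦ ?_
        rw [mul_sum]
        refine sum_congr rfl fun i hi ↦ ?_
        rw [D.expand_apply, (mem_filter.1 hi).2, abs_mul,
          Real.mul_rpow (abs_nonneg _) (abs_nonneg _)]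
    _ ≤ ∑ c, |τ c| ^ p := sum_le_sum fun c _ ↦
        mul_le_of_le_one_right (by positivity) (D.sum_weight_le c)
    _ ≤ 1 := hτ

theorem exists_expand_piecewise_latticePoint (D : BlockDecomposition p ε V x) (δ : ℝ)
    (β : Fin d → ℕ) : ∃ γ : Fin n → ℕ, ∑ i, γ i ≤ ∑ c, β c ∧
      D.expand (V.piecewise 0 (latticePoint δ β)) = latticePoint δ γ := by
  refine ⟨fun i ↦ if D.block i ∈ V then 0 else β (D.block i), ?_, funext fun i ↦ ?_⟩
  · calc ∑ i, (if D.block i ∈ V then 0 else β (D.block i))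
        = ∑ i with D.block i ∉ V, β (D.block i) := by simp only [sum_filter, ite_not]
      _ = ∑ c ∈ image D.block {i | D.block i ∉ V}, β c :=
          (sum_image fun i hi j hj ↦ D.injOn_block (by simpa using hi) (by simpa using hj)).symm
      _ ≤ ∑ c, β c := sum_le_sum_of_subset (subset_univ _)
  · rw [D.expand_apply]
    by_cases hi : D.block i ∈ V
    · simp [latticePoint, hi]
    · simp [latticePoint, hi, D.weight_eq_one i hi]

end BlockDecomposition

theorem abs_le_rpow_mul_of_rpow_le (hp : 0 < p) (hp1 : p ≤ 1) {s a : ℝ} (hs : |s| ^ p ≤ a) :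
    |s| ≤ a ^ (1 / p - 1) * |s| ^ p := by
  have hp' : 0 ≤ 1 / p - 1 := sub_nonneg.2 (one_le_one_div hp hp1)
  calc |s| = (|s| ^ p) ^ (1 / p - 1 + 1) := by
        rw [sub_add_cancel, ← Real.rpow_mul (abs_nonneg s), mul_one_div_cancel hp.ne',
          Real.rpow_one]
    _ = (|s| ^ p) ^ (1 / p - 1) * |s| ^ p := Real.rpow_add_one' (by positivity) (by positivity)
    _ ≤ a ^ (1 / p - 1) * |s| ^ p := by gcongr

theorem exists_one_div_rpow_le (hp : 0 < p) (hp1 : p < 1) {ε : ℝ} (hε : 0 < ε) :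
    ∃ L : ℕ, 0 < L ∧ (1 / (L : ℝ)) ^ (1 / p - 1) ≤ ε := by
  have hp' : 0 < 1 / p - 1 := sub_pos.2 (one_lt_one_div hp hp1)
  have hlim := (tendsto_const_div_atTop_nhds_zero_nat 1).rpow_const (Or.inr hp'.le)
  rw [Real.zero_rpow hp'.ne'] at hlim
  exact ((Filter.eventually_gt_atTop 0).and (hlim.eventually_le_const hε)).exists

theorem nonempty_blockDecomposition (hp : 0 < p) (hp1 : p ≤ 1) {x : Fin n → ℝ}
    (hx : x ∈ lpBall n p) {block : Fin n → Fin d} {V : Finset (Fin d)}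
    (hblock : Set.InjOn block {i | block i ∉ V}) {a : ℝ} (ha : 0 ≤ a)
    (hV : ∀ c ∈ V, ∑ i with block i = c, |x i| ^ p ≤ a) :
    Nonempty (BlockDecomposition p (a ^ (1 / p - 1)) V x) := by
  choose coord y hmul hy hcoord hone using fun c ↦
    exists_mul_eq_of_sum_rpow hp {i | block i = c} x
  have hmem : coord ∈ lpBall d p :=
    calc ∑ c, |coord c| ^ p ≤ ∑ c, ∑ i with block i = c, |x i| ^ p :=
          sum_le_sum fun c _ ↦ hcoord c
      _ = ∑ i, |x i| ^ p := sum_fiberwise _ _ _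
      _ ≤ 1 := hx
  refine ⟨block, fun i ↦ y (block i) i, coord, fun i ↦ hmul _ i (by simp), fun c ↦ ?_, hmem, ?_,
    fun i hi ↦ hone _ (card_le_one.2 fun j hj l hl ↦ ?_) i (by simp), hblock⟩
  · refine (sum_congr rfl fun i hi ↦ ?_).trans_le (hy c)
    rw [(mem_filter.1 hi).2]
  · calc ∑ c ∈ V, |coord c| ≤ ∑ c ∈ V, a ^ (1 / p - 1) * |coord c| ^ p :=
          sum_le_sum fun c hc ↦ abs_le_rpow_mul_of_rpow_le hp hp1 ((hcoord c).trans (hV c hc))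
      _ ≤ a ^ (1 / p - 1) * ∑ c, |coord c| ^ p := by
          rw [← mul_sum]
          gcongr
          exact subset_univ V
      _ ≤ a ^ (1 / p - 1) := mul_le_of_le_one_right (by positivity) hmem
  · simp only [mem_filter, mem_univ, true_and] at hj hl
    exact hblock (by simpa [hj] using hi) (by simpa [hl] using hi) (hj.trans hl.symm)

theorem exists_blockDecomposition (hp : 0 < p) (hp1 : p < 1) {ε : ℝ} (hε : 0 < ε) :
    ∃ (d : ℕ) (V : Finset (Fin d)), ∀ {n : ℕ}, ∀ x ∈ lpBall n p,
      Nonempty (BlockDecomposition p ε V x) := by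
  obtain ⟨L, hL, hLε⟩ := exists_one_div_rpow_le hp hp1 hε
  let V : Finset (Fin (L + L)) := univ.image (Fin.natAdd L)
  refine ⟨L + L, V, fun {n} x hx ↦ ?_⟩
  obtain ⟨b, T, hT, hb⟩ := exists_bins hL univ (fun i ↦ by positivity) hx
  let block (i : Fin n) : Fin (L + L) := if i ∈ T then Fin.castAdd L (b i) else Fin.natAdd L (b i)
  have hne (l l' : Fin L) : Fin.castAdd L l ≠ Fin.natAdd L l' := by
    rw [ne_eq, Fin.ext_iff, Fin.val_castAdd, Fin.val_natAdd]
    omega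
  have hblock (i : Fin n) : block i ∈ V ↔ i ∉ T := by
    by_cases hi : i ∈ T
    · simpa [block, V, hi] using fun l ↦ (hne (b i) l).symm
    · simp [block, V, hi]
  have hinj : Set.InjOn block {i | block i ∉ V} := fun i hi j hj hij ↦ by
    simp only [Set.mem_ofPred_eq, hblock, not_not] at hi hj
    exact hT hi hj (by simpa [block, hi, hj] using hij)
  have hlight : ∀ c ∈ V, ∑ i with block i = c, |x i| ^ p ≤ 1 / L := by
    simp only [V, mem_image, mem_univ, true_and, forall_exists_index, forall_apply_eq_imp_iff]
    intro l
    convert hb l using 2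
    ext i
    by_cases hi : i ∈ T
    · simpa [block, hi] using hne (b i) l
    · simp [block, hi]
  obtain ⟨D⟩ := nonempty_blockDecomposition hp hp1.le hx hinj (by positivity) hlight
  exact ⟨{ D with sum_abs_coord_le := D.sum_abs_coord_le.trans hLε }⟩

end Blocks

section KeyEstimate

theorem exists_abs_eval_piecewise_le_of_latticePoint {σ : Type*} [Fintype σ] [DecidableEq σ]
    {δ : ℝ} (hδ : δ ≠ 0) (k : ℕ) {K : Set (σ → ℝ)} (hK : IsCompact K) (V : Finset σ) :
    ∃ C : ℝ, ∀ P : MvPolynomial σ ℝ, P.totalDegree ≤ k → ∀ B,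
      (∀ β : σ → ℕ, ∑ i, β i ≤ k → |MvPolynomial.eval (V.piecewise 0 (latticePoint δ β)) P| ≤ B) →
        ∀ x ∈ K, |MvPolynomial.eval (V.piecewise 0 x) P| ≤ C * B := by
  obtain ⟨C, hstable⟩ := exists_abs_eval_le_of_latticePoint hδ k hK
  refine ⟨C, fun P hP B hB x hx ↦ ?_⟩
  obtain ⟨Q, hQ, hQP⟩ := exists_mvPolynomial_eval_mul P (V.piecewise (0 : σ → ℝ) 1)
  have hmul (y : σ → ℝ) : V.piecewise (0 : σ → ℝ) 1 * y = V.piecewise (0 : σ → ℝ) y := by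
    ext i
    by_cases hi : i ∈ V <;> simp [hi]
  simp only [hmul] at hQP
  rw [← hQP x]
  refine hstable Q (hQ.trans hP) B (fun β hβ ↦ ?_) x hx
  rw [hQP]
  exact hB β hβ

variable {p : ℝ}

theorem BlockDecomposition.abs_eval_piecewise_latticePoint_le {n d k : ℕ} {ε w : ℝ}
    {V : Finset (Fin d)} {x : Fin n → ℝ} (D : BlockDecomposition p ε V x) (hp : 0 < p) (hp1 : p ≤ 1)
    {g : (Fin n → ℝ) → ℝ}
    (hg : ∀ γ : Fin n → ℕ, ∑ i, γ i ≤ k → g (latticePoint (nodeScale k p) γ) = 0)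
    {P : MvPolynomial (Fin d) ℝ}
    (hP : ∀ y ∈ lpBall d p, |g (D.expand y) - MvPolynomial.eval y P| ≤ w)
    {β : Fin d → ℕ} (hβ : ∑ c, β c ≤ k) :
    |MvPolynomial.eval (V.piecewise 0 (latticePoint (nodeScale k p) β)) P| ≤ w := by
  obtain ⟨γ, hγ, hexpand⟩ := D.exists_expand_piecewise_latticePoint (nodeScale k p) β
  have hnear := hP _ <| piecewise_zero_mem_lpBall hp.le
    (latticePoint_nodeScale_mem_lpBall hp hp1 hβ) V
  rwa [hexpand, hg γ (hγ.trans hβ), zero_sub, abs_neg] at hnear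

theorem exists_abs_le_of_latticePoint_eq_zero (hp : 0 < p) (hp1 : p < 1) (k : ℕ) :
    ∃ C : ℝ, ∀ {n : ℕ} {g : (Fin n → ℝ) → ℝ}, AlmostPolynomialOn k (lpBall n p) g →
      (∀ β : Fin n → ℕ, ∑ i, β i ≤ k → g (latticePoint (nodeScale k p) β) = 0) →
        ∀ x ∈ lpBall n p, |g x| ≤ C := by
  obtain ⟨M, hM, hmarkov⟩ := exists_abs_eval_piecewise_le hp k
  obtain ⟨d, V, hblocks⟩ := exists_blockDecomposition hp hp1 (ε := 1 / (2 * (M + 1)))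
    (by positivity)
  obtain ⟨w, hw, hwhitney⟩ := exists_hasWhitneyBound_lpBall hp k d
  obtain ⟨S, hlattice⟩ := exists_abs_eval_piecewise_le_of_latticePoint (nodeScale_pos k p).ne' k
    (isCompact_lpBall (n := d) hp) V
  refine ⟨3 * w + 2 * (S * w), fun {n g} hg hg0 z hz ↦ ?_⟩
  obtain ⟨x, hx, hmax⟩ := (isCompact_lpBall hp).exists_isMaxOn ⟨0, zero_mem_lpBall hp⟩
    hg.continuousOn.abs
  refine (hmax hz).trans ?_
  obtain ⟨D⟩ := hblocks x hx
  obtain ⟨P, hP, hPg⟩ := hwhitney _ (hg.comp_clm D.expand D.mapsTo_expand)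
  have hP_le : ∀ y ∈ lpBall d p, |MvPolynomial.eval y P| ≤ |g x| + w := fun y hy ↦ by
    have hgx : |g (D.expand y)| ≤ |g x| := hmax (D.mapsTo_expand hy)
    have hnear := abs_sub_comm (g (D.expand y)) _ ▸ hPg y hy
    linarith [abs_sub_abs_le_abs_sub (MvPolynomial.eval y P) (g (D.expand y))]
  have hsmall : |MvPolynomial.eval D.coord P - MvPolynomial.eval (V.piecewise 0 D.coord) P| ≤
      (|g x| + w) / 2 :=
    calc _ ≤ M * (|g x| + w) * ∑ c ∈ V, |D.coord c| := hmarkov P hP _ hP_le _ D.coord_mem V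
      _ ≤ M * (|g x| + w) * (1 / (2 * (M + 1))) := by gcongr; exact D.sum_abs_coord_le
      _ = M / (M + 1) * ((|g x| + w) / 2) := by field_simp
      _ ≤ (|g x| + w) / 2 := mul_le_of_le_one_left (by positivity)
        (div_le_one_of_le₀ (by simp) (by positivity))
  have hmain : |MvPolynomial.eval (V.piecewise 0 D.coord) P| ≤ S * w :=
    hlattice P hP w (fun β ↦ D.abs_eval_piecewise_latticePoint_le hp hp1.le hg0 hPg) _ D.coord_mem
  have hnear : |g x - MvPolynomial.eval D.coord P| ≤ w := by
    simpa only [D.expand_coord] using hPg _ D.coord_mem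
  have hcoord := abs_sub_abs_le_abs_sub (g x) (MvPolynomial.eval D.coord P)
  have hpiecewise := abs_sub_abs_le_abs_sub (MvPolynomial.eval D.coord P)
    (MvPolynomial.eval (V.piecewise 0 D.coord) P)
  linarith

end KeyEstimate

end WhitneyLp

/-- Theorem 5.9: for `0 < p < 1` and any `m ≥ 2`, `w_m(ℓ_pⁿ) ≤ C(p,m)` independently of `n`. -/
theorem whitney_m_lp_quasinorm_uniform (p : ℝ) (hp0 : 0 < p) (hp1 : p < 1)
    (m : ℕ) (hm : 2 ≤ m) :
    ∃ C : ℝ, ∀ n : ℕ, 1 ≤ n →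
      ∀ f : (Fin n → ℝ) → ℝ, ContinuousOn f (lpBall n p) → diffBound m (lpBall n p) f 1 →
        ∃ P : MvPolynomial (Fin n) ℝ, P.totalDegree ≤ m - 1 ∧
          ∀ x ∈ lpBall n p, |f x - MvPolynomial.eval x P| ≤ C := by
  obtain ⟨k, rfl⟩ : ∃ k, m = k + 1 := ⟨m - 1, by omega⟩
  obtain ⟨C, hC⟩ := WhitneyLp.exists_abs_le_of_latticePoint_eq_zero hp0 hp1 k
  refine ⟨C, fun n _ f hfc hf ↦ ?_⟩
  obtain ⟨P, hP, hPf⟩ :=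
    WhitneyLp.exists_eval_latticePoint_eq (WhitneyLp.nodeScale_pos k p).ne' k f
  exact ⟨P, hP, hC (WhitneyLp.AlmostPolynomialOn.sub_mvPolynomial ⟨hfc, hf⟩ hP) fun β hβ ↦
    sub_eq_zero.2 (hPf β hβ).symm⟩
end
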